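/- Assume additionally that w ≡ 0 on ∂Σ. Let E ⊆ Σ be a bounded connected open set with smooth boundary and w(E) > 0. Then there exists a convex function φ : ℝⁿ → ℝ of class C^{1,1} such that ∇φ(ℝⁿ) ⊆ cl(B₁ ∩ Σ), the Lebesgue measure of (B₁ ∩ Σ) \ ∇φ(E) is zero, and for almost every x ∈ E one has Δφ(x) + α ( w(∇φ(x)) / w(x) )^{1/α} ≤ Per_w(E) / w(E). -/

import Mathlib

open MeasureTheory Metric Set
open scoped RealInnerProductSpace ENNReal NNReal Topology

noncomputable section

abbrev Euc (n : ℕ) := EuclideanSpace ℝ (Fin n)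

def IsOpenConvexCone {n : ℕ} (S : Set (Euc n)) : Prop :=
  IsOpen S ∧ Convex ℝ S ∧ ∀ x ∈ S, ∀ t : ℝ, 0 < t → t • x ∈ S

def IsAdmissibleWeight {n : ℕ} (S : Set (Euc n)) (α : ℝ) (w : Euc n → ℝ) : Prop :=
  ContinuousOn w (closure S) ∧ (∀ x ∈ closure S, 0 ≤ w x) ∧
  (∃ x ∈ closure S, w x ≠ 0) ∧
  (∀ x ∈ closure S, ∀ t : ℝ, 0 < t → w (t • x) = t ^ α * w x) ∧
  ConcaveOn ℝ S (fun x => w x ^ (1 / α))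

def wVol {n : ℕ} (w : Euc n → ℝ) (E : Set (Euc n)) : ℝ≥0∞ :=
  ∫⁻ x in E, ENNReal.ofReal (w x)

def wPer {n : ℕ} (S : Set (Euc n)) (w : Euc n → ℝ) (E : Set (Euc n)) : ℝ≥0∞ :=
  ∫⁻ x in frontier E ∩ S, ENNReal.ofReal (w x) ∂(μH[(n : ℝ) - 1])

def HasSmoothBoundary {n : ℕ} (E : Set (Euc n)) : Prop :=
  ∃ f : Euc n → ℝ, ContDiff ℝ (⊤ : ℕ∞) f ∧ E = {x | f x < 0} ∧
    frontier E = {x | f x = 0} ∧ ∀ x ∈ frontier E, fderiv ℝ f x ≠ 0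

def linSpan (n k : ℕ) : Set (Euc n) := {x | ∀ i : Fin n, k ≤ (i : ℕ) → x i = 0}

/-- Laplacian as the trace of the second derivative in standard coordinates. -/
def lapl {n : ℕ} (φ : Euc n → ℝ) (x : Euc n) : ℝ :=
  ∑ i : Fin n, fderiv ℝ (fderiv ℝ φ) x (EuclideanSpace.single i 1) (EuclideanSpace.single i 1)



/-! ## Part A: cones and homogeneous concave functions -/

structure ConeW {n : ℕ} (S : Set (Euc n)) (g : Euc n → ℝ) : Prop where
  op : IsOpen S
  conv : Convex ℝ S
  cone : ∀ x ∈ S, ∀ t : ℝ, 0 < t → t • x ∈ S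
  ne : S.Nonempty
  cont : ContinuousOn g (closure S)
  pos : ∀ x ∈ S, 0 < g x
  zero : ∀ x ∈ frontier S, g x = 0
  hom : ∀ x ∈ closure S, ∀ t : ℝ, 0 < t → g (t • x) = t * g x
  sup : ∀ x ∈ closure S, ∀ y ∈ closure S, g x + g y ≤ g (x + y)

namespace ConeW
variable {n : ℕ} {S : Set (Euc n)} {g : Euc n → ℝ}

theorem add_mem (h : ConeW S g) {x y : Euc n} (hx : x ∈ closure S) (hy : y ∈ S) : x + y ∈ S := by
  have h1 := h.conv.combo_closure_interior_mem_interior hx (by rwa [h.op.interior_eq])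
    (show (0 : ℝ) ≤ 1 / 2 by norm_num) (show (0 : ℝ) < 1 / 2 by norm_num) (by norm_num)
  rw [h.op.interior_eq] at h1
  have h2 := h.cone _ h1 2 (by norm_num)
  rw [← smul_add, smul_smul] at h2
  norm_num at h2
  exact h2

theorem nonneg (h : ConeW S g) {x : Euc n} (hx : x ∈ closure S) : 0 ≤ g x := by
  by_cases hS : x ∈ S
  · exact (h.pos x hS).le
  · exact (h.zero x (by rw [h.op.frontier_eq]; exact ⟨hx, hS⟩)).ge

theorem mem_of_pos (h : ConeW S g) {x : Euc n} (hx : x ∈ closure S) (hg : 0 < g x) : x ∈ S := by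
  by_contra hS
  exact hg.ne' (h.zero x (by rw [h.op.frontier_eq]; exact ⟨hx, hS⟩))

theorem clK (h : ConeW S g) {p : Euc n} (hp : p ∈ S) (hp1 : ‖p‖ ≤ 1) :
    p ∈ closure (ball (0 : Euc n) 1 ∩ S) := by
  have hlim : Filter.Tendsto (fun t : ℝ => t • p) (𝓝[<] 1) (𝓝 p) := by
    have : Filter.Tendsto (fun t : ℝ => t • p) (𝓝 1) (𝓝 ((1 : ℝ) • p)) :=
      (continuous_id.smul continuous_const).tendsto _
    rw [one_smul] at this
    exact this.mono_left nhdsWithin_le_nhds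
  refine mem_closure_of_tendsto hlim ?_
  have : Ioo (0 : ℝ) 1 ∈ 𝓝[<] (1 : ℝ) := Ioo_mem_nhdsLT one_pos
  filter_upwards [this] with t ht
  refine ⟨?_, h.cone p hp t ht.1⟩
  rw [mem_ball_zero_iff, norm_smul, Real.norm_eq_abs, abs_of_pos ht.1]
  nlinarith [ht.1, ht.2, norm_nonneg p]

theorem K_norm {p : Euc n} (hp : p ∈ closure (ball (0 : Euc n) 1 ∩ S)) : ‖p‖ ≤ 1 := by
  have := closure_mono inter_subset_left hp
  have := closure_ball_subset_closedBall this
  simpa using this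

theorem K_cl {p : Euc n} (hp : p ∈ closure (ball (0 : Euc n) 1 ∩ S)) : p ∈ closure S :=
  closure_mono inter_subset_right hp

theorem K_compact : IsCompact (closure (ball (0 : Euc n) 1 ∩ S)) :=
  (isBounded_ball.subset inter_subset_left).isCompact_closure

theorem K_convex (h : ConeW S g) : Convex ℝ (closure (ball (0 : Euc n) 1 ∩ S)) :=
  ((convex_ball _ _).inter h.conv).closure

theorem K_nonempty (h : ConeW S g) : (closure (ball (0 : Euc n) 1 ∩ S)).Nonempty := by
  obtain ⟨e, he⟩ := h.ne
  refine ⟨(1 / (‖e‖ + 1)) • e, h.clK (h.cone e he _ (by positivity)) ?_⟩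
  rw [norm_smul, Real.norm_eq_abs, abs_of_pos (by positivity), div_mul_eq_mul_div, one_mul]
  exact div_le_one_of_le₀ (by linarith) (by positivity)

theorem concave (h : ConeW S g) : ConcaveOn ℝ S g := by
  refine ⟨h.conv, fun x hx y hy a b ha hb hab => ?_⟩
  rcases ha.eq_or_lt with rfl | ha
  · have : b = 1 := by linarith
    simp [this]
  rcases hb.eq_or_lt with rfl | hb
  · have : a = 1 := by linarith
    simp [this]
  have hx' := subset_closure hx
  have hy' := subset_closure hy
  rw [smul_eq_mul, smul_eq_mul, ← h.hom x hx' a ha, ← h.hom y hy' b hb]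
  exact h.sup _ (subset_closure (h.cone x hx a ha)) _ (subset_closure (h.cone y hy b hb))

end ConeW

theorem coneW_of {n : ℕ} (α : ℝ) (hα : 0 < α)
    (S : Set (Euc n)) (hS : IsOpenConvexCone S) (w : Euc n → ℝ) (hw : IsAdmissibleWeight S α w)
    (hw0 : ∀ x ∈ frontier S, w x = 0) : ConeW S (fun x => w x ^ (1 / α)) := by
  obtain ⟨hop, hconv, hcone⟩ := hS
  obtain ⟨hc, hnn, ⟨x0, hx0, hwx0⟩, hhom, hconc⟩ := hw
  have hα' : 0 < 1 / α := by positivity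
  have hcont : ContinuousOn (fun x => w x ^ (1 / α)) (closure S) :=
    hc.rpow_const fun x _ => Or.inr hα'.le
  have hzero : ∀ x ∈ frontier S, w x ^ (1 / α) = 0 := fun x hx => by
    rw [hw0 x hx, Real.zero_rpow hα'.ne']
  have hx0S : x0 ∈ S := by
    by_contra hcon
    exact hwx0 (hw0 x0 (by rw [hop.frontier_eq]; exact ⟨hx0, hcon⟩))
  have hhom' : ∀ x ∈ closure S, ∀ t : ℝ, 0 < t → w (t • x) ^ (1 / α) = t * w x ^ (1 / α) := by
    intro x hx t ht
    rw [hhom x hx t ht, Real.mul_rpow (by positivity) (hnn x hx), ← Real.rpow_mul ht.le]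
    rw [mul_one_div_cancel hα.ne', Real.rpow_one]
  have hsupS : ∀ x ∈ S, ∀ y ∈ S, w x ^ (1 / α) + w y ^ (1 / α) ≤ w (x + y) ^ (1 / α) := by
    intro x hx y hy
    have h1 := hconc.2 hx hy (show (0 : ℝ) ≤ 1 / 2 by norm_num) (show (0 : ℝ) ≤ 1 / 2 by norm_num)
      (by norm_num)
    have hm : (1 / 2 : ℝ) • x + (1 / 2 : ℝ) • y ∈ S :=
      hconv hx hy (by norm_num) (by norm_num) (by norm_num)
    have h2 := hhom' _ (subset_closure hm) 2 (by norm_num)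
    rw [← smul_add, smul_smul] at h2
    norm_num at h2
    simp only [smul_eq_mul, ← smul_add] at h1
    norm_num at h1
    norm_num
    linarith
  have hadd : ∀ x ∈ closure S, ∀ y ∈ S, x + y ∈ S := by
    intro x hx y hy
    have h1 := hconv.combo_closure_interior_mem_interior hx (by rwa [hop.interior_eq])
      (show (0 : ℝ) ≤ 1 / 2 by norm_num) (show (0 : ℝ) < 1 / 2 by norm_num) (by norm_num)
    rw [hop.interior_eq] at h1
    have h2 := hcone _ h1 2 (by norm_num)
    rw [← smul_add, smul_smul] at h2
    norm_num at h2
    exact h2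
  have hlim : ∀ z ∈ closure S, Filter.Tendsto (fun t : ℝ => w (z + t • x0) ^ (1 / α)) (𝓝[>] 0)
      (𝓝 (w z ^ (1 / α))) := by
    intro z hz
    have h1 := (hcont z hz).tendsto
    refine h1.comp ?_
    rw [tendsto_nhdsWithin_iff]
    constructor
    · have : Filter.Tendsto (fun t : ℝ => z + t • x0) (𝓝 0) (𝓝 (z + (0 : ℝ) • x0)) := by
        apply Continuous.tendsto; fun_prop
      rw [zero_smul, add_zero] at this
      exact this.mono_left nhdsWithin_le_nhds
    · filter_upwards [self_mem_nhdsWithin] with t ht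
      exact subset_closure (hadd z hz _ (hcone x0 hx0S t ht))
  have hclS : ∀ x ∈ closure S, ∀ y ∈ closure S, x + y ∈ closure S := by
    intro x hx y hy
    have h1 : Filter.Tendsto (fun t : ℝ => x + (y + t • x0)) (𝓝[>] 0) (𝓝 (x + y)) := by
      have : Filter.Tendsto (fun t : ℝ => x + (y + t • x0)) (𝓝 0) (𝓝 (x + (y + (0 : ℝ) • x0))) := by
        apply Continuous.tendsto; fun_prop
      rw [zero_smul, add_zero] at this
      exact this.mono_left nhdsWithin_le_nhds
    refine mem_closure_of_tendsto h1 ?_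
    filter_upwards [self_mem_nhdsWithin] with t ht
    exact hadd x hx _ (hadd y hy _ (hcone x0 hx0S t ht))
  have hsup : ∀ x ∈ closure S, ∀ y ∈ closure S,
      w x ^ (1 / α) + w y ^ (1 / α) ≤ w (x + y) ^ (1 / α) := by
    intro x hx y hy
    have l1 := (hlim x hx).add (hlim y hy)
    have l2 : Filter.Tendsto (fun t : ℝ => w (x + y + (2 * t) • x0) ^ (1 / α)) (𝓝[>] 0)
        (𝓝 (w (x + y) ^ (1 / α))) := by
      refine (hlim (x + y) (hclS x hx y hy)).comp ?_
      rw [tendsto_nhdsWithin_iff]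
      constructor
      · have : Filter.Tendsto (fun t : ℝ => 2 * t) (𝓝 0) (𝓝 (2 * 0)) := by
          apply Continuous.tendsto; fun_prop
        rw [mul_zero] at this
        exact this.mono_left nhdsWithin_le_nhds
      · filter_upwards [self_mem_nhdsWithin] with t ht
        have : (0 : ℝ) < t := ht
        show (0 : ℝ) < 2 * t
        linarith
    refine le_of_tendsto_of_tendsto l1 l2 ?_
    filter_upwards [self_mem_nhdsWithin] with t ht
    have := hsupS _ (hadd x hx _ (hcone x0 hx0S t ht)) _ (hadd y hy _ (hcone x0 hx0S t ht))
    refine this.trans (le_of_eq ?_)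
    congr 2
    rw [two_mul, add_smul]; abel
  refine ⟨hop, hconv, hcone, ⟨x0, hx0S⟩, hcont, ?_, hzero, hhom', hsup⟩
  intro x hx
  have h1 : ∀ᶠ s : ℝ in 𝓝 0, x - s • x0 ∈ S := by
    have : Filter.Tendsto (fun s : ℝ => x - s • x0) (𝓝 0) (𝓝 (x - (0 : ℝ) • x0)) := by
      apply Continuous.tendsto; fun_prop
    rw [zero_smul, sub_zero] at this
    exact this.eventually (hop.mem_nhds hx)
  have h2 : ∀ᶠ s : ℝ in 𝓝[>] 0, x - s • x0 ∈ S := h1.filter_mono nhdsWithin_le_nhds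
  obtain ⟨s, hs1, hs2⟩ := (h2.and self_mem_nhdsWithin).exists
  have h3 := hsupS _ hs1 _ (hcone x0 hx0S s hs2)
  rw [sub_add_cancel, hhom' x0 hx0 s hs2] at h3
  have h4 : 0 ≤ w (x - s • x0) ^ (1 / α) := Real.rpow_nonneg (hnn _ (subset_closure hs1)) _
  have h5 : 0 < w x0 ^ (1 / α) := Real.rpow_pos_of_pos (lt_of_le_of_ne (hnn x0 hx0) hwx0.symm) _
  have h6 : 0 < s * w x0 ^ (1 / α) := mul_pos hs2 h5
  show 0 < w x ^ (1 / α)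
  linarith


/-! ## Part B: mollification of the weight -/

open ContinuousLinearMap Convolution in
theorem mollify {n : ℕ} {S : Set (Euc n)} {g : Euc n → ℝ} (h : ConeW S g)
    (E : Set (Euc n)) (hES : E ⊆ S) (hEb : Bornology.IsBounded E) (σ : ℝ) (hσ : 0 < σ) :
    ∃ G : Euc n → ℝ, ContDiff ℝ 1 G ∧ (∀ x, 0 < G x) ∧ (∀ x ∈ closure E, |G x - g x| ≤ σ) ∧
      ∀ x ∈ closure E, ∀ p ∈ closure S, g p ≤ fderiv ℝ G x p := by
  set gt : Euc n → ℝ := S.indicator g with hgt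
  have hgtc : Continuous gt := continuous_indicator h.zero h.cont
  have hgt0 : ∀ x, 0 ≤ gt x := fun x => indicator_nonneg (fun y hy => (h.pos y hy).le) x
  have hgtcl : ∀ x ∈ closure S, gt x = g x := by
    intro x hx
    by_cases hS : x ∈ S
    · exact indicator_of_mem hS _
    · rw [hgt, indicator_of_notMem hS, h.zero x (by rw [h.op.frontier_eq]; exact ⟨hx, hS⟩)]
  have hcES : closure E ⊆ closure S := closure_mono hES
  obtain ⟨e0, he0⟩ := h.ne
  obtain ⟨r, hr, hball⟩ := Metric.isOpen_iff.1 h.op e0 he0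
  obtain ⟨R, hR⟩ := hEb.closure.subset_closedBall 0
  have huc := (isCompact_closedBall (0 : Euc n) (R + 1)).uniformContinuousOn_of_continuous
    hgtc.continuousOn
  rw [Metric.uniformContinuousOn_iff] at huc
  obtain ⟨δ, hδ, hd⟩ := huc (σ / 4) (by positivity)
  set s : ℝ := min δ 1 / (2 * (‖e0‖ + r)) with hs
  have hden : 0 < ‖e0‖ + r := by positivity
  have hspos : 0 < s := by positivity
  have hs1 : s * ‖e0‖ + s * r < min δ 1 := by
    have : s * (‖e0‖ + r) = min δ 1 / 2 := by rw [hs]; field_simp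
    have h2 : 0 < min δ 1 := by positivity
    linarith
  have hs2 := hs1.trans_le (min_le_left _ _)
  have hs3 := hs1.trans_le (min_le_right _ _)
  have hsr : 0 < s * r := by positivity
  have hse : 0 ≤ s * ‖e0‖ := by positivity
  let ψ : ContDiffBump (0 : Euc n) := ⟨s * r / 2, s * r, by positivity, by linarith⟩
  have hψr : ψ.rOut = s * r := rfl
  set F : Euc n → ℝ := (ψ.normed volume ⋆[lsmul ℝ ℝ, volume] gt) with hF
  have hFc : ContDiff ℝ 1 F :=
    ψ.hasCompactSupport_normed.contDiff_convolution_left _ ψ.contDiff_normed hgtc.locallyIntegrable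
  have hFdef : ∀ x, F x = ∫ t, ψ.normed volume t * gt (x - t) := fun x => by
    rw [hF, convolution_def]; rfl
  have hintg : ∀ x, Integrable (fun t => ψ.normed volume t * gt (x - t)) := fun x => by
    have := (ψ.hasCompactSupport_normed (μ := (volume : Measure (Euc n)))).convolutionExists_left (μ := (volume : Measure (Euc n))) (lsmul ℝ ℝ)
      ψ.continuous_normed hgtc.locallyIntegrable x
    exact this
  have hF0 : ∀ x, 0 ≤ F x := fun x => by
    rw [hFdef]
    exact integral_nonneg fun t => mul_nonneg (ψ.nonneg_normed t) (hgt0 _)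
  have hmono : ∀ x ∈ closure S, ∀ p ∈ closure S, ∀ τ : ℝ, 0 < τ →
      F (x + s • e0) + τ * g p ≤ F (x + τ • p + s • e0) := by
    intro x hx p hp τ hτ
    have h1 : τ * g p = ∫ t, ψ.normed volume t * (τ * g p) := by
      rw [integral_mul_const, ψ.integral_normed, one_mul]
    have hi : Integrable (fun t => ψ.normed volume t * (τ * g p)) :=
      ψ.integrable_normed.mul_const _
    rw [hFdef, hFdef, h1, ← integral_add (hintg _) hi]
    refine integral_mono ((hintg _).add hi) (hintg _) fun t => ?_
    simp only [Pi.add_apply]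
    rw [← mul_add]
    by_cases ht : t ∈ ball (0 : Euc n) ψ.rOut
    · refine mul_le_mul_of_nonneg_left ?_ (ψ.nonneg_normed t)
      have hmem : s • e0 - t ∈ S := by
        have : e0 - s⁻¹ • t ∈ S := by
          apply hball
          rw [mem_ball, dist_eq_norm, sub_sub_cancel_left, norm_neg, norm_smul, Real.norm_eq_abs,
            abs_of_pos (by positivity), inv_mul_lt_iff₀ hspos]
          simpa [hψr] using ht
        have h3 := h.cone _ this s hspos
        rwa [smul_sub, smul_inv_smul₀ hspos.ne'] at h3
      have hm1 : x + s • e0 - t ∈ S := by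
        have := h.add_mem hx hmem
        rwa [← add_sub_assoc] at this
      have hpt : τ • p ∈ closure S := by
        refine map_mem_closure (continuous_const_smul τ) hp fun y hy => h.cone y hy τ hτ
      have hm2 : x + τ • p + s • e0 - t ∈ S := by
        have := h.add_mem hpt hm1
        convert this using 1
        abel
      rw [hgtcl _ (subset_closure hm1), hgtcl _ (subset_closure hm2), ← h.hom p hp τ hτ]
      have := h.sup _ (subset_closure hm1) _ hpt
      refine this.trans (le_of_eq ?_)
      congr 1
      abel
    · have : ψ.normed volume t = 0 := by
        have h4 := ψ.support_normed_eq (μ := volume)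
        by_contra hcon
        exact ht (h4 ▸ hcon)
      rw [this]; simp
  refine ⟨fun x => F (x + s • e0) + σ / 4, ?_, ?_, ?_, ?_⟩
  · exact (hFc.comp (contDiff_id.add contDiff_const)).add contDiff_const
  · intro x
    have := hF0 (x + s • e0)
    linarith
  · intro x hx
    have hxR : ‖x‖ ≤ R := by simpa using hR hx
    have hxm : x ∈ closedBall (0 : Euc n) (R + 1) := by simp; linarith
    have hnse : ‖s • e0‖ = s * ‖e0‖ := by rw [norm_smul, Real.norm_eq_abs, abs_of_pos hspos]
    have hxs : ‖x + s • e0‖ ≤ R + s * ‖e0‖ := by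
      have := norm_add_le x (s • e0); rw [hnse] at this; linarith
    have hxm2 : x + s • e0 ∈ closedBall (0 : Euc n) (R + 1) := by
      rw [mem_closedBall_zero_iff]; linarith
    have d1 : dist (gt (x + s • e0)) (gt x) < σ / 4 := by
      refine hd _ hxm2 _ hxm ?_
      rw [dist_eq_norm, add_sub_cancel_left, hnse]; linarith
    have d2 : dist (F (x + s • e0)) (gt (x + s • e0)) ≤ σ / 4 := by
      refine ψ.dist_normed_convolution_le hgtc.aestronglyMeasurable fun y hy => ?_
      rw [hψr, mem_ball, dist_eq_norm] at hy
      refine (hd y ?_ _ hxm2 ?_).le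
      · rw [mem_closedBall_zero_iff]
        have := norm_add_le (y - (x + s • e0)) (x + s • e0)
        rw [sub_add_cancel] at this
        linarith
      · rw [dist_eq_norm]; linarith
    rw [Real.dist_eq] at d1 d2
    rw [hgtcl x (hcES hx)] at d1
    rw [abs_le] at *
    rw [abs_lt] at d1
    constructor <;> linarith [d1.1, d1.2, d2.1, d2.2]
  · intro x hx p hp
    set G : Euc n → ℝ := fun x => F (x + s • e0) + σ / 4 with hG
    have hGd : ContDiff ℝ 1 G := (hFc.comp (contDiff_id.add contDiff_const)).add contDiff_const
    have h1 : HasFDerivAt G (fderiv ℝ G x) x := (hGd.differentiable one_ne_zero x).hasFDerivAt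
    have h2 : HasDerivAt (fun τ : ℝ => G (x + τ • p)) (fderiv ℝ G x p) 0 := by
      have := h1.hasLineDerivAt p
      exact this
    have h3 := h2.tendsto_slope_zero_right
    refine ge_of_tendsto h3 ?_
    filter_upwards [self_mem_nhdsWithin] with τ hτ
    have hτ' : (0 : ℝ) < τ := hτ
    have h4 := hmono x (hcES hx) p hp τ hτ'
    simp only [zero_add, zero_smul, add_zero, smul_eq_mul]
    rw [le_inv_mul_iff₀ hτ']
    simp only [hG]
    linarith


/-! ## Part E: discrete convex envelope with constrained slopes -/

theorem envE_saddle {n : ℕ} (V : Finset (Euc n)) (hV : V.Nonempty) (u : Euc n → ℝ)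
    (K : Set (Euc n)) (hKc : IsCompact K) (hKx : Convex ℝ K) (hK : K.Nonempty) (x : Euc n) :
    ∃ lam : Euc n → ℝ, ∃ p ∈ K, (∀ z ∈ V, 0 ≤ lam z) ∧ ∑ z ∈ V, lam z = 1 ∧
      ∀ q ∈ K, ∀ k ∈ V, ∑ z ∈ V, lam z * (u z + ⟪q, x - z⟫) ≤ u k + ⟪p, x - k⟫ := by
  classical
  let f : (V → ℝ) → Euc n → ℝ := fun l q => ∑ z : V, l z * (u z + ⟪q, x - (z : Euc n)⟫)
  have : Nonempty V := hV.to_subtype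
  obtain ⟨a, ha, b, hb, hs⟩ := Sion.exists_isSaddlePointOn (X := stdSimplex ℝ V) (Y := K) (f := f)
    (by obtain ⟨z⟩ := this; exact ⟨_, single_mem_stdSimplex ℝ z⟩)
    (convex_stdSimplex ℝ V) (isCompact_stdSimplex ℝ V)
    (fun y _ => by
      refine ContinuousOn.lowerSemicontinuousOn (Continuous.continuousOn ?_)
      fun_prop)
    (fun y _ => by
      apply ConvexOn.quasiconvexOn
      refine ⟨convex_stdSimplex ℝ V, ?_⟩
      intro l _ m _ s t _ _ _
      simp only [f, Pi.add_apply, Pi.smul_apply, smul_eq_mul, Finset.mul_sum]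
      rw [← Finset.sum_add_distrib]
      apply le_of_eq
      refine Finset.sum_congr rfl fun z _ => ?_
      ring)
    hKx hK hKc
    (fun y _ => by
      refine ContinuousOn.upperSemicontinuousOn (Continuous.continuousOn ?_)
      fun_prop)
    (fun l _ => by
      apply ConcaveOn.quasiconcaveOn
      refine ⟨hKx, ?_⟩
      intro q _ r _ s t _ _ hst
      simp only [f, smul_eq_mul, Finset.mul_sum]
      rw [← Finset.sum_add_distrib]
      apply le_of_eq
      refine Finset.sum_congr rfl fun z _ => ?_
      rw [inner_add_left, inner_smul_left, inner_smul_left]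
      simp only [conj_trivial]
      have : t = 1 - s := by linarith
      subst this
      ring)
  refine ⟨fun z => if h : z ∈ V then a ⟨z, h⟩ else 0, b, hb, ?_, ?_, ?_⟩
  · intro z hz
    simp only [hz, dif_pos]
    exact ha.1 _
  · rw [← Finset.sum_coe_sort]
    simpa using ha.2
  · intro q hq k hk
    have h1 := hs _ (single_mem_stdSimplex ℝ (⟨k, hk⟩ : V)) q hq
    rw [← Finset.sum_coe_sort]
    simp only [f] at h1
    simp only [Finset.coe_mem, dif_pos]
    refine h1.trans (le_of_eq ?_)
    rw [Finset.sum_eq_single (⟨k, hk⟩ : V)]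
    · simp
    · intro z _ hz
      simp [hz]
    · simp

theorem envE_main {n : ℕ} (V : Finset (Euc n)) (hV : V.Nonempty) (u : Euc n → ℝ)
    (K : Set (Euc n)) (hKc : IsCompact K) (hKx : Convex ℝ K) (hK : K.Nonempty) :
    ∃ φ : Euc n → ℝ,
      (∀ z ∈ V, φ z ≤ u z) ∧
      (∀ q ∈ K, ∃ z ∈ V, ∀ y, φ z + ⟪q, y - z⟫ ≤ φ y) ∧
      ∀ x, ∃ lam : Euc n → ℝ, ∃ p ∈ K, (∀ z ∈ V, 0 ≤ lam z) ∧ ∑ z ∈ V, lam z = 1 ∧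
        (∀ y, φ x + ⟪p, y - x⟫ ≤ φ y) ∧
        (φ x = ∑ z ∈ V, lam z * u z + ⟪p, x - ∑ z ∈ V, lam z • z⟫) ∧
        (∀ z ∈ V, 0 < lam z → ∀ k ∈ V, u z + ⟪p, k - z⟫ ≤ u k) ∧
        (∀ q ∈ K, ⟪q, x - ∑ z ∈ V, lam z • z⟫ ≤ ⟪p, x - ∑ z ∈ V, lam z • z⟫) ∧
        (∀ h, (∀ z ∈ V, 0 < lam z → z + h ∈ V) →
          φ (x + h) ≤ ∑ z ∈ V, lam z * u (z + h) + ⟪p, x - ∑ z ∈ V, lam z • z⟫) := by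
  classical
  choose lam p hp hl0 hl1 hs using fun x => envE_saddle V hV u K hKc hKx hK x
  -- linear algebra
  have hexp : ∀ (x q : Euc n) (v : Euc n → ℝ), ∑ z ∈ V, lam x z * (v z + ⟪q, x - z⟫) =
      ∑ z ∈ V, lam x z * v z + ⟪q, x - ∑ z ∈ V, lam x z • z⟫ := by
    intro x q v
    simp only [mul_add, Finset.sum_add_distrib, inner_sub_right, inner_sum, inner_smul_right,
      mul_sub, Finset.sum_sub_distrib]
    rw [← Finset.sum_mul, hl1, one_mul]
  set φ : Euc n → ℝ := fun x => ∑ z ∈ V, lam x z * (u z + ⟪p x, x - z⟫) with hφ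
  have hA : ∀ x, ∀ k ∈ V, φ x ≤ u k + ⟪p x, x - k⟫ := fun x k hk => hs x _ (hp x) k hk
  -- weighted average of a constant
  have havg : ∀ x (c : ℝ) (v : Euc n → ℝ), (∀ z ∈ V, c ≤ v z) → c ≤ ∑ z ∈ V, lam x z * v z := by
    intro x c v hv
    calc c = ∑ z ∈ V, lam x z * c := by rw [← Finset.sum_mul, hl1, one_mul]
      _ ≤ _ := Finset.sum_le_sum fun z hz => mul_le_mul_of_nonneg_left (hv z hz) (hl0 x z hz)
  have hB : ∀ x, ∀ q ∈ K, ∑ z ∈ V, lam x z * (u z + ⟪q, x - z⟫) ≤ φ x := by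
    intro x q hq
    exact havg x _ _ fun z hz => hs x q hq z hz
  have hsubg : ∀ x (q : Euc n) (c : ℝ), q ∈ K → (∀ k ∈ V, c ≤ u k - ⟪q, k⟫) →
      c + ⟪q, x⟫ ≤ φ x := by
    intro x q c hq hc
    refine le_trans ?_ (hB x q hq)
    apply havg
    intro z hz
    have := hc z hz
    rw [inner_sub_right]; linarith
  have hle : ∀ z ∈ V, φ z ≤ u z := by
    intro z hz
    simpa using hA z z hz
  refine ⟨φ, hle, ?_, ?_⟩
  · intro q hq
    obtain ⟨z, hz, hmin⟩ := V.exists_min_image (fun k => u k - ⟪q, k⟫) hV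
    refine ⟨z, hz, fun y => ?_⟩
    have h1 := hsubg y q _ hq hmin
    have h2 := hle z hz
    rw [inner_sub_right]; linarith
  · intro x
    refine ⟨lam x, p x, hp x, hl0 x, hl1 x, ?_, ?_, ?_, ?_, ?_⟩
    · intro y
      have h1 := hsubg y (p x) (φ x - ⟪p x, x⟫) (hp x) (fun k hk => by
        have := hA x k hk
        rw [inner_sub_right] at this; linarith)
      rw [inner_sub_right]; linarith
    · exact hexp x (p x) u
    · intro z hz hlz k hk
      have h0 : ∑ z ∈ V, lam x z * (u z + ⟪p x, x - z⟫ - φ x) = 0 := by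
        simp only [mul_sub, Finset.sum_sub_distrib]
        rw [← Finset.sum_mul, hl1, one_mul, sub_eq_zero]
      have h1 := (Finset.sum_eq_zero_iff_of_nonneg (fun z hz =>
        mul_nonneg (hl0 x z hz) (sub_nonneg.2 (hA x z hz)))).1 h0 z hz
      have h2 : u z + ⟪p x, x - z⟫ - φ x = 0 := by
        rcases mul_eq_zero.1 h1 with h | h
        · linarith
        · exact h
      have h3 := hA x k hk
      rw [inner_sub_right] at *
      linarith
    · intro q hq
      have h1 := hB x q hq
      rw [hφ] at h1
      simp only [hexp] at h1
      linarith
    · intro h hh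
      have h2 : ∀ z ∈ V, lam x z * φ (x + h) ≤ lam x z * (u (z + h) + ⟪p (x + h), x - z⟫) := by
        intro z hz
        rcases (hl0 x z hz).eq_or_lt with h0 | h0
        · simp [← h0]
        · apply mul_le_mul_of_nonneg_left _ h0.le
          have := hA (x + h) (z + h) (hh z hz h0)
          simpa using this
      have h3 := Finset.sum_le_sum h2
      rw [← Finset.sum_mul, hl1, one_mul, hexp x (p (x + h)) (fun z => u (z + h))] at h3
      have h1 := hB x (p (x + h)) (hp _)
      rw [hφ] at h1
      simp only [hexp] at h1
      linarith


theorem polar_eq {n : ℕ} {S : Set (Euc n)} {g : Euc n → ℝ} (h : ConeW S g) (p v : Euc n)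
    (hp : p ∈ S) (hp1 : ‖p‖ ≤ 1)
    (hmax : ∀ q ∈ closure (ball (0 : Euc n) 1 ∩ S), ⟪q, v⟫ ≤ ⟪p, v⟫) : v = ‖v‖ • p := by
  by_cases hv : v = 0
  · simp [hv]
  have hvn : 0 < ‖v‖ := norm_pos_iff.2 hv
  set P : ℝ := ⟪p, v⟫ with hP
  have hPle : P ≤ ‖v‖ := by
    have := real_inner_le_norm p v
    nlinarith
  have h1 : ∀ᶠ s : ℝ in 𝓝 0, p + s • v ∈ S := by
    have : Filter.Tendsto (fun s : ℝ => p + s • v) (𝓝 0) (𝓝 (p + (0 : ℝ) • v)) := by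
      apply Continuous.tendsto; fun_prop
    rw [zero_smul, add_zero] at this
    exact this.eventually (h.op.mem_nhds hp)
  have h2 : ∀ᶠ s : ℝ in 𝓝[>] 0, p + s • v ∈ S := h1.filter_mono nhdsWithin_le_nhds
  have hkey : ∀ᶠ s : ℝ in 𝓝[>] 0, 0 < P ∧ ‖v‖ ^ 2 ≤ P ^ 2 + s * (‖v‖ ^ 2 * P / 2) := by
    filter_upwards [h2, self_mem_nhdsWithin] with s hs hs0
    have hs0' : 0 < s := hs0
    have hi : ⟪p + s • v, v⟫ = P + s * ‖v‖ ^ 2 := by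
      rw [inner_add_left, real_inner_smul_left, real_inner_self_eq_norm_sq]
    have hspos : 0 < s * ‖v‖ ^ 2 := by positivity
    have hN : 1 < ‖p + s • v‖ := by
      by_contra hcon
      have := hmax _ (h.clK hs (not_lt.1 hcon))
      rw [hi] at this
      linarith
    set N := ‖p + s • v‖ with hNdef
    have hN0 : 0 < N := by linarith
    have hq : N⁻¹ • (p + s • v) ∈ S := h.cone _ hs _ (by positivity)
    have hq1 : ‖N⁻¹ • (p + s • v)‖ ≤ 1 := by
      rw [norm_smul, Real.norm_eq_abs, abs_of_pos (by positivity), ← hNdef, inv_mul_cancel₀ hN0.ne']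
    have h3 := hmax _ (h.clK hq hq1)
    rw [real_inner_smul_left, hi, inv_mul_le_iff₀ hN0] at h3
    have hNsq : N ^ 2 ≤ 1 + 2 * s * P + s ^ 2 * ‖v‖ ^ 2 := by
      rw [hNdef, norm_add_sq_real, inner_smul_right, norm_smul, mul_pow, Real.norm_eq_abs, sq_abs]
      have : ‖p‖ ^ 2 ≤ 1 := by nlinarith [norm_nonneg p]
      linarith
    have hPpos : 0 < P := by
      by_contra hcon
      nlinarith
    refine ⟨hPpos, ?_⟩
    have hN1 : N - 1 ≤ s * P + s ^ 2 * ‖v‖ ^ 2 / 2 := by nlinarith [sq_nonneg (N - 1)]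
    have h4 : s * ‖v‖ ^ 2 ≤ (s * P + s ^ 2 * ‖v‖ ^ 2 / 2) * P := by
      have := mul_le_mul_of_nonneg_right hN1 hPpos.le
      linarith
    have h5 : s * ‖v‖ ^ 2 ≤ s * (P ^ 2 + s * (‖v‖ ^ 2 * P / 2)) := by
      refine h4.trans (le_of_eq (by ring))
    exact le_of_mul_le_mul_left h5 hs0'
  have hP0 : 0 < P := hkey.exists.choose_spec.1
  have hlim : ‖v‖ ^ 2 ≤ P ^ 2 := by
    have l : Filter.Tendsto (fun s : ℝ => P ^ 2 + s * (‖v‖ ^ 2 * P / 2)) (𝓝[>] 0) (𝓝 (P ^ 2)) := by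
      have : Filter.Tendsto (fun s : ℝ => P ^ 2 + s * (‖v‖ ^ 2 * P / 2)) (𝓝 0)
        (𝓝 (P ^ 2 + 0 * (‖v‖ ^ 2 * P / 2))) := by
        apply Continuous.tendsto; fun_prop
      rw [zero_mul, add_zero] at this
      exact this.mono_left nhdsWithin_le_nhds
    exact ge_of_tendsto l (hkey.mono fun s hs => hs.2)
  have hPv : ‖v‖ ≤ P := le_of_sq_le_sq hlim hP0.le
  have hPe : P = ‖v‖ := le_antisymm hPle hPv
  have : ‖v - ‖v‖ • p‖ ^ 2 ≤ 0 := by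
    rw [norm_sub_sq_real, inner_smul_right, norm_smul, real_inner_comm, ← hP, hPe, mul_pow,
      Real.norm_eq_abs, sq_abs]
    have : ‖p‖ ^ 2 ≤ 1 := by nlinarith [norm_nonneg p]
    nlinarith [sq_nonneg ‖v‖]
  have h0 : ‖v - ‖v‖ • p‖ = 0 := by nlinarith [norm_nonneg (v - ‖v‖ • p)]
  exact sub_eq_zero.1 (norm_eq_zero.1 h0)

theorem approx_env {n : ℕ} {S : Set (Euc n)} {g : Euc n → ℝ} (h : ConeW S g) (α : ℝ) (hα : 0 < α)
    (E : Set (Euc n)) (hES : E ⊆ S) (G : Euc n → ℝ) (σ : ℝ) (hσ : 0 < σ)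
    (hG0 : ∀ x ∈ E, 0 < G x) (hG : ∀ x ∈ E, G x ≤ g x + σ) (ε c' : ℝ)
    (V : Finset (Euc n)) (u : Euc n → ℝ) (hV : V.Nonempty) (hVE : ∀ x ∈ V, x ∈ E)
    (hct : ∀ x ∈ V, ∀ p ∈ closure (ball (0 : Euc n) 1 ∩ S), (∀ k ∈ V, u x + ⟪p, k - x⟫ ≤ u k) →
        (∀ i : Fin n, x + ε • EuclideanSpace.single i 1 ∈ V ∧
          x - ε • EuclideanSpace.single i 1 ∈ V) ∧
        ∑ i : Fin n, (u (x + ε • EuclideanSpace.single i 1) +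
          u (x - ε • EuclideanSpace.single i 1) - 2 * u x) ≤
          ε ^ 2 * (c' - α * g p / G x)) :
    ∃ φ : Euc n → ℝ,
      (∀ q ∈ closure (ball (0 : Euc n) 1 ∩ S), ∃ z ∈ E, ∀ y, φ z + ⟪q, y - z⟫ ≤ φ y) ∧
      ∀ x, ∃ p ∈ closure (ball (0 : Euc n) 1 ∩ S), (∀ y, φ x + ⟪p, y - x⟫ ≤ φ y) ∧
        (0 < g p → x ∈ S) ∧
        ∑ i : Fin n, (φ (x + ε • EuclideanSpace.single i 1) +
          φ (x - ε • EuclideanSpace.single i 1) - 2 * φ x) ≤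
          ε ^ 2 * (c' - α * g p / (g x + σ)) := by
  obtain ⟨φ, -, hcov, hmain⟩ := envE_main V hV u _ (ConeW.K_compact (S := S)) h.K_convex h.K_nonempty
  refine ⟨φ, fun q hq => ?_, fun x => ?_⟩
  · obtain ⟨z, hz, hz'⟩ := hcov q hq
    exact ⟨z, hVE z hz, hz'⟩
  obtain ⟨lam, p, hp, hl0, hl1, hsub, hφx, hcon, hmax, hup⟩ := hmain x
  have hmS : 0 < g p → x ∈ S := by
    intro h0
    have hpS : p ∈ S := h.mem_of_pos (ConeW.K_cl hp) h0
    have hxv := polar_eq h p _ hpS (ConeW.K_norm hp) hmax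
    have hxbS : ∑ z ∈ V, lam z • z ∈ S := h.conv.sum_mem hl0 hl1 fun z hz => hES (hVE z hz)
    rcases (norm_nonneg (x - ∑ z ∈ V, lam z • z)).eq_or_lt with h6 | h6
    · rw [sub_eq_zero.1 (norm_eq_zero.1 h6.symm)]; exact hxbS
    · have := h.add_mem (subset_closure hxbS) (h.cone p hpS _ h6)
      rwa [← hxv, add_sub_cancel] at this
  refine ⟨p, hp, hsub, hmS, ?_⟩
  set xb := ∑ z ∈ V, lam z • z with hxb
  set e : Fin n → Euc n := fun i => EuclideanSpace.single i (1 : ℝ) with he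
  have hpos : ∀ z ∈ V, 0 < lam z → (∀ i : Fin n, z + ε • e i ∈ V ∧ z - ε • e i ∈ V) ∧
      ∑ i : Fin n, (u (z + ε • e i) + u (z - ε • e i) - 2 * u z) ≤ ε ^ 2 * (c' - α * g p / G z) :=
    fun z hz hl => hct z hz p hp (hcon z hz hl)
  have h1 : ∀ i, φ (x + ε • e i) ≤ ∑ z ∈ V, lam z * u (z + ε • e i) + ⟪p, x - xb⟫ :=
    fun i => hup _ fun z hz hl => ((hpos z hz hl).1 i).1
  have h2 : ∀ i, φ (x - ε • e i) ≤ ∑ z ∈ V, lam z * u (z - ε • e i) + ⟪p, x - xb⟫ := by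
    intro i
    have := hup (-(ε • e i)) fun z hz hl => by
      rw [← sub_eq_add_neg]; exact ((hpos z hz hl).1 i).2
    simpa only [← sub_eq_add_neg] using this
  have h3 : ∑ i : Fin n, (φ (x + ε • e i) + φ (x - ε • e i) - 2 * φ x) ≤
      ∑ z ∈ V, lam z * ∑ i : Fin n, (u (z + ε • e i) + u (z - ε • e i) - 2 * u z) := by
    simp only [Finset.mul_sum]
    rw [Finset.sum_comm]
    refine Finset.sum_le_sum fun i _ => ?_
    have : ∑ z ∈ V, lam z * (u (z + ε • e i) + u (z - ε • e i) - 2 * u z) =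
        ∑ z ∈ V, lam z * u (z + ε • e i) + ∑ z ∈ V, lam z * u (z - ε • e i) -
          2 * ∑ z ∈ V, lam z * u z := by
      rw [Finset.mul_sum, ← Finset.sum_add_distrib, ← Finset.sum_sub_distrib]
      exact Finset.sum_congr rfl fun z _ => by ring
    rw [this]
    linarith [h1 i, h2 i]
  have h4 : ∑ z ∈ V, lam z * ∑ i : Fin n, (u (z + ε • e i) + u (z - ε • e i) - 2 * u z) ≤
      ∑ z ∈ V, lam z * (ε ^ 2 * (c' - α * g p / G z)) := by
    refine Finset.sum_le_sum fun z hz => ?_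
    rcases (hl0 z hz).eq_or_lt with h0 | h0
    · rw [← h0]; simp
    · exact mul_le_mul_of_nonneg_left (hpos z hz h0).2 h0.le
  refine h3.trans (h4.trans ?_)
  have h5 : ∑ z ∈ V, lam z * (ε ^ 2 * (c' - α * g p / G z)) =
      ε ^ 2 * (c' - α * g p * ∑ z ∈ V, lam z * (1 / G z)) := by
    rw [mul_sub, Finset.mul_sum, Finset.mul_sum]
    have : ε ^ 2 * c' = ∑ z ∈ V, lam z * (ε ^ 2 * c') := by rw [← Finset.sum_mul, hl1, one_mul]
    rw [this, ← Finset.sum_sub_distrib]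
    exact Finset.sum_congr rfl fun z _ => by ring
  rw [h5]
  refine mul_le_mul_of_nonneg_left ?_ (sq_nonneg _)
  refine sub_le_sub_left ?_ _
  have hpc := ConeW.K_cl hp
  rcases (h.nonneg hpc).eq_or_lt with h0 | h0
  · rw [← h0]; simp
  have hpS : p ∈ S := h.mem_of_pos hpc h0
  have hxv := polar_eq h p (x - xb) hpS (ConeW.K_norm hp) hmax
  have hVS : ∀ z ∈ V, z ∈ S := fun z hz => hES (hVE z hz)
  have hxbS : xb ∈ S := h.conv.sum_mem hl0 hl1 hVS
  have hgxb : 0 < g xb := h.pos xb hxbS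
  have hgx : g xb ≤ g x := by
    rcases (norm_nonneg (x - xb)).eq_or_lt with h6 | h6
    · have : x = xb := sub_eq_zero.1 (norm_eq_zero.1 h6.symm)
      rw [this]
    · have hm := h.cone p hpS _ h6
      have := h.sup xb (subset_closure hxbS) _ (subset_closure hm)
      rw [← hxv, add_sub_cancel] at this
      have h7 := h.pos _ hm
      rw [← hxv] at h7
      linarith
  set M := g xb + σ with hM
  have hMpos : 0 < M := by linarith
  have hJ : ∑ z ∈ V, lam z * G z ≤ M := by
    have j1 : ∑ z ∈ V, lam z * G z ≤ ∑ z ∈ V, lam z * (g z + σ) :=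
      Finset.sum_le_sum fun z hz => mul_le_mul_of_nonneg_left (hG z (hVE z hz)) (hl0 z hz)
    have j2 : ∑ z ∈ V, lam z * (g z + σ) = ∑ z ∈ V, lam z • g z + σ := by
      simp only [mul_add, Finset.sum_add_distrib, ← Finset.sum_mul, hl1, one_mul, smul_eq_mul]
    have j3 := h.concave.le_map_sum hl0 hl1 hVS
    linarith
  have hinv : 1 / M ≤ ∑ z ∈ V, lam z * (1 / G z) := by
    have j1 : ∑ z ∈ V, lam z * (2 / M - G z / M ^ 2) ≤ ∑ z ∈ V, lam z * (1 / G z) := by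
      refine Finset.sum_le_sum fun z hz => mul_le_mul_of_nonneg_left ?_ (hl0 z hz)
      have hGz := hG0 z (hVE z hz)
      have : 1 / G z - (2 / M - G z / M ^ 2) = (M - G z) ^ 2 / (M ^ 2 * G z) := by
        field_simp; ring
      have h8 : 0 ≤ (M - G z) ^ 2 / (M ^ 2 * G z) := by positivity
      linarith
    have j2 : ∑ z ∈ V, lam z * (2 / M - G z / M ^ 2) = 2 / M - (∑ z ∈ V, lam z * G z) / M ^ 2 := by
      simp only [mul_sub, Finset.sum_sub_distrib, ← Finset.sum_mul, hl1, one_mul, Finset.sum_div,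
        mul_div_assoc]
    have j3 : (∑ z ∈ V, lam z * G z) / M ^ 2 ≤ M / M ^ 2 :=
      div_le_div_of_nonneg_right hJ (by positivity)
    have j4 : M / M ^ 2 = 1 / M := by field_simp
    have j5 : 2 / M = 1 / M + 1 / M := by ring
    linarith
  have hfin : 1 / (g x + σ) ≤ 1 / M := one_div_le_one_div_of_le hMpos (by linarith)
  rw [div_eq_mul_one_div]
  exact mul_le_mul_of_nonneg_left (hfin.trans hinv) (by positivity)


/-! ## Part D: the discrete Neumann problem -/

theorem disc_solve {ι : Type*} [Fintype ι] [Nonempty ι] (A : ι → ι → ℝ)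
    (hs : ∀ x y, A x y = A y x) (hpos : ∀ x y, 0 < A x y) (b : ι → ℝ) (hb : 0 ≤ ∑ x, b x) :
    ∃ u : ι → ℝ, ∀ x, ∑ y, A x y * (u y - u x) ≤ b x := by
  let T : (ι → ℝ) →ₗ[ℝ] (ι → ℝ) :=
    { toFun := fun u x => ∑ y, A x y * (u y - u x) - ∑ y, u y
      map_add' := by
        intro u v; ext x
        simp only [Pi.add_apply, Finset.sum_add_distrib]
        have : ∑ y, A x y * (u y + v y - (u x + v x)) =
          ∑ y, A x y * (u y - u x) + ∑ y, A x y * (v y - v x) := by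
          rw [← Finset.sum_add_distrib]
          exact Finset.sum_congr rfl fun y _ => by ring
        rw [this]; ring
      map_smul' := by
        intro c u; ext x
        simp only [Pi.smul_apply, smul_eq_mul, RingHom.id_apply, mul_sub, Finset.mul_sum]
        congr 1
        exact Finset.sum_congr rfl fun y _ => by ring }
  have hT : ∀ u x, T u x = ∑ y, A x y * (u y - u x) - ∑ y, u y := fun u x => rfl
  -- the operator has zero mean
  have hmean : ∀ u : ι → ℝ, ∑ x, ∑ y, A x y * (u y - u x) = 0 := by
    intro u
    have h1 : ∑ x, ∑ y, A x y * (u y - u x) = - ∑ x, ∑ y, A x y * (u y - u x) := by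
      conv_lhs => rw [Finset.sum_comm]
      rw [← Finset.sum_neg_distrib]
      refine Finset.sum_congr rfl fun x _ => ?_
      rw [← Finset.sum_neg_distrib]
      refine Finset.sum_congr rfl fun y _ => ?_
      rw [hs y x]; ring
    linarith
  have hcard : (0 : ℝ) < Fintype.card ι := by exact_mod_cast Fintype.card_pos
  have hsumT : ∀ u, ∑ x, T u x = - (Fintype.card ι : ℝ) * ∑ y, u y := by
    intro u
    simp only [hT, Finset.sum_sub_distrib, hmean]
    simp
  have hinj : Function.Injective T := by
    rw [← LinearMap.ker_eq_bot, LinearMap.ker_eq_bot']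
    intro u hu
    have h0 : ∑ y, u y = 0 := by
      have := hsumT u
      rw [hu] at this
      simp only [Pi.zero_apply, Finset.sum_const_zero] at this
      rcases mul_eq_zero.1 this.symm with h | h
      · linarith
      · exact h
    have h1 : ∀ x, ∑ y, A x y * (u y - u x) = 0 := by
      intro x
      have := congrFun hu x
      rw [hT, h0] at this
      simpa using this
    have h2 : ∑ x, ∑ y, A x y * (u y - u x) ^ 2 = 0 := by
      have e1 : ∑ x, u x * ∑ y, A x y * (u y - u x) = 0 := by simp [h1]
      have e2 : ∑ x, ∑ y, A x y * (u y * (u y - u x)) = 0 := by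
        rw [Finset.sum_comm]
        have : ∑ y, ∑ x, A x y * (u y * (u y - u x)) = - ∑ y, u y * ∑ x, A y x * (u x - u y) := by
          rw [← Finset.sum_neg_distrib]
          refine Finset.sum_congr rfl fun y _ => ?_
          rw [Finset.mul_sum, ← Finset.sum_neg_distrib]
          refine Finset.sum_congr rfl fun x _ => ?_
          rw [hs x y]; ring
        rw [this, e1, neg_zero]
      have e3 : ∑ x, ∑ y, A x y * (u y - u x) ^ 2 =
          ∑ x, ∑ y, A x y * (u y * (u y - u x)) - ∑ x, u x * ∑ y, A x y * (u y - u x) := by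
        rw [← Finset.sum_sub_distrib]
        refine Finset.sum_congr rfl fun x _ => ?_
        rw [Finset.mul_sum, ← Finset.sum_sub_distrib]
        exact Finset.sum_congr rfl fun y _ => by ring
      rw [e3, e1, e2, sub_zero]
    have h3 : ∀ x y, u y = u x := by
      intro x y
      have hx := (Finset.sum_eq_zero_iff_of_nonneg (fun x _ => Finset.sum_nonneg fun y _ =>
        mul_nonneg (hpos x y).le (sq_nonneg _))).1 h2 x (Finset.mem_univ _)
      have hy := (Finset.sum_eq_zero_iff_of_nonneg (fun y _ =>
        mul_nonneg (hpos x y).le (sq_nonneg _))).1 hx y (Finset.mem_univ _)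
      rcases mul_eq_zero.1 hy with h | h
      · exact absurd h (hpos x y).ne'
      · exact sub_eq_zero.1 (pow_eq_zero_iff (two_ne_zero) |>.1 h)
    ext x
    have h4 : ∑ y, u y = (Fintype.card ι : ℝ) * u x := by
      rw [Finset.sum_congr rfl fun y _ => h3 x y]; simp
    rw [h0] at h4
    rcases mul_eq_zero.1 h4.symm with h | h
    · exact absurd h hcard.ne'
    · simpa using h
  have hsurj : Function.Surjective T := LinearMap.injective_iff_surjective.1 hinj
  set m : ℝ := (∑ x, b x) / Fintype.card ι with hm
  obtain ⟨u, hu⟩ := hsurj (fun x => b x - m)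
  refine ⟨u, fun x => ?_⟩
  have h1 := hsumT u
  rw [hu] at h1
  simp only [Finset.sum_sub_distrib, Finset.sum_const, Finset.card_univ, nsmul_eq_mul] at h1
  rw [hm, mul_div_cancel₀ _ hcard.ne', sub_self] at h1
  have h0 : ∑ y, u y = 0 := by
    rcases mul_eq_zero.1 h1.symm with h | h
    · linarith
    · exact h
  have h2 := congrFun hu x
  rw [hT, h0, sub_zero] at h2
  rw [h2]
  have : 0 ≤ m := div_nonneg hb hcard.le
  linarith

theorem disc_solve' {X : Type*} [DecidableEq X] (V : Finset X) (hV : V.Nonempty) (A : X → X → ℝ)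
    (hs : ∀ x y, A x y = A y x) (hpos : ∀ x ∈ V, ∀ y ∈ V, 0 < A x y) (b : X → ℝ)
    (hb : 0 ≤ ∑ x ∈ V, b x) :
    ∃ u : X → ℝ, ∀ x ∈ V, ∑ y ∈ V, A x y * (u y - u x) ≤ b x := by
  have : Nonempty V := hV.to_subtype
  obtain ⟨u, hu⟩ := disc_solve (ι := V) (fun x y => A x y) (fun x y => hs x y)
    (fun x y => hpos x x.2 y y.2) (fun x => b x) (by
      rw [Finset.sum_coe_sort V b]; exact hb)
  refine ⟨fun z => if h : z ∈ V then u ⟨z, h⟩ else 0, fun x hx => ?_⟩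
  refine le_trans (le_of_eq ?_) (hu ⟨x, hx⟩)
  rw [← Finset.sum_coe_sort]
  simp [hx]

/-- clamped one-sided differences -/
theorem clampA (a0 a1 a2 X Y : ℝ) (h0 : 0 < a0) (h1 : |a1 - a0 - X| ≤ Y)
    (h2 : |a2 - a0 + X| ≤ Y) :
    ∃ s, |s| ≤ |X| ∧ |max 0 (min a0 a1) - max 0 (min a0 a2) - s| ≤ 2 * Y := by
  refine ⟨max (-a0) (min a0 X), ?_, ?_⟩
  · rw [abs_le] 
    rcases abs_cases X with h | h <;> rcases max_cases (-a0) (min a0 X) with h' | h' <;>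
    rcases min_cases a0 X with h'' | h'' <;> constructor <;> linarith
  · rw [abs_le] at *
    rcases max_cases (-a0) (min a0 X) with h' | h' <;>
    rcases min_cases a0 X with h'' | h'' <;>
    rcases max_cases 0 (min a0 a1) with h3 | h3 <;>
    rcases max_cases 0 (min a0 a2) with h4 | h4 <;>
    rcases min_cases a0 a1 with h5 | h5 <;>
    rcases min_cases a0 a2 with h6 | h6 <;> constructor <;> linarith

theorem clampB (a0 a1 a2 X Y : ℝ) (h0 : 0 < a0) (h1 : |a1 - a0 - X| ≤ Y)
    (h2 : |a2 - a0 + X| ≤ Y) (h3 : 0 < a1) (h4 : 0 < a2) :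
    |max 0 (min a0 a1) - max 0 (min a0 a2) - X| ≤ 3 * Y := by
  rw [abs_le] at *
  rcases max_cases 0 (min a0 a1) with h3 | h3 <;>
    rcases max_cases 0 (min a0 a2) with h4 | h4 <;>
    rcases min_cases a0 a1 with h5 | h5 <;>
    rcases min_cases a0 a2 with h6 | h6 <;> constructor <;> linarith

/-- edge weights of the lattice graph -/
def latW {n : ℕ} (a : Euc n → ℝ) (ε κ : ℝ) (x y : Euc n) : ℝ :=
  κ + ∑ i : Fin n, ((if y = x + ε • EuclideanSpace.single i 1 then min (a x) (a y) else 0) +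
    (if x = y + ε • EuclideanSpace.single i 1 then min (a x) (a y) else 0))

theorem latW_symm {n : ℕ} (a : Euc n → ℝ) (ε κ : ℝ) (x y : Euc n) :
    latW a ε κ x y = latW a ε κ y x := by
  unfold latW
  congr 1
  refine Finset.sum_congr rfl fun i _ => ?_
  rw [add_comm, min_comm]

theorem latW_sum {n : ℕ} (a : Euc n → ℝ) (ε κ : ℝ) (V : Finset (Euc n)) (x : Euc n)
    (F : Euc n → ℝ) :
    ∑ y ∈ V, latW a ε κ x y * F y = κ * ∑ y ∈ V, F y +
      ∑ i : Fin n, ((if x + ε • EuclideanSpace.single i 1 ∈ V then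
          min (a x) (a (x + ε • EuclideanSpace.single i 1)) * F (x + ε • EuclideanSpace.single i 1)
          else 0) +
        (if x - ε • EuclideanSpace.single i 1 ∈ V then
          min (a x) (a (x - ε • EuclideanSpace.single i 1)) * F (x - ε • EuclideanSpace.single i 1)
          else 0)) := by
  unfold latW
  simp only [add_mul, Finset.sum_add_distrib, Finset.mul_sum, Finset.sum_mul, ite_mul, zero_mul]
  congr 1
  congr 1
  · rw [Finset.sum_comm]
    refine Finset.sum_congr rfl fun i _ => ?_
    rw [Finset.sum_ite_eq']
  · rw [Finset.sum_comm]
    refine Finset.sum_congr rfl fun i _ => ?_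
    have : ∀ y : Euc n, (x = y + ε • EuclideanSpace.single i (1 : ℝ)) ↔
        (y = x - ε • EuclideanSpace.single i (1 : ℝ)) := by
      intro y
      rw [eq_sub_iff_add_eq, eq_comm]
    simp only [this]
    rw [Finset.sum_ite_eq']

theorem inner_single_right' {n : ℕ} (p : Euc n) (i : Fin n) :
    ⟪p, EuclideanSpace.single i (1 : ℝ)⟫ = p i := by
  rw [EuclideanSpace.inner_single_right]
  simp

theorem contactD {n : ℕ} (V : Finset (Euc n)) (a b u : Euc n → ℝ) (ε κ ω R : ℝ)
    (hε : 0 < ε) (hκ : 0 ≤ κ) (x p D : Euc n)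
    (hx : x ∈ V) (hax : 0 < a x)
    (hV1 : ∀ i : Fin n, x + ε • EuclideanSpace.single i 1 ∈ V ↔
      0 < a (x + ε • EuclideanSpace.single i 1))
    (hV2 : ∀ i : Fin n, x - ε • EuclideanSpace.single i 1 ∈ V ↔
      0 < a (x - ε • EuclideanSpace.single i 1))
    (hD1 : ∀ i : Fin n, |a (x + ε • EuclideanSpace.single i 1) - a x - ε * D i| ≤ ε * ω)
    (hD2 : ∀ i : Fin n, |a (x - ε • EuclideanSpace.single i 1) - a x + ε * D i| ≤ ε * ω)
    (hu : ∑ y ∈ V, latW a ε κ x y * (u y - u x) ≤ ε ^ 2 * b x)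
    (hR : ∀ y ∈ V, ‖y - x‖ ≤ R) (hκR : κ * (V.card * R) ≤ ε ^ 2 * ω)
    (hp : ‖p‖ ≤ 1) (hc : ∀ k ∈ V, u x + ⟪p, k - x⟫ ≤ u k) :
    0 ≤ b x + ‖D‖ + (2 * n + 1) * ω ∧
    ∀ m, 0 ≤ m → m ≤ a x → (∀ i : Fin n, 0 < a (x + ε • EuclideanSpace.single i 1) ∧
        m ≤ a (x + ε • EuclideanSpace.single i 1)) →
      (∀ i : Fin n, 0 < a (x - ε • EuclideanSpace.single i 1) ∧
        m ≤ a (x - ε • EuclideanSpace.single i 1)) →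
      m * ∑ i : Fin n, (u (x + ε • EuclideanSpace.single i 1) +
        u (x - ε • EuclideanSpace.single i 1) - 2 * u x) ≤
      ε ^ 2 * (b x - ⟪p, D⟫ + (3 * n + 1) * ω) := by
  classical
  set e : Fin n → Euc n := fun i => EuclideanSpace.single i (1 : ℝ) with he
  have hpi : ∀ i, |p i| ≤ 1 := fun i => (PiLp.norm_apply_le p i).trans hp
  -- energy identity
  have hd : ∀ y ∈ V, 0 ≤ u y - u x - ⟪p, y - x⟫ := fun y hy => by linarith [hc y hy]
  have h1 : ∑ y ∈ V, latW a ε κ x y * (u y - u x - ⟪p, y - x⟫) ≤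
      ε ^ 2 * b x - ∑ y ∈ V, latW a ε κ x y * ⟪p, y - x⟫ := by
    simp only [mul_sub _ _ ⟪p, _⟫, Finset.sum_sub_distrib]
    linarith
  -- drift term
  have h2 : ∑ y ∈ V, latW a ε κ x y * ⟪p, y - x⟫ = κ * ∑ y ∈ V, ⟪p, y - x⟫ +
      ∑ i, ε * p i * (max 0 (min (a x) (a (x + ε • e i))) - max 0 (min (a x) (a (x - ε • e i)))) := by
    rw [latW_sum]
    congr 1
    refine Finset.sum_congr rfl fun i _ => ?_
    have e1 : ⟪p, x + ε • e i - x⟫ = ε * p i := by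
      rw [add_sub_cancel_left, inner_smul_right, inner_single_right']
    have e2 : ⟪p, x - ε • e i - x⟫ = - (ε * p i) := by
      rw [sub_sub_cancel_left, inner_neg_right, inner_smul_right, inner_single_right']
    rw [e1, e2]
    simp only [hV1 i, hV2 i]
    have t1 : ∀ (z c : ℝ), (if 0 < z then min (a x) z * c else 0) = max 0 (min (a x) z) * c := by
      intro z c
      split_ifs with h
      · rw [max_eq_right (le_min hax.le h.le)]
      · rw [max_eq_left ((min_le_right _ _).trans (not_lt.1 h)), zero_mul]
    have q1 := t1 (a (x + ε • e i)) (ε * p i)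
    have q2 := t1 (a (x - ε • e i)) (-(ε * p i))
    have q3 := congrArg₂ (· + ·) q1 q2
    refine Eq.trans ?_ (q3.trans (by ring))
    congr
  have h3 : - (ε ^ 2 * ω) ≤ κ * ∑ y ∈ V, ⟪p, y - x⟫ := by
    have : - (V.card * R) ≤ ∑ y ∈ V, ⟪p, y - x⟫ := by
      have : ∑ y ∈ V, (-R) ≤ ∑ y ∈ V, ⟪p, y - x⟫ := by
        refine Finset.sum_le_sum fun y hy => ?_
        have t := abs_real_inner_le_norm p (y - x)
        have t2 : ‖p‖ * ‖y - x‖ ≤ 1 * R := mul_le_mul hp (hR y hy) (norm_nonneg _) zero_le_one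
        have := (abs_le.1 t).1
        linarith
      simpa using this
    nlinarith
  have hω : ∀ i : Fin n, 0 ≤ ε * ω := fun i => (abs_nonneg _).trans (hD1 i)
  constructor
  · -- first claim
    have h4 : 0 ≤ ∑ y ∈ V, latW a ε κ x y * (u y - u x - ⟪p, y - x⟫) := by
      rw [latW_sum]
      refine add_nonneg (mul_nonneg hκ (Finset.sum_nonneg hd)) (Finset.sum_nonneg fun i _ => ?_)
      refine add_nonneg ?_ ?_
      · split_ifs with h
        · exact mul_nonneg (le_min hax.le ((hV1 i).1 h).le) (hd _ h)
        · exact le_rfl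
      · split_ifs with h
        · exact mul_nonneg (le_min hax.le ((hV2 i).1 h).le) (hd _ h)
        · exact le_rfl
    choose s hs1 hs2 using fun i => clampA (a x) (a (x + ε • e i)) (a (x - ε • e i)) (ε * D i) (ε * ω)
      hax (hD1 i) (hD2 i)
    have h5 : - (ε ^ 2 * (‖D‖ + 2 * n * ω)) ≤ ∑ i, ε * p i *
        (max 0 (min (a x) (a (x + ε • e i))) - max 0 (min (a x) (a (x - ε • e i)))) := by
      have t1 : ∀ i, ε * (p i * s i) - ε * (2 * (ε * ω)) ≤ ε * p i *
        (max 0 (min (a x) (a (x + ε • e i))) - max 0 (min (a x) (a (x - ε • e i)))) := by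
        intro i
        set q := max 0 (min (a x) (a (x + ε • e i))) - max 0 (min (a x) (a (x - ε • e i)))
        have : |p i * (q - s i)| ≤ 1 * (2 * (ε * ω)) := by
          rw [abs_mul]; exact mul_le_mul (hpi i) (hs2 i) (abs_nonneg _) zero_le_one
        have := (abs_le.1 this).1
        nlinarith
      have t2 : |∑ i, p i * s i| ≤ ε * ‖D‖ := by
        have c1 : (∑ i, p i * s i) ^ 2 ≤ (∑ i, p i ^ 2) * ∑ i, s i ^ 2 :=
          Finset.sum_mul_sq_le_sq_mul_sq _ _ _
        have c2 : ∑ i, p i ^ 2 ≤ 1 := by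
          have := EuclideanSpace.real_norm_sq_eq p
          rw [← this]; nlinarith [norm_nonneg p]
        have c3 : ∑ i, s i ^ 2 ≤ (ε * ‖D‖) ^ 2 := by
          rw [mul_pow, EuclideanSpace.real_norm_sq_eq D, Finset.mul_sum]
          refine Finset.sum_le_sum fun i _ => ?_
          rw [← mul_pow]
          exact sq_le_sq.2 (hs1 i)
        have c4 : 0 ≤ ∑ i, s i ^ 2 := Finset.sum_nonneg fun i _ => sq_nonneg _
        apply abs_le_of_sq_le_sq _ (by positivity)
        nlinarith
      have t3 := Finset.sum_le_sum (s := Finset.univ) fun i _ => t1 i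
      rw [Finset.sum_sub_distrib, ← Finset.mul_sum] at t3
      simp only [Finset.sum_const, Finset.card_univ, Fintype.card_fin, nsmul_eq_mul] at t3
      have := (abs_le.1 t2).1
      nlinarith
    have h6 : 0 ≤ ε ^ 2 * (b x + ‖D‖ + (2 * n + 1) * ω) := by
      rw [h2] at h1
      nlinarith
    exact nonneg_of_mul_nonneg_right h6 (by positivity)
  · intro m hm hmx hm1 hm2
    have h4 : m * ∑ i : Fin n, (u (x + ε • e i) + u (x - ε • e i) - 2 * u x) ≤
        ∑ y ∈ V, latW a ε κ x y * (u y - u x - ⟪p, y - x⟫) := by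
      rw [latW_sum, Finset.mul_sum]
      refine le_trans ?_ (le_add_of_nonneg_left (mul_nonneg hκ (Finset.sum_nonneg hd)))
      refine Finset.sum_le_sum fun i _ => ?_
      have i1 := (hV1 i).2 (hm1 i).1
      have i2 := (hV2 i).2 (hm2 i).1
      rw [if_pos i1, if_pos i2]
      have j1 := mul_le_mul_of_nonneg_right (le_min hmx (hm1 i).2) (hd _ i1)
      have j2 := mul_le_mul_of_nonneg_right (le_min hmx (hm2 i).2) (hd _ i2)
      refine le_trans (le_of_eq ?_) (add_le_add j1 j2)
      rw [add_sub_cancel_left, sub_sub_cancel_left, inner_neg_right]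
      ring
    have h5 : ε ^ 2 * (⟪p, D⟫ - 3 * n * ω) ≤ ∑ i, ε * p i *
        (max 0 (min (a x) (a (x + ε • e i))) - max 0 (min (a x) (a (x - ε • e i)))) := by
      have t1 : ∀ i, ε * (p i * (ε * D i)) - ε * (3 * (ε * ω)) ≤ ε * p i *
        (max 0 (min (a x) (a (x + ε • e i))) - max 0 (min (a x) (a (x - ε • e i)))) := by
        intro i
        have hs2 := clampB _ _ _ _ _ hax (hD1 i) (hD2 i) (hm1 i).1 (hm2 i).1
        set q := max 0 (min (a x) (a (x + ε • e i))) - max 0 (min (a x) (a (x - ε • e i)))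
        have : |p i * (q - ε * D i)| ≤ 1 * (3 * (ε * ω)) := by
          rw [abs_mul]; exact mul_le_mul (hpi i) hs2 (abs_nonneg _) zero_le_one
        have := (abs_le.1 this).1
        nlinarith
      have t3 := Finset.sum_le_sum (s := Finset.univ) fun i _ => t1 i
      rw [Finset.sum_sub_distrib] at t3
      simp only [Finset.sum_const, Finset.card_univ, Fintype.card_fin, nsmul_eq_mul] at t3
      have t4 : ∑ i, ε * (p i * (ε * D i)) = ε ^ 2 * ⟪p, D⟫ := by
        rw [PiLp.inner_apply, Finset.mul_sum]
        refine Finset.sum_congr rfl fun i _ => ?_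
        simp; ring
      rw [t4] at t3
      nlinarith
    rw [h2] at h1
    nlinarith


open Filter Pointwise in
theorem riemann_lattice {n : ℕ} (E : Set (Euc n)) (hEo : IsOpen E) (hEb : Bornology.IsBounded E)
    (hE0 : volume (frontier E) = 0) (b : Euc n → ℝ) (hb : Continuous b)
    (hpos : 0 < ∫ x in E, b x) :
    ∀ᶠ N : ℕ in atTop, 0 < N ∧ ∃ V : Finset (Euc n),
      (∀ x, x ∈ V ↔ x ∈ E ∧ ∀ i, ∃ z : ℤ, x i = z / N) ∧ V.Nonempty ∧ 0 ≤ ∑ x ∈ V, b x := by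
  classical
  set T : (Fin n → ℝ) → Euc n := fun y => WithLp.toLp 2 y with hT
  have hTc : Continuous T := PiLp.continuous_toLp 2 _
  let Th : (Fin n → ℝ) ≃ₜ Euc n := (PiLp.homeomorph 2 (fun _ : Fin n => ℝ)).symm
  have hTh : ∀ y, Th y = T y := fun y => rfl
  have hmp : MeasurePreserving T volume volume := PiLp.volume_preserving_toLp (Fin n)
  have hme : MeasurableEmbedding T := Th.measurableEmbedding
  set s : Set (Fin n → ℝ) := T ⁻¹' E with hs
  have hsb : Bornology.IsBounded s := by
    have h := (PiLp.lipschitzWith_ofLp 2 (fun _ : Fin n => ℝ)).isBounded_image hEb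
    refine h.subset ?_
    intro y hy
    exact ⟨T y, hy, rfl⟩
  have hso : IsOpen s := hEo.preimage hTc
  have hsf : volume (frontier s) = 0 := by
    have : frontier s = T ⁻¹' frontier E := (Th.preimage_frontier E).symm
    rw [this, hmp.measure_preimage_emb hme, hE0]
  have key := tendsto_tsum_div_pow_atTop_integral s (fun y => b (T y)) (hb.comp hTc) hsb
    hso.measurableSet hsf
  have hintg : ∫ y in s, b (T y) = ∫ x in E, b x := hmp.setIntegral_preimage_emb hme b E
  rw [hintg] at key
  have hev := key.eventually (lt_mem_nhds hpos)
  filter_upwards [hev, eventually_gt_atTop 0] with N hN hN0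
  have hN0' : (0 : ℝ) < N := by exact_mod_cast hN0
  refine ⟨hN0, ?_⟩
  set L : Set (Fin n → ℝ) := ↑(Submodule.span ℤ (Set.range (Pi.basisFun ℝ (Fin n)))) with hL
  have hmem : ∀ y : Fin n → ℝ, y ∈ (N : ℝ)⁻¹ • L ↔ ∀ i, ∃ z : ℤ, y i = z / N := by
    intro y
    rw [Set.mem_inv_smul_set_iff₀ hN0'.ne', hL, SetLike.mem_coe,
      Module.Basis.mem_span_iff_repr_mem]
    simp only [Pi.basisFun_repr, Pi.smul_apply, smul_eq_mul, Set.mem_range]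
    refine forall_congr' fun i => exists_congr fun z => ?_
    rw [eq_div_iff hN0'.ne', mul_comm]
    simp [eq_comm]
  have hpos' : 0 < ∑' x : ↑(s ∩ (N : ℝ)⁻¹ • L), b (T x) := by
    by_contra hcon
    have := div_nonpos_of_nonpos_of_nonneg (not_lt.1 hcon) (show (0:ℝ) ≤ (N:ℝ) ^ Fintype.card (Fin n) by positivity)
    linarith
  have hfin : (s ∩ (N : ℝ)⁻¹ • L).Finite := by
    have : (N : ℝ)⁻¹ • L ∩ s = s ∩ (N : ℝ)⁻¹ • L := Set.inter_comm _ _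
    obtain ⟨R, hR⟩ := hsb.subset_closedBall 0
    have h1 : (s ∩ (N : ℝ)⁻¹ • L) ⊆ (fun z : Fin n → ℤ => fun i => (z i : ℝ) / N) ''
        (Set.Icc (fun _ => -⌈N * R⌉) (fun _ => ⌈N * R⌉)) := by
      rintro y ⟨hy1, hy2⟩
      choose z hz using (hmem y).1 hy2
      have hyi : ∀ i, |y i| ≤ R := fun i => by
        have := hR hy1
        rw [mem_closedBall_zero_iff] at this
        exact (norm_le_pi_norm y i).trans this
      have hz' : ∀ i, |(z i : ℝ)| ≤ ⌈N * R⌉ := fun i => by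
        have h2 : (z i : ℝ) = N * y i := by rw [hz i]; field_simp
        rw [h2, abs_mul, abs_of_pos hN0']
        exact (mul_le_mul_of_nonneg_left (hyi i) hN0'.le).trans (Int.le_ceil _)
      refine ⟨z, ⟨fun i => ?_, fun i => ?_⟩, funext fun i => (hz i).symm⟩
      · have := (abs_le.1 (hz' i)).1
        exact_mod_cast this
      · have := (abs_le.1 (hz' i)).2
        exact_mod_cast this
    exact ((Set.finite_Icc _ _).image _).subset h1
  have hft : Fintype ↑(s ∩ (N : ℝ)⁻¹ • L) := hfin.fintype
  refine ⟨hfin.toFinset.map Th.toEquiv.toEmbedding, fun x => ?_, ?_, ?_⟩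
  · rw [Finset.mem_map]
    constructor
    · rintro ⟨y, hy, rfl⟩
      rw [Set.Finite.mem_toFinset] at hy
      exact ⟨hy.1, (hmem y).1 hy.2⟩
    · rintro ⟨h1, h2⟩
      refine ⟨WithLp.ofLp x, ?_, rfl⟩
      rw [Set.Finite.mem_toFinset]
      exact ⟨h1, (hmem _).2 h2⟩
  · by_contra hcon
    rw [Finset.not_nonempty_iff_eq_empty, Finset.map_eq_empty, Set.Finite.toFinset_eq_empty] at hcon
    have : IsEmpty ↑(s ∩ (N : ℝ)⁻¹ • L) := by rw [hcon]; infer_instance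
    rw [tsum_empty] at hpos'
    exact lt_irrefl _ hpos'
  · rw [Finset.sum_map]
    rw [tsum_fintype] at hpos'
    refine le_trans hpos'.le (le_of_eq ?_)
    exact (Finset.sum_subtype _ (fun y => Set.Finite.mem_toFinset hfin) (fun y => b (T y))).symm


theorem unif_consist {n : ℕ} (E : Set (Euc n)) (hEb : Bornology.IsBounded E) (a : Euc n → ℝ)
    (ha : ContDiff ℝ 1 a) (ω : ℝ) (hω : 0 < ω) :
    ∃ ε0 > 0, ∀ x ∈ E, ∀ h : Euc n, ‖h‖ ≤ ε0 →
      |a (x + h) - a x - ⟪gradient a x, h⟫| ≤ ω * ‖h‖ := by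
  obtain ⟨R, hR⟩ := hEb.subset_closedBall 0
  have hcomp : IsCompact (closedBall (0 : Euc n) (R + 1)) := isCompact_closedBall _ _
  have hcont : Continuous (fderiv ℝ a) := ha.continuous_fderiv one_ne_zero
  have huc := hcomp.uniformContinuousOn_of_continuous hcont.continuousOn
  rw [Metric.uniformContinuousOn_iff] at huc
  obtain ⟨δ, hδ, hd⟩ := huc ω hω
  refine ⟨min (δ / 2) 1, by positivity, fun x hx h hh => ?_⟩
  have hxR : ‖x‖ ≤ R := by simpa using hR hx
  have hh1 : ‖h‖ ≤ 1 := hh.trans (min_le_right _ _)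
  have hh2 : ‖h‖ ≤ δ / 2 := hh.trans (min_le_left _ _)
  have hdiff : Differentiable ℝ a := ha.differentiable one_ne_zero
  have hx1 : x ∈ closedBall (0 : Euc n) (R + 1) := by simp; linarith
  have key := (convex_closedBall x ‖h‖).norm_image_sub_le_of_norm_hasFDerivWithin_le'
    (f := a) (f' := fderiv ℝ a) (φ := fderiv ℝ a x) (C := ω)
    (fun y _ => (hdiff y).hasFDerivAt.hasFDerivWithinAt)
    (fun y hy => by
      rw [mem_closedBall] at hy
      have hy2 : y ∈ closedBall (0 : Euc n) (R + 1) := by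
        rw [mem_closedBall]
        have := dist_triangle y x 0
        rw [dist_zero_right x] at this
        linarith
      have := hd y hy2 x hx1 (by linarith)
      rw [dist_eq_norm] at this
      exact this.le)
    (x := x) (y := x + h) (mem_closedBall_self (norm_nonneg _)) (by simp)
  rw [add_sub_cancel_left, Real.norm_eq_abs] at key
  have hg : ⟪gradient a x, h⟫ = fderiv ℝ a x h := by
    rw [gradient, InnerProductSpace.toDual_symm_apply]
  rw [hg]; exact key

open Filter in
theorem lattice_main {n : ℕ} (E : Set (Euc n)) (hEo : IsOpen E) (hEb : Bornology.IsBounded E)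
    (hE0 : volume (frontier E) = 0) (a H : Euc n → ℝ) (ha : ContDiff ℝ 1 a) (hH : Continuous H)
    (hEa : ∀ x, x ∈ E ↔ 0 < a x) (c₁ : ℝ) (hpos : 0 < ∫ x in E, (c₁ * a x - H x))
    (hbd : ∀ x ∈ frontier E, c₁ * a x - H x + ‖gradient a x‖ < 0)
    (K : Set (Euc n)) (hK : ∀ p ∈ K, ‖p‖ ≤ 1) (γ : Euc n → Euc n → ℝ)
    (hγ0 : ∀ x ∈ E, ∀ p ∈ K, 0 ≤ γ x p)
    (hγ : ∀ x ∈ E, ∀ p ∈ K, c₁ * a x - H x - ⟪p, gradient a x⟫ ≤ a x * (c₁ - γ x p))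
    (σ : ℝ) (hσ : 0 < σ) :
    ∀ᶠ N : ℕ in atTop, 0 < N ∧ ∃ (V : Finset (Euc n)) (u : Euc n → ℝ), V.Nonempty ∧
      (∀ x ∈ V, x ∈ E) ∧ ∀ x ∈ V, ∀ p ∈ K, (∀ k ∈ V, u x + ⟪p, k - x⟫ ≤ u k) →
        (∀ i : Fin n, x + (1 / N : ℝ) • EuclideanSpace.single i 1 ∈ V ∧
          x - (1 / N : ℝ) • EuclideanSpace.single i 1 ∈ V) ∧
        ∑ i : Fin n, (u (x + (1 / N : ℝ) • EuclideanSpace.single i 1) +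
          u (x - (1 / N : ℝ) • EuclideanSpace.single i 1) - 2 * u x) ≤
          (1 / N : ℝ) ^ 2 * (c₁ + σ - γ x p) := by
  classical
  have hac : Continuous a := ha.continuous
  have hgc : Continuous (gradient a) := by
    have : gradient a = fun x => (InnerProductSpace.toDual ℝ (Euc n)).symm (fderiv ℝ a x) := rfl
    rw [this]
    exact (LinearIsometryEquiv.continuous _).comp (ha.continuous_fderiv one_ne_zero)
  have hcE : IsCompact (closure E) := hEb.isCompact_closure
  obtain ⟨m₀, hm₀, hm⟩ := hcE.exists_forall_le' (a := 0)
    (f := fun x => max (-(c₁ * a x - H x + ‖gradient a x‖)) (a x))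
    (Continuous.continuousOn (by fun_prop)) (by
      intro x hx
      by_cases h : x ∈ E
      · exact lt_max_of_lt_right ((hEa x).1 h)
      · have : x ∈ frontier E := by rw [hEo.frontier_eq]; exact ⟨hx, h⟩
        exact lt_max_of_lt_left (by linarith [hbd x this]))
  obtain ⟨M, hM⟩ := hcE.exists_bound_of_continuousOn hgc.continuousOn
  obtain ⟨R, hR⟩ := hEb.subset_closedBall 0
  obtain ⟨ε1, hε1, h1⟩ := unif_consist E hEb a ha 1 one_pos
  set ω : ℝ := min (m₀ / (2 * (2 * n + 1))) (m₀ * σ / (2 * (3 * n + 1))) with hω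
  have hωpos : 0 < ω := by positivity
  obtain ⟨ε2, hε2, h2⟩ := unif_consist E hEb a ha ω hωpos
  set Λ : ℝ := |M| + 1 with hΛ
  have hΛpos : 0 < Λ := by positivity
  set ε3 : ℝ := min (m₀ / (2 * Λ)) (m₀ * σ / (2 * Λ * (|c₁| + σ))) with hε3
  have hε3pos : 0 < ε3 := by positivity
  have hbc : Continuous fun x => c₁ * a x - H x := by fun_prop
  have hlim : Tendsto (fun N : ℕ => (1 / N : ℝ)) atTop (𝓝 0) := tendsto_one_div_atTop_nhds_zero_nat
  filter_upwards [riemann_lattice E hEo hEb hE0 _ hbc hpos,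
    hlim.eventually (gt_mem_nhds hε1), hlim.eventually (gt_mem_nhds hε2),
    hlim.eventually (gt_mem_nhds hε3pos)] with N hN hNe1 hNe2 hNe3
  obtain ⟨hN0, V, hV, hVne, hVs⟩ := hN
  have hN0' : (0 : ℝ) < N := by exact_mod_cast hN0
  set ε : ℝ := 1 / N with hε
  have hεpos : 0 < ε := by positivity
  refine ⟨hN0, ?_⟩
  set R' : ℝ := 2 * |R| with hR'
  set κ : ℝ := ε ^ 2 * ω / (V.card * R' + 1) with hκ
  have hden : 0 < V.card * R' + 1 := by positivity
  have hκpos : 0 < κ := by positivity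
  obtain ⟨u, hu⟩ := disc_solve' V hVne (latW a ε κ) (latW_symm a ε κ) (by
      intro x hx y hy
      have hx' := ((hEa x).1 ((hV x).1 hx).1).le
      have hy' := ((hEa y).1 ((hV y).1 hy).1).le
      unfold latW
      refine add_pos_of_pos_of_nonneg hκpos (Finset.sum_nonneg fun i _ => add_nonneg ?_ ?_)
      · split_ifs
        · exact le_min hx' hy'
        · exact le_rfl
      · split_ifs
        · exact le_min hx' hy'
        · exact le_rfl) (fun x => ε ^ 2 * (c₁ * a x - H x)) (by
      rw [← Finset.mul_sum]; exact mul_nonneg (by positivity) hVs)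
  refine ⟨V, u, hVne, fun x hx => ((hV x).1 hx).1, fun x hx p hp hc => ?_⟩
  have hxE := ((hV x).1 hx).1
  have hax := (hEa x).1 hxE
  have hns : ∀ i : Fin n, ‖ε • EuclideanSpace.single i (1 : ℝ)‖ = ε := fun i => by
    rw [norm_smul, EuclideanSpace.norm_single, norm_one, mul_one, Real.norm_eq_abs,
      abs_of_pos hεpos]
  have hlat : ∀ (i : Fin n) (j : Fin n), ∃ z : ℤ, (ε • EuclideanSpace.single i (1 : ℝ) : Euc n) j = z / N := by
    intro i j
    refine ⟨if j = i then 1 else 0, ?_⟩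
    simp only [PiLp.smul_apply, EuclideanSpace.single_apply, smul_eq_mul, hε]
    split_ifs <;> simp
  have hV1 : ∀ i : Fin n, x + ε • EuclideanSpace.single i 1 ∈ V ↔
      0 < a (x + ε • EuclideanSpace.single i 1) := by
    intro i
    rw [hV, ← hEa, and_iff_left]
    intro j
    obtain ⟨z1, hz1⟩ := ((hV x).1 hx).2 j
    obtain ⟨z2, hz2⟩ := hlat i j
    exact ⟨z1 + z2, by rw [PiLp.add_apply, hz1, hz2]; push_cast; ring⟩
  have hV2 : ∀ i : Fin n, x - ε • EuclideanSpace.single i 1 ∈ V ↔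
      0 < a (x - ε • EuclideanSpace.single i 1) := by
    intro i
    rw [hV, ← hEa, and_iff_left]
    intro j
    obtain ⟨z1, hz1⟩ := ((hV x).1 hx).2 j
    obtain ⟨z2, hz2⟩ := hlat i j
    exact ⟨z1 - z2, by rw [PiLp.sub_apply, hz1, hz2]; push_cast; ring⟩
  set D := gradient a x with hD
  have hDi : ∀ i : Fin n, ⟪D, ε • EuclideanSpace.single i (1 : ℝ)⟫ = ε * D i := fun i => by
    rw [inner_smul_right, inner_single_right']
  have hD1 : ∀ i : Fin n, |a (x + ε • EuclideanSpace.single i 1) - a x - ε * D i| ≤ ε * ω := by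
    intro i
    have := h2 x hxE (ε • EuclideanSpace.single i 1) (by rw [hns]; exact hNe2.le)
    rw [hns, hDi, mul_comm ω] at this
    exact this
  have hD2 : ∀ i : Fin n, |a (x - ε • EuclideanSpace.single i 1) - a x + ε * D i| ≤ ε * ω := by
    intro i
    have := h2 x hxE (-(ε • EuclideanSpace.single i 1)) (by rw [norm_neg, hns]; exact hNe2.le)
    rw [norm_neg, hns, inner_neg_right, hDi, mul_comm ω, sub_neg_eq_add, ← sub_eq_add_neg] at this
    exact this
  have hDM : ‖D‖ ≤ |M| := (hM x (subset_closure hxE)).trans (le_abs_self _)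
  have hstep : ∀ h : Euc n, ‖h‖ = ε → a x - Λ * ε ≤ a (x + h) := by
    intro h hh
    have := h1 x hxE h (by rw [hh]; exact hNe1.le)
    rw [hh] at this
    have t2 := abs_real_inner_le_norm D h
    rw [hh] at t2
    have t3 : ‖D‖ * ε ≤ |M| * ε := mul_le_mul_of_nonneg_right hDM hεpos.le
    have t4 := (abs_le.1 this).1
    have t5 := (abs_le.1 t2).1
    rw [hΛ]; linarith
  have hRR : ∀ y ∈ V, ‖y - x‖ ≤ R' := by
    intro y hy
    have e1 : ‖y‖ ≤ R := by simpa using hR ((hV y).1 hy).1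
    have e2 : ‖x‖ ≤ R := by simpa using hR hxE
    have := norm_sub_le y x
    have := le_abs_self R
    rw [hR']; linarith
  have hκR : κ * (V.card * R') ≤ ε ^ 2 * ω := by
    rw [hκ, div_mul_eq_mul_div, div_le_iff₀ hden]
    have : 0 ≤ ε ^ 2 * ω := by positivity
    linarith
  obtain ⟨c1, c2⟩ := contactD V a (fun x => c₁ * a x - H x) u ε κ ω R' hεpos hκpos.le x p D hx hax
    hV1 hV2 hD1 hD2 (hu x hx) hRR hκR (hK p hp) hc
  have ho1 : (2 * n + 1) * ω ≤ m₀ / 2 := by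
    have : ω ≤ m₀ / (2 * (2 * n + 1)) := min_le_left _ _
    rw [le_div_iff₀ (by positivity)] at this
    linarith
  have ho2 : (3 * n + 1) * ω ≤ m₀ * σ / 2 := by
    have : ω ≤ m₀ * σ / (2 * (3 * n + 1)) := min_le_right _ _
    rw [le_div_iff₀ (by positivity)] at this
    linarith
  have ho3 : Λ * ε ≤ m₀ / 2 := by
    have : ε ≤ m₀ / (2 * Λ) := hNe3.le.trans (min_le_left _ _)
    rw [le_div_iff₀ (by positivity)] at this
    linarith
  have ho4 : Λ * ε * (|c₁| + σ) ≤ m₀ * σ / 2 := by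
    have : ε ≤ m₀ * σ / (2 * Λ * (|c₁| + σ)) := hNe3.le.trans (min_le_right _ _)
    rw [le_div_iff₀ (by positivity)] at this
    linarith
  have ham : m₀ ≤ a x := by
    rcases le_max_iff.1 (hm x (subset_closure hxE)) with h | h
    · exfalso
      simp only [← hD] at h
      linarith
    · exact h
  have hp1 : ∀ i : Fin n, a x - Λ * ε ≤ a (x + ε • EuclideanSpace.single i 1) :=
    fun i => hstep _ (hns i)
  have hp2 : ∀ i : Fin n, a x - Λ * ε ≤ a (x - ε • EuclideanSpace.single i 1) := fun i => by
    rw [sub_eq_add_neg]; exact hstep _ (by rw [norm_neg]; exact hns i)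
  have hmpos : 0 < a x - Λ * ε := by linarith
  refine ⟨fun i => ⟨(hV1 i).2 (hmpos.trans_le (hp1 i)), (hV2 i).2 (hmpos.trans_le (hp2 i))⟩, ?_⟩
  have c3 := c2 (a x - Λ * ε) hmpos.le (by linarith [mul_pos hΛpos hεpos])
    (fun i => ⟨hmpos.trans_le (hp1 i), hp1 i⟩) (fun i => ⟨hmpos.trans_le (hp2 i), hp2 i⟩)
  have c4 := hγ x hxE p hp
  have c5 := hγ0 x hxE p hp
  have c6 : a x * (c₁ - γ x p) + (3 * n + 1) * ω ≤ (a x - Λ * ε) * (c₁ + σ - γ x p) := by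
    have q1 : Λ * ε * (c₁ + σ - γ x p) ≤ Λ * ε * (|c₁| + σ) := by
      refine mul_le_mul_of_nonneg_left ?_ (by positivity)
      linarith [le_abs_self c₁]
    have q2 : m₀ * σ ≤ a x * σ := mul_le_mul_of_nonneg_right ham hσ.le
    nlinarith
  refine le_of_mul_le_mul_left ?_ hmpos
  refine c3.trans ?_
  have : ε ^ 2 * (c₁ * a x - H x - ⟪p, D⟫ + (3 * n + 1) * ω) ≤
      ε ^ 2 * ((a x - Λ * ε) * (c₁ + σ - γ x p)) :=
    mul_le_mul_of_nonneg_left (by linarith) (by positivity)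
  linarith


/-! ## Part F: convex functions with bounded second differences -/

def IsSub {n : ℕ} (φ : Euc n → ℝ) (x p : Euc n) : Prop := ∀ y, φ x + ⟪p, y - x⟫ ≤ φ y

theorem sd_double {n : ℕ} (f : Euc n → ℝ) (h : Euc n) (C : ℝ)
    (hf : ∀ x, f (x + h) + f (x - h) - 2 * f x ≤ C) (m : ℕ) :
    ∀ x, f (x + (2 : ℝ) ^ m • h) + f (x - (2 : ℝ) ^ m • h) - 2 * f x ≤ 4 ^ m * C := by
  induction m with
  | zero => simpa using hf
  | succ m ih =>
    intro x
    set k := (2 : ℝ) ^ m • h with hk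
    have h2 : (2 : ℝ) ^ (m + 1) • h = k + k := by
      rw [hk, ← add_smul]; congr 1; ring
    have e1 := ih (x + k)
    have e2 := ih (x - k)
    have e3 := ih x
    rw [h2]
    rw [add_sub_cancel_right, add_assoc] at e1
    rw [sub_add_cancel, sub_sub] at e2
    rw [pow_succ]
    linarith

theorem convex_of_sub {n : ℕ} (φ : Euc n → ℝ) (hs : ∀ x, ∃ p, IsSub φ x p) :
    ConvexOn ℝ univ φ := by
  refine ⟨convex_univ, fun x _ y _ a b ha hb hab => ?_⟩
  obtain ⟨p, hp⟩ := hs (a • x + b • y)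
  have h1 := mul_le_mul_of_nonneg_left (hp x) ha
  have h2 := mul_le_mul_of_nonneg_left (hp y) hb
  have h3 : a * ⟪p, x - (a • x + b • y)⟫ + b * ⟪p, y - (a • x + b • y)⟫ = 0 := by
    rw [← inner_smul_right, ← inner_smul_right, ← inner_add_right]
    have : a • (x - (a • x + b • y)) + b • (y - (a • x + b • y)) =
        (1 - (a + b)) • (a • x + b • y) := by module
    rw [this, hab]; simp
  simp only [smul_eq_mul]
  have h4 : a * φ (a • x + b • y) + b * φ (a • x + b • y) = φ (a • x + b • y) := by
    rw [← add_mul, hab, one_mul]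
  linarith

theorem lip_of_sub {n : ℕ} (φ : Euc n → ℝ) (hs : ∀ x, ∃ p, ‖p‖ ≤ 1 ∧ IsSub φ x p) (x y : Euc n) :
    |φ x - φ y| ≤ ‖x - y‖ := by
  have key : ∀ x y, φ x - φ y ≤ ‖x - y‖ := by
    intro x y
    obtain ⟨p, hp1, hp⟩ := hs x
    have h1 := hp y
    have h2 := (abs_le.1 (abs_real_inner_le_norm p (y - x))).1
    rw [norm_sub_rev y x] at h2
    nlinarith [norm_nonneg (x - y)]
  rw [abs_le]
  constructor
  · have := key y x; rw [norm_sub_rev] at this; linarith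
  · exact key x y

theorem sd_mono {n : ℕ} (φ : Euc n → ℝ) (hc : ConvexOn ℝ univ φ) (x h : Euc n) (s : ℝ)
    (hs0 : 0 ≤ s) (hs1 : s ≤ 1) :
    φ (x + s • h) + φ (x - s • h) - 2 * φ x ≤ φ (x + h) + φ (x - h) - 2 * φ x := by
  have h1 := hc.2 (mem_univ (x + h)) (mem_univ (x - h)) (show 0 ≤ (1 + s) / 2 by linarith)
    (show 0 ≤ (1 - s) / 2 by linarith) (by ring)
  have h2 := hc.2 (mem_univ (x + h)) (mem_univ (x - h)) (show 0 ≤ (1 - s) / 2 by linarith)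
    (show 0 ≤ (1 + s) / 2 by linarith) (by ring)
  have e1 : ((1 + s) / 2) • (x + h) + ((1 - s) / 2) • (x - h) = x + s • h := by module
  have e2 : ((1 - s) / 2) • (x + h) + ((1 + s) / 2) • (x - h) = x - s • h := by module
  rw [e1] at h1
  rw [e2] at h2
  simp only [smul_eq_mul] at h1 h2
  linarith

theorem sd_all {n : ℕ} (hn : 1 ≤ n) (φ : Euc n → ℝ) (hs : ∀ x, ∃ p, ‖p‖ ≤ 1 ∧ IsSub φ x p)
    (C : ℝ) (hC : 0 ≤ C)
    (hd : ∀ (l : ℕ) (i : Fin n) (x : Euc n), φ (x + ((1 / 2 : ℝ) ^ l) • EuclideanSpace.single i 1) +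
      φ (x - ((1 / 2 : ℝ) ^ l) • EuclideanSpace.single i 1) - 2 * φ x ≤ ((1 / 2 : ℝ) ^ l) ^ 2 * C) :
    ∃ L : ℝ, 0 ≤ L ∧ ∀ x h, φ (x + h) + φ (x - h) - 2 * φ x ≤ L * ‖h‖ ^ 2 := by
  have hc : ConvexOn ℝ univ φ := convex_of_sub φ fun x => (hs x).imp fun p hp => hp.2
  set L0 : ℝ := 4 * C + 2 with hL0
  have hpos : ∀ (t : ℝ), 0 < t → ∀ (i : Fin n) (x : Euc n),
      φ (x + t • EuclideanSpace.single i 1) +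
      φ (x - t • EuclideanSpace.single i 1) - 2 * φ x ≤ L0 * t ^ 2 := by
    intro t ht i x
    rcases le_or_gt t 1 with h1 | h1
    · obtain ⟨l, hl1, hl2⟩ := exists_nat_pow_near_of_lt_one ht h1 (show (0 : ℝ) < 1 / 2 by norm_num)
        (by norm_num)
      have hlp : (0 : ℝ) < (1 / 2) ^ l := by positivity
      have hm := sd_mono φ hc x (((1 / 2 : ℝ) ^ l) • EuclideanSpace.single i 1) (t / (1 / 2) ^ l)
        (by positivity) ((div_le_one hlp).2 hl2)
      rw [smul_smul, div_mul_cancel₀ _ hlp.ne'] at hm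
      refine hm.trans ((hd l i x).trans ?_)
      have : (1 / 2 : ℝ) ^ l ≤ 2 * t := by rw [pow_succ] at hl1; linarith
      have h3 : ((1 / 2 : ℝ) ^ l) ^ 2 ≤ (2 * t) ^ 2 := pow_le_pow_left₀ hlp.le this 2
      have h4 := mul_le_mul_of_nonneg_right h3 hC
      rw [hL0]
      nlinarith [sq_nonneg t]
    · have hns : ‖t • EuclideanSpace.single i (1 : ℝ)‖ = t := by
        rw [norm_smul, EuclideanSpace.norm_single, norm_one, mul_one, Real.norm_eq_abs,
          abs_of_pos ht]
      have h2 := (abs_le.1 (lip_of_sub φ hs (x + t • EuclideanSpace.single i 1) x)).2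
      have h3 := (abs_le.1 (lip_of_sub φ hs (x - t • EuclideanSpace.single i 1) x)).2
      rw [add_sub_cancel_left, hns] at h2
      rw [sub_sub_cancel_left, norm_neg, hns] at h3
      rw [hL0]
      nlinarith [mul_nonneg hC (sq_nonneg t)]
  have hall : ∀ (t : ℝ) (i : Fin n) (x : Euc n),
      φ (x + t • EuclideanSpace.single i 1) +
      φ (x - t • EuclideanSpace.single i 1) - 2 * φ x ≤ L0 * t ^ 2 := by
    intro t i x
    rcases lt_trichotomy t 0 with h | h | h
    · have := hpos (-t) (by linarith) i x
      rw [neg_smul, ← sub_eq_add_neg, sub_neg_eq_add] at this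
      rw [neg_sq] at this
      linarith
    · subst h
      simp
      linarith
    · exact hpos t h i x
  have hnp : (0 : ℝ) < n := by exact_mod_cast hn
  refine ⟨n * L0, by positivity, fun x h => ?_⟩
  have hexp : ∑ i : Fin n, (h i) • EuclideanSpace.single i (1 : ℝ) = h := by
    ext j
    simp [Pi.single_apply]
  have hsum1 : ∑ i : Fin n, (1 / n : ℝ) = 1 := by
    simp; field_simp
  have hj : ∀ s : ℝ, φ (x + s • h) ≤
      ∑ i : Fin n, (1 / n : ℝ) * φ (x + (s * (n * h i)) • EuclideanSpace.single i (1 : ℝ)) := by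
    intro s
    have := hc.map_sum_le (t := Finset.univ) (w := fun _ : Fin n => (1 / n : ℝ))
      (p := fun i => x + (s * (n * h i)) • EuclideanSpace.single i (1 : ℝ))
      (fun i _ => by positivity) hsum1 (fun i _ => mem_univ _)
    have e : ∑ i : Fin n, (1 / n : ℝ) • (x + (s * (n * h i)) • EuclideanSpace.single i (1 : ℝ)) =
        x + s • h := by
      simp only [smul_add, Finset.sum_add_distrib, ← Finset.sum_smul, hsum1, one_smul]
      congr 1
      conv_rhs => rw [← hexp, Finset.smul_sum]
      refine Finset.sum_congr rfl fun i _ => ?_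
      rw [smul_smul, smul_smul]
      congr 1
      field_simp
    rw [e] at this
    simpa using this
  have h1 := hj 1
  have h2 := hj (-1)
  simp only [one_smul, neg_smul, one_mul, neg_mul, ← sub_eq_add_neg] at h1 h2
  have h3 : ∑ i : Fin n, (1 / n : ℝ) * (φ (x + (n * h i) • EuclideanSpace.single i (1 : ℝ)) +
      φ (x - (n * h i) • EuclideanSpace.single i (1 : ℝ)) - 2 * φ x) ≤
      ∑ i : Fin n, (1 / n : ℝ) * (L0 * (n * h i) ^ 2) :=
    Finset.sum_le_sum fun i _ => mul_le_mul_of_nonneg_left (hall _ i x) (by positivity)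
  have h4 : ∑ i : Fin n, (1 / n : ℝ) * (L0 * (n * h i) ^ 2) = n * L0 * ‖h‖ ^ 2 := by
    rw [EuclideanSpace.real_norm_sq_eq, Finset.mul_sum]
    refine Finset.sum_congr rfl fun i _ => ?_
    field_simp
  have h5 : ∑ i : Fin n, (1 / n : ℝ) * (φ (x + (n * h i) • EuclideanSpace.single i (1 : ℝ)) +
      φ (x - (n * h i) • EuclideanSpace.single i (1 : ℝ)) - 2 * φ x) =
      ∑ i : Fin n, (1 / n : ℝ) * φ (x + (n * h i) • EuclideanSpace.single i (1 : ℝ)) +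
      ∑ i : Fin n, (1 / n : ℝ) * φ (x - (n * h i) • EuclideanSpace.single i (1 : ℝ)) - 2 * φ x := by
    have : 2 * φ x = ∑ i : Fin n, (1 / n : ℝ) * (2 * φ x) := by
      rw [← Finset.sum_mul, hsum1, one_mul]
    rw [this, ← Finset.sum_add_distrib, ← Finset.sum_sub_distrib]
    exact Finset.sum_congr rfl fun i _ => by rw [← this]; ring
  linarith

theorem sub_bounds {n : ℕ} (φ : Euc n → ℝ) (L : ℝ)
    (hL : ∀ x h, φ (x + h) + φ (x - h) - 2 * φ x ≤ L * ‖h‖ ^ 2) (x p : Euc n) (hp : IsSub φ x p)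
    (h : Euc n) : φ (x + h) ≤ φ x + ⟪p, h⟫ + L * ‖h‖ ^ 2 := by
  have h1 := hL x h
  have h2 := hp (x - h)
  rw [sub_sub_cancel_left, inner_neg_right] at h2
  linarith

theorem grad_of_sub {n : ℕ} (φ : Euc n → ℝ) (L : ℝ)
    (hL : ∀ x h, φ (x + h) + φ (x - h) - 2 * φ x ≤ L * ‖h‖ ^ 2) (x p : Euc n) (hp : IsSub φ x p) :
    HasGradientAt φ p x := by
  rw [hasGradientAt_iff_isLittleO_nhds_zero]
  have h1 : (fun h : Euc n => φ (x + h) - φ x - ⟪p, h⟫) =O[𝓝 0] fun h => ‖h‖ ^ 2 := by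
    refine Asymptotics.IsBigO.of_bound |L| (Filter.Eventually.of_forall fun h => ?_)
    have h2 := sub_bounds φ L hL x p hp h
    have h3 := hp (x + h)
    rw [add_sub_cancel_left] at h3
    rw [Real.norm_eq_abs, Real.norm_eq_abs, abs_of_nonneg (sq_nonneg ‖h‖),
      abs_of_nonneg (by linarith)]
    have : L * ‖h‖ ^ 2 ≤ |L| * ‖h‖ ^ 2 := mul_le_mul_of_nonneg_right (le_abs_self _) (sq_nonneg _)
    linarith
  refine h1.trans_isLittleO ?_
  have : (fun h : Euc n => ‖h‖ ^ 2) =o[𝓝 0] fun h => h := by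
    have := Asymptotics.isLittleO_norm_pow_id (E' := Euc n) (n := 2) (by norm_num)
    exact this
  exact this

theorem sub_lip {n : ℕ} (φ : Euc n → ℝ) (L : ℝ) (hL0 : 0 ≤ L)
    (hL : ∀ x h, φ (x + h) + φ (x - h) - 2 * φ x ≤ L * ‖h‖ ^ 2) (x y p q : Euc n)
    (hp : IsSub φ x p) (hq : IsSub φ y q) : ‖p - q‖ ≤ 4 * L * ‖x - y‖ := by
  rcases (norm_nonneg (p - q)).eq_or_lt with h0 | h0
  · rw [← h0]; positivity
  set d := q - p with hd
  have hdn : ‖p - q‖ = ‖d‖ := norm_sub_rev _ _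
  rw [hdn] at h0 ⊢
  have key : ∀ z, ⟪d, z - y⟫ ≤ L * ‖z - x‖ ^ 2 := by
    intro z
    have h1 := hq z
    have h2 := sub_bounds φ L hL x p hp (z - x)
    rw [add_sub_cancel] at h2
    have h3 := hp y
    have h4 : ⟪p, z - x⟫ = ⟪p, z - y⟫ + ⟪p, y - x⟫ := by
      rw [← inner_add_right]; congr 1; abel
    rw [hd, inner_sub_left]
    linarith
  set r := ‖x - y‖ with hr
  have h5 := key (y + (r / ‖d‖) • d)
  rw [add_sub_cancel_left, inner_smul_right, real_inner_self_eq_norm_sq] at h5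
  have h6 : ‖y + (r / ‖d‖) • d - x‖ ≤ 2 * r := by
    have e : y + (r / ‖d‖) • d - x = (r / ‖d‖) • d - (x - y) := by abel
    rw [e]
    refine (norm_sub_le _ _).trans ?_
    rw [norm_smul, Real.norm_eq_abs, abs_of_nonneg (by positivity), div_mul_cancel₀ _ h0.ne', ← hr]
    linarith
  have h7 : r / ‖d‖ * ‖d‖ ^ 2 = r * ‖d‖ := by field_simp
  rw [h7] at h5
  have hr0 : 0 ≤ r := norm_nonneg _
  have h8 : L * ‖y + (r / ‖d‖) • d - x‖ ^ 2 ≤ L * (2 * r) ^ 2 :=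
    mul_le_mul_of_nonneg_left (pow_le_pow_left₀ (norm_nonneg _) h6 2) hL0
  rcases hr0.eq_or_lt with h9 | h9
  · have : x = y := sub_eq_zero.1 (norm_eq_zero.1 h9.symm)
    subst this
    have g1 := grad_of_sub φ L hL x p hp
    have g2 := grad_of_sub φ L hL x q hq
    have : d = 0 := by rw [hd, g1.unique g2, sub_self]
    rw [this, norm_zero] at h0
    exact absurd h0 (lt_irrefl _)
  · have : r * ‖d‖ ≤ r * (4 * L * r) := by nlinarith
    exact le_of_mul_le_mul_left this h9


def IsApprox {n : ℕ} (S E : Set (Euc n)) (g : Euc n → ℝ) (α c σ ε : ℝ) (φ : Euc n → ℝ) : Prop :=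
  (∀ q ∈ closure (ball (0 : Euc n) 1 ∩ S), ∃ z ∈ E, IsSub φ z q) ∧
  ∀ x, ∃ p ∈ closure (ball (0 : Euc n) 1 ∩ S), IsSub φ x p ∧ (0 < g p → x ∈ S) ∧
    ∑ i : Fin n, (φ (x + ε • EuclideanSpace.single i 1) +
      φ (x - ε • EuclideanSpace.single i 1) - 2 * φ x) ≤ ε ^ 2 * (c + σ - α * g p / (g x + σ))

theorem IsApprox.shift {n : ℕ} {S E : Set (Euc n)} {g : Euc n → ℝ} {α c σ ε : ℝ} {φ : Euc n → ℝ}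
    (h : IsApprox S E g α c σ ε φ) (k : ℝ) : IsApprox S E g α c σ ε (fun x => φ x - k) := by
  refine ⟨fun q hq => ?_, fun x => ?_⟩
  · obtain ⟨z, hz, hs⟩ := h.1 q hq
    exact ⟨z, hz, fun y => by have := hs y; simp only; linarith⟩
  · obtain ⟨p, hp, hs, hS, hb⟩ := h.2 x
    refine ⟨p, hp, fun y => by have := hs y; simp only; linarith, hS, ?_⟩
    refine le_trans (le_of_eq ?_) hb
    exact Finset.sum_congr rfl fun i _ => by ring

theorem IsApprox.coord {n : ℕ} {S E : Set (Euc n)} {g : Euc n → ℝ} (hW : ConeW S g)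
    {α c σ ε : ℝ} (hα : 0 < α) (hσ : 0 < σ)
    {φ : Euc n → ℝ} (h : IsApprox S E g α c σ ε φ) (x : Euc n) (i : Fin n) :
    φ (x + ε • EuclideanSpace.single i 1) +
      φ (x - ε • EuclideanSpace.single i 1) - 2 * φ x ≤ ε ^ 2 * (c + σ) := by
  obtain ⟨p, hp, hs, hS, hb⟩ := h.2 x
  have h0 : ∀ i : Fin n, 0 ≤ φ (x + ε • EuclideanSpace.single i 1) +
      φ (x - ε • EuclideanSpace.single i 1) - 2 * φ x := by
    intro i
    have h1 := hs (x + ε • EuclideanSpace.single i 1)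
    have h2 := hs (x - ε • EuclideanSpace.single i 1)
    rw [add_sub_cancel_left] at h1
    rw [sub_sub_cancel_left, inner_neg_right] at h2
    linarith
  have h1 := Finset.single_le_sum (f := fun i : Fin n => φ (x + ε • EuclideanSpace.single i 1) +
      φ (x - ε • EuclideanSpace.single i 1) - 2 * φ x) (fun i _ => h0 i) (Finset.mem_univ i)
  refine h1.trans (hb.trans ?_)
  refine mul_le_mul_of_nonneg_left ?_ (sq_nonneg _)
  have : 0 ≤ α * g p / (g x + σ) := by
    rcases (hW.nonneg (ConeW.K_cl hp)).eq_or_lt with h2 | h2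
    · rw [← h2]; simp
    · have := hW.pos x (hS h2)
      positivity
  linarith

/-- second order Taylor lower bound at a point of twice differentiability -/
theorem taylor_two {n : ℕ} (φ : Euc n → ℝ) (hφ : Differentiable ℝ φ) (x0 : Euc n)
    (hd : DifferentiableAt ℝ (fderiv ℝ φ) x0) (q : ℝ) (hq : 0 < q) :
    ∃ δ > 0, ∀ h : Euc n, ‖h‖ ≤ δ →
      φ x0 + fderiv ℝ φ x0 h + fderiv ℝ (fderiv ℝ φ) x0 h h / 2 - q * ‖h‖ ^ 2 ≤ φ (x0 + h) := by
  set A := fderiv ℝ (fderiv ℝ φ) x0 with hA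
  have h1 := hd.hasFDerivAt
  rw [hasFDerivAt_iff_isLittleO_nhds_zero] at h1
  have h2 := h1.bound hq
  rw [Metric.eventually_nhds_iff] at h2
  obtain ⟨δ, hδ, h3⟩ := h2
  refine ⟨δ / 2, by positivity, fun h hh => ?_⟩
  set f : ℝ → ℝ := fun t => φ (x0 + t • h) - t * fderiv ℝ φ x0 h - t ^ 2 / 2 * A h h with hf
  have hder : ∀ t : ℝ, HasDerivAt f (fderiv ℝ φ (x0 + t • h) h - fderiv ℝ φ x0 h - t * A h h) t := by
    intro t
    have e1 : HasDerivAt (fun t : ℝ => φ (x0 + t • h)) (fderiv ℝ φ (x0 + t • h) h) t := by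
      have e2 : HasDerivAt (fun t : ℝ => x0 + t • h) h t := by
        have := ((hasDerivAt_id t).smul_const h).const_add x0
        simpa using this
      exact (hφ _).hasFDerivAt.comp_hasDerivAt t e2
    have e3 : HasDerivAt (fun t : ℝ => t * fderiv ℝ φ x0 h) (fderiv ℝ φ x0 h) t := by
      simpa using (hasDerivAt_id t).mul_const (fderiv ℝ φ x0 h)
    have e4 : HasDerivAt (fun t : ℝ => t ^ 2 / 2 * A h h) (t * A h h) t := by
      have := ((hasDerivAt_pow 2 t).div_const 2).mul_const (A h h)
      refine this.congr_deriv ?_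
      norm_num
    exact (e1.sub e3).sub e4
  have hbound : ∀ t ∈ Ico (0 : ℝ) 1,
      ‖fderiv ℝ φ (x0 + t • h) h - fderiv ℝ φ x0 h - t * A h h‖ ≤ q * ‖h‖ ^ 2 := by
    intro t ht
    have hn : ‖t • h‖ ≤ ‖h‖ := by
      rw [norm_smul, Real.norm_eq_abs, abs_of_nonneg ht.1]
      nlinarith [norm_nonneg h, ht.2]
    have h4 := h3 (y := t • h) (by rw [dist_zero_right]; linarith)
    have h5 : fderiv ℝ φ (x0 + t • h) h - fderiv ℝ φ x0 h - t * A h h =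
        (fderiv ℝ φ (x0 + t • h) - fderiv ℝ φ x0 - A (t • h)) h := by
      simp
    rw [h5]
    refine (ContinuousLinearMap.le_opNorm _ _).trans ?_
    calc _ ≤ q * ‖t • h‖ * ‖h‖ := mul_le_mul_of_nonneg_right h4 (norm_nonneg _)
      _ ≤ q * ‖h‖ * ‖h‖ := by gcongr
      _ = q * ‖h‖ ^ 2 := by ring
  have h6 := norm_image_sub_le_of_norm_deriv_le_segment_01'
    (fun t _ => (hder t).hasDerivWithinAt) hbound
  have h7 := (abs_le.1 h6).1
  simp only [hf] at h7
  simp at h7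
  linarith

open Filter in
theorem lim_sub {n : ℕ} (U : Filter ℕ) [U.NeBot] (f : ℕ → Euc n → ℝ) (φ : Euc n → ℝ)
    (hlip : ∀ j x y, |f j x - f j y| ≤ ‖x - y‖) (hlim : ∀ x, Tendsto (fun j => f j x) U (𝓝 (φ x)))
    (x : ℕ → Euc n) (x0 : Euc n) (hx : Tendsto x U (𝓝 x0)) :
    Tendsto (fun j => f j (x j)) U (𝓝 (φ x0)) := by
  have h1 : Tendsto (fun j => f j (x j) - f j x0) U (𝓝 0) := by
    refine squeeze_zero_norm (a := fun j => ‖x j - x0‖) (fun j => hlip j _ _) ?_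
    have := (hx.sub_const x0).norm
    simpa using this
  have := h1.add (hlim x0)
  simpa using this

open Filter in
theorem limit_visc {n : ℕ} {S E : Set (Euc n)} {g : Euc n → ℝ} (hW : ConeW S g) (hES : E ⊆ S)
    (α c : ℝ) (U : Ultrafilter ℕ)
    (f : ℕ → Euc n → ℝ) (φ : Euc n → ℝ) (σ ε : ℕ → ℝ) (hεpos : ∀ j, 0 < ε j)
    (hσ : Tendsto σ U (𝓝 0)) (hε : Tendsto ε U (𝓝 0))
    (hf : ∀ j, IsApprox S E g α c (σ j) (ε j) (f j))
    (hlim : ∀ x, Tendsto (fun j => f j x) U (𝓝 (φ x))) (L : ℝ)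
    (hL : ∀ x h, φ (x + h) + φ (x - h) - 2 * φ x ≤ L * ‖h‖ ^ 2)
    (hlip : ∀ j x y, |f j x - f j y| ≤ ‖x - y‖) (hdiff : Differentiable ℝ φ)
    (x0 : Euc n) (hx0 : x0 ∈ E) (hd : DifferentiableAt ℝ (fderiv ℝ φ) x0) :
    lapl φ x0 + α * (g (gradient φ x0) / g x0) ≤ c := by
  have hx0S := hES hx0
  have hg0 := hW.pos x0 hx0S
  set A := fderiv ℝ (fderiv ℝ φ) x0 with hA
  suffices hq : ∀ q > 0, lapl φ x0 - 4 * n * q ≤ c - α * (g (gradient φ x0) / g x0) by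
    have l : Tendsto (fun q : ℝ => lapl φ x0 - 4 * n * q) (𝓝[>] 0) (𝓝 (lapl φ x0)) := by
      have : Tendsto (fun q : ℝ => lapl φ x0 - 4 * n * q) (𝓝 0) (𝓝 (lapl φ x0 - 4 * n * 0)) := by
        apply Continuous.tendsto; fun_prop
      rw [mul_zero, sub_zero] at this
      exact this.mono_left nhdsWithin_le_nhds
    have := le_of_tendsto l (by filter_upwards [self_mem_nhdsWithin] with q hq' using hq q hq')
    linarith
  intro q hq
  obtain ⟨δ, hδ, ht⟩ := taylor_two φ hdiff x0 hd q hq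
  set P : Euc n → ℝ := fun x => φ x0 + fderiv ℝ φ x0 (x - x0) + A (x - x0) (x - x0) / 2 -
    2 * q * ‖x - x0‖ ^ 2 with hP
  have hPc : Continuous P := by
    have : Continuous fun x => A (x - x0) (x - x0) :=
      (A.continuous.comp (continuous_id.sub continuous_const)).clm_apply
        (continuous_id.sub continuous_const)
    fun_prop
  have hP0 : P x0 = φ x0 := by simp [hP]
  have hφP : ∀ x ∈ closedBall x0 δ, P x + q * ‖x - x0‖ ^ 2 ≤ φ x := by
    intro x hx
    rw [mem_closedBall, dist_eq_norm] at hx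
    have := ht (x - x0) hx
    rw [add_sub_cancel] at this
    simp only [hP]
    linarith
  have hfc : ∀ j, Continuous (f j) := fun j =>
    (LipschitzWith.of_dist_le_mul (K := 1) fun x y => by
      rw [Real.dist_eq, dist_eq_norm]; simpa using hlip j x y).continuous
  have hcomp : IsCompact (closedBall x0 δ) := isCompact_closedBall _ _
  choose x hxm hxmin using fun j => hcomp.exists_isMinOn (nonempty_closedBall.2 hδ.le)
    ((hfc j).sub hPc).continuousOn
  -- the minimizers converge to x0
  have hxlim : Tendsto x U (𝓝 x0) := by
    obtain ⟨xs, hxs, hle⟩ := hcomp.ultrafilter_le_nhds (U.map x)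
      (by rw [le_principal_iff]; exact Filter.mem_map.2 (Filter.univ_mem' hxm))
    have hle' : Tendsto x U (𝓝 xs) := hle
    have l1 := (lim_sub (U : Filter ℕ) f φ hlip hlim x xs hle').sub ((hPc.tendsto xs).comp hle')
    have l2 := (hlim x0).sub (tendsto_const_nhds (x := P x0))
    have h3 := le_of_tendsto_of_tendsto l1 l2 (Eventually.of_forall fun j =>
      hxmin j (mem_closedBall_self hδ.le))
    rw [hP0, sub_self] at h3
    have h4 := hφP xs hxs
    have h5 : q * ‖xs - x0‖ ^ 2 ≤ 0 := by linarith
    have h6 : ‖xs - x0‖ = 0 := by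
      by_contra hne
      have : 0 < ‖xs - x0‖ := lt_of_le_of_ne (norm_nonneg _) (Ne.symm hne)
      have : 0 < q * ‖xs - x0‖ ^ 2 := by positivity
      linarith
    rwa [sub_eq_zero.1 (norm_eq_zero.1 h6)] at hle'
  choose p hpK hps hpS hpb using fun j => (hf j).2 (x j)
  obtain ⟨ps, hps', hple⟩ := (ConeW.K_compact (S := S)).ultrafilter_le_nhds (U.map p)
    (by rw [le_principal_iff]; exact Filter.mem_map.2 (Filter.univ_mem' hpK))
  have hplim : Tendsto p U (𝓝 ps) := hple
  have hsub : IsSub φ x0 ps := by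
    intro y
    have l1 := (lim_sub (U : Filter ℕ) f φ hlip hlim x x0 hxlim).add
      (hplim.inner (tendsto_const_nhds.sub hxlim : Tendsto (fun j => y - x j) U (𝓝 (y - x0))))
    exact le_of_tendsto_of_tendsto l1 (hlim y) (Eventually.of_forall fun j => hps j y)
  have hgrad : gradient φ x0 = ps := (grad_of_sub φ L hL x0 ps hsub).gradient
  rw [hgrad]
  have hgp : Tendsto (fun j => g (p j)) U (𝓝 (g ps)) := by
    have := (hW.cont ps (ConeW.K_cl hps')).tendsto
    refine this.comp ?_
    rw [tendsto_nhdsWithin_iff]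
    exact ⟨hplim, Eventually.of_forall fun j => ConeW.K_cl (hpK j)⟩
  have hgx : Tendsto (fun j => g (x j)) U (𝓝 (g x0)) := by
    have : ContinuousAt g x0 := hW.cont.continuousAt
      (Filter.mem_of_superset (hW.op.mem_nhds hx0S) subset_closure)
    exact this.tendsto.comp hxlim
  have hR : Tendsto (fun j => c + σ j - α * g (p j) / (g (x j) + σ j)) U
      (𝓝 (c + 0 - α * g ps / (g x0 + 0))) := by
    refine (tendsto_const_nhds.add hσ).sub ((tendsto_const_nhds.mul hgp).div (hgx.add hσ) ?_)
    rw [add_zero]; exact hg0.ne'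
  rw [add_zero, add_zero, mul_div_assoc] at hR
  refine ge_of_tendsto hR ?_
  have hin : ∀ᶠ j in (U : Filter ℕ), ‖x j - x0‖ + ε j < δ := by
    have : Tendsto (fun j => ‖x j - x0‖ + ε j) U (𝓝 0) := by
      have h1 := (hxlim.sub_const x0).norm
      rw [sub_self, norm_zero] at h1
      simpa using h1.add hε
    exact this.eventually (gt_mem_nhds hδ)
  filter_upwards [hin] with j hj
  have hεj := hεpos j
  have hns : ∀ i : Fin n, ‖ε j • EuclideanSpace.single i (1 : ℝ)‖ = ε j := fun i => by
    rw [norm_smul, EuclideanSpace.norm_single, norm_one, mul_one, Real.norm_eq_abs, abs_of_pos hεj]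
  have hsum : ε j ^ 2 * (lapl φ x0 - 4 * n * q) ≤
      ∑ i : Fin n, (f j (x j + ε j • EuclideanSpace.single i 1) +
      f j (x j - ε j • EuclideanSpace.single i 1) - 2 * f j (x j)) := by
    have e0 : ε j ^ 2 * (lapl φ x0 - 4 * n * q) = ∑ i : Fin n, ε j ^ 2 *
        (A (EuclideanSpace.single i 1) (EuclideanSpace.single i 1) - 4 * q) := by
      rw [← Finset.mul_sum, Finset.sum_sub_distrib, lapl]
      simp
      left; ring
    rw [e0]
    refine Finset.sum_le_sum fun i _ => ?_
    set k := ε j • EuclideanSpace.single i (1 : ℝ) with hk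
    have m1 : x j + k ∈ closedBall x0 δ := by
      rw [mem_closedBall, dist_eq_norm, add_sub_right_comm]
      refine (norm_add_le _ _).trans ?_
      rw [hns]; exact hj.le
    have m2 : x j - k ∈ closedBall x0 δ := by
      rw [mem_closedBall, dist_eq_norm, sub_right_comm]
      refine (norm_sub_le _ _).trans ?_
      rw [hns]; exact hj.le
    have i1 : f j (x j) - P (x j) ≤ f j (x j + k) - P (x j + k) := hxmin j m1
    have i2 : f j (x j) - P (x j) ≤ f j (x j - k) - P (x j - k) := hxmin j m2
    have hPk : P (x j + k) + P (x j - k) - 2 * P (x j) = A k k - 4 * q * ‖k‖ ^ 2 := by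
      set v := x j - x0 with hv
      have a1 : x j + k - x0 = v + k := by rw [hv]; abel
      have a2 : x j - k - x0 = v - k := by rw [hv]; abel
      simp only [hP, a1, a2, ← hv]
      have n1 : ‖v + k‖ ^ 2 + ‖v - k‖ ^ 2 = 2 * ‖v‖ ^ 2 + 2 * ‖k‖ ^ 2 := by
        rw [norm_add_sq_real v k, norm_sub_sq_real v k]; ring
      simp only [map_add, map_sub, ContinuousLinearMap.add_apply, ContinuousLinearMap.sub_apply]
      linear_combination (-2 * q) * n1
    have hAk : A k k = ε j ^ 2 * A (EuclideanSpace.single i 1) (EuclideanSpace.single i 1) := by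
      rw [hk]; simp only [map_smul, ContinuousLinearMap.smul_apply, smul_eq_mul]; ring
    rw [hns, hAk] at hPk
    linarith
  exact le_of_mul_le_mul_left (hsum.trans (hpb j)) (by positivity)


open Filter in
theorem limit_main {n : ℕ} (hn : 1 ≤ n) {S E : Set (Euc n)} {g : Euc n → ℝ} (hW : ConeW S g)
    (hES : E ⊆ S) (hEo : IsOpen E) (hEb : Bornology.IsBounded E) (hE0 : volume (frontier E) = 0)
    (α c : ℝ) (hα : 0 < α) (hc : 0 ≤ c)
    (hseq : ∀ j : ℕ, ∃ m : ℕ, j ≤ m ∧ ∃ φ : Euc n → ℝ,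
      IsApprox S E g α c (1 / ((j : ℝ) + 1)) ((1 / 2 : ℝ) ^ m) φ) :
    ∃ φ : Euc n → ℝ, ConvexOn ℝ univ φ ∧
      ContDiff ℝ 1 φ ∧ (∃ L : NNReal, LipschitzWith L (fun x => gradient φ x)) ∧
      (fun x => gradient φ x) '' univ ⊆ closure (ball (0 : Euc n) 1 ∩ S) ∧
      volume ((ball (0 : Euc n) 1 ∩ S) \ ((fun x => gradient φ x) '' E)) = 0 ∧
      ∀ᵐ x ∂(volume.restrict E),
        DifferentiableAt ℝ (fderiv ℝ φ) x ∧
        lapl φ x + α * (g (gradient φ x) / g x) ≤ c := by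
  choose m hm f0 hf0 using hseq
  set U : Ultrafilter ℕ := hyperfilter ℕ with hU
  have hUle : (U : Filter ℕ) ≤ atTop := Nat.hyperfilter_le_atTop
  set f : ℕ → Euc n → ℝ := fun j x => f0 j x - f0 j 0 with hfdef
  have hf : ∀ j : ℕ, IsApprox S E g α c (1 / ((j : ℝ) + 1)) ((1 / 2 : ℝ) ^ m j) (f j) :=
    fun j => (hf0 j).shift _
  have hlip : ∀ j x y, |f j x - f j y| ≤ ‖x - y‖ := fun j => lip_of_sub (f j) fun x => by
    obtain ⟨p, hp, hs, -⟩ := (hf j).2 x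
    exact ⟨p, ConeW.K_norm hp, hs⟩
  have hbd : ∀ j x, f j x ∈ Icc (-‖x‖) ‖x‖ := fun j x => by
    have := hlip j x 0
    have h0 : f j 0 = 0 := by simp [hfdef]
    rw [h0, sub_zero, sub_zero] at this
    exact abs_le.1 this
  have hex : ∀ x, ∃ a, Tendsto (fun j => f j x) U (𝓝 a) := fun x => by
    obtain ⟨a, -, ha⟩ := (isCompact_Icc (a := -‖x‖) (b := ‖x‖)).ultrafilter_le_nhds
      (U.map fun j => f j x)
      (by rw [le_principal_iff]; exact Filter.mem_map.2 (Filter.univ_mem' fun j => hbd j x))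
    exact ⟨a, ha⟩
  choose φ hlim using hex
  -- subgradients of the limit
  have hlimsub : ∀ (x : ℕ → Euc n) (x0 : Euc n) (p : ℕ → Euc n) (p0 : Euc n),
      Tendsto x U (𝓝 x0) → Tendsto p U (𝓝 p0) → (∀ j, IsSub (f j) (x j) (p j)) → IsSub φ x0 p0 := by
    intro x x0 p p0 hx hp hs y
    have l1 := (lim_sub (U : Filter ℕ) f φ hlip hlim x x0 hx).add
      (hp.inner (tendsto_const_nhds.sub hx : Tendsto (fun j => y - x j) U (𝓝 (y - x0))))
    exact le_of_tendsto_of_tendsto l1 (hlim y) (Eventually.of_forall fun j => hs j y)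
  have hsub : ∀ x, ∃ p ∈ closure (ball (0 : Euc n) 1 ∩ S), IsSub φ x p := by
    intro x
    choose p hpK hps _ using fun j => (hf j).2 x
    obtain ⟨ps, hps', hple⟩ := (ConeW.K_compact (S := S)).ultrafilter_le_nhds (U.map p)
      (by rw [le_principal_iff]; exact Filter.mem_map.2 (Filter.univ_mem' hpK))
    exact ⟨ps, hps', hlimsub (fun _ => x) x p ps tendsto_const_nhds hple hps⟩
  have hcov : ∀ q ∈ closure (ball (0 : Euc n) 1 ∩ S), ∃ z ∈ closure E, IsSub φ z q := by
    intro q hq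
    choose z hz hzs using fun j => (hf j).1 q hq
    obtain ⟨zs, hzs', hzle⟩ := hEb.isCompact_closure.ultrafilter_le_nhds (U.map z)
      (by rw [le_principal_iff]; exact Filter.mem_map.2 (Filter.univ_mem' fun j => subset_closure (hz j)))
    exact ⟨zs, hzs', hlimsub z zs (fun _ => q) q hzle tendsto_const_nhds hzs⟩
  have hs1 : ∀ x, ∃ p, ‖p‖ ≤ 1 ∧ IsSub φ x p := fun x => by
    obtain ⟨p, hp, hs⟩ := hsub x
    exact ⟨p, ConeW.K_norm hp, hs⟩
  obtain ⟨L, hL0, hL⟩ := sd_all hn φ hs1 (c + 1) (by linarith) (by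
    intro l i x
    have l1 := ((hlim (x + ((1 / 2 : ℝ) ^ l) • EuclideanSpace.single i 1)).add
      (hlim (x - ((1 / 2 : ℝ) ^ l) • EuclideanSpace.single i 1))).sub ((hlim x).const_mul 2)
    refine le_of_tendsto l1 ?_
    filter_upwards [hUle (eventually_ge_atTop l)] with j hj
    have hj' : l ≤ m j := le_trans hj (hm j)
    have hσ : (0 : ℝ) < 1 / ((j : ℝ) + 1) := by positivity
    have hσ1 : (1 : ℝ) / ((j : ℝ) + 1) ≤ 1 := by
      rw [div_le_one (by positivity)]; linarith [Nat.cast_nonneg (α := ℝ) j]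
    have h1 := sd_double (f j) (((1 / 2 : ℝ) ^ m j) • EuclideanSpace.single i 1) _
      (fun x => (hf j).coord hW hα hσ x i) (m j - l) x
    have e1 : (2 : ℝ) ^ (m j - l) * (1 / 2 : ℝ) ^ m j = (1 / 2 : ℝ) ^ l := by
      conv_lhs => rw [← Nat.sub_add_cancel hj', pow_add, Nat.add_sub_cancel]
      rw [← mul_assoc, ← mul_pow]; norm_num
    rw [smul_smul, e1] at h1
    refine h1.trans ?_
    have e2 : (4 : ℝ) ^ (m j - l) * (((1 / 2 : ℝ) ^ m j) ^ 2 * (c + 1 / ((j : ℝ) + 1))) =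
        ((1 / 2 : ℝ) ^ l) ^ 2 * (c + 1 / ((j : ℝ) + 1)) := by
      have e3 : (4 : ℝ) ^ (m j - l) = ((2 : ℝ) ^ (m j - l)) ^ 2 := by
        rw [← pow_mul, mul_comm, pow_mul]; norm_num
      rw [← e1, e3]; ring
    rw [e2]
    gcongr)
  have hgr : ∀ x p, IsSub φ x p → gradient φ x = p := fun x p hp =>
    (grad_of_sub φ L hL x p hp).gradient
  have hgs : ∀ x, IsSub φ x (gradient φ x) := fun x => by
    obtain ⟨p, hp, hs⟩ := hsub x
    rwa [hgr x p hs]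
  have hdiff : Differentiable ℝ φ := fun x => (grad_of_sub φ L hL x _ (hgs x)).differentiableAt
  have hlipg : LipschitzWith (4 * L).toNNReal (fun x => gradient φ x) := by
    refine LipschitzWith.of_dist_le_mul fun x y => ?_
    rw [dist_eq_norm, dist_eq_norm, Real.coe_toNNReal _ (by positivity)]
    exact sub_lip φ L hL0 hL x y _ _ (hgs x) (hgs y)
  have hfd : fderiv ℝ φ = fun x => InnerProductSpace.toDual ℝ (Euc n) (gradient φ x) := by
    funext x
    exact ((hdiff x).hasGradientAt.hasFDerivAt).fderiv
  have hlipf : LipschitzWith (4 * L).toNNReal (fderiv ℝ φ) := by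
    rw [hfd]
    have := (InnerProductSpace.toDual ℝ (Euc n)).lipschitz.comp hlipg
    rwa [one_mul] at this
  refine ⟨φ, convex_of_sub φ fun x => ⟨_, hgs x⟩, ?_, ⟨_, hlipg⟩, ?_, ?_, ?_⟩
  · rw [contDiff_one_iff_fderiv]
    exact ⟨hdiff, hlipf.continuous⟩
  · rintro _ ⟨x, -, rfl⟩
    obtain ⟨p, hp, hs⟩ := hsub x
    simp only
    rwa [hgr x p hs]
  · have hnull : volume ((fun x => gradient φ x) '' frontier E) = 0 := by
      have e1 := (Measure.isAddLeftInvariant_eq_smul (volume : Measure (Euc n)) (μH[(Module.finrank ℝ (Euc n) : ℝ)]))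
      have e2 := (Measure.isAddLeftInvariant_eq_smul (μH[(Module.finrank ℝ (Euc n) : ℝ)]) (volume : Measure (Euc n)))
      have h1 : μH[(Module.finrank ℝ (Euc n) : ℝ)] (frontier E) = 0 := by
        rw [e2, Measure.smul_apply, hE0, smul_zero]
      have h2 := hlipg.hausdorffMeasure_image_le
        (Nat.cast_nonneg (Module.finrank ℝ (Euc n))) (frontier E)
      rw [h1, mul_zero] at h2
      rw [e1, Measure.smul_apply, le_antisymm h2 bot_le, smul_zero]
    refine measure_mono_null ?_ hnull
    rintro q ⟨hq, hqn⟩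
    obtain ⟨z, hz, hs⟩ := hcov q (subset_closure hq)
    have hzq := hgr z q hs
    refine ⟨z, ?_, hzq⟩
    rw [frontier, hEo.interior_eq]
    exact ⟨hz, fun hzE => hqn ⟨z, hzE, hzq⟩⟩
  · have h1 : ∀ᵐ x ∂(volume : Measure (Euc n)), DifferentiableAt ℝ (fderiv ℝ φ) x :=
      hlipf.ae_differentiableAt
    filter_upwards [ae_restrict_of_ae h1, ae_restrict_mem hEo.measurableSet] with x hx hxE
    refine ⟨hx, ?_⟩
    refine limit_visc hW hES α c U f φ (fun j => 1 / ((j : ℝ) + 1)) (fun j => (1 / 2 : ℝ) ^ m j)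
      (fun j => by positivity) ?_ ?_ hf hlim L hL hlip hdiff x hxE hx
    · exact tendsto_one_div_add_atTop_nhds_zero_nat.mono_left hUle
    · have : Tendsto m atTop atTop := tendsto_atTop_mono hm tendsto_id
      exact ((tendsto_pow_atTop_nhds_zero_of_lt_one (by norm_num) (by norm_num)).comp this).mono_left
        hUle


/-- density of the approximate perimeter measure -/
def dens {n : ℕ} (f : Euc n → ℝ) (δ : ℝ) (x : Euc n) : ℝ :=
  Real.exp (f x / δ) * ‖gradient f x‖ / δ

def bproj {m : ℕ} (b : OrthonormalBasis (Fin (m + 1)) ℝ (Euc (m + 1))) (x : Euc (m + 1)) :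
    Fin m → ℝ := fun i => ⟪b i.succ, x⟫

def bmk {m : ℕ} (b : OrthonormalBasis (Fin (m + 1)) ℝ (Euc (m + 1))) (z : ℝ × (Fin m → ℝ)) :
    Euc (m + 1) := b.repr.symm (WithLp.toLp 2 (Fin.cons z.1 z.2))

theorem bmk_mp {m : ℕ} (b : OrthonormalBasis (Fin (m + 1)) ℝ (Euc (m + 1))) :
    MeasurePreserving (bmk b) volume volume := by
  have h1 := (volume_preserving_piFinSuccAbove (fun _ : Fin (m + 1) => ℝ) 0).symm
  have h2 := PiLp.volume_preserving_toLp (Fin (m + 1))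
  have h3 := b.measurePreserving_repr_symm
  have := h3.comp (h2.comp h1)
  have e : bmk b = ⇑b.repr.symm ∘ WithLp.toLp 2 ∘
      ⇑(MeasurableEquiv.piFinSuccAbove (fun _ : Fin (m + 1) => ℝ) 0).symm := by
    funext z
    simp only [bmk, Function.comp]
    congr 2
    change _ = Fin.insertNth (α := fun _ : Fin (m + 1) => ℝ) 0 z.1 z.2
    rw [Fin.insertNth_zero']
  rw [e]
  exact this

theorem bmk_proj {m : ℕ} (b : OrthonormalBasis (Fin (m + 1)) ℝ (Euc (m + 1)))
    (z : ℝ × (Fin m → ℝ)) : bproj b (bmk b z) = z.2 := by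
  funext i
  rw [bproj, ← OrthonormalBasis.repr_apply_apply, bmk]
  simp

theorem bmk_add {m : ℕ} (b : OrthonormalBasis (Fin (m + 1)) ℝ (Euc (m + 1)))
    (s : ℝ) (y : Fin m → ℝ) : bmk b (s, y) = s • b 0 + bmk b (0, y) := by
  rw [bmk, bmk]
  apply b.repr.injective
  rw [map_add, map_smul]
  ext i
  refine Fin.cases ?_ (fun i => ?_) i
  · simp
  · simp

theorem bproj_cont {m : ℕ} (b : OrthonormalBasis (Fin (m + 1)) ℝ (Euc (m + 1))) :
    Continuous (bproj b) := by
  unfold bproj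
  fun_prop

theorem bproj_lip {m : ℕ} (b : OrthonormalBasis (Fin (m + 1)) ℝ (Euc (m + 1))) :
    LipschitzWith 1 (bproj b) := by
  refine LipschitzWith.of_dist_le_mul fun x y => ?_
  rw [NNReal.coe_one, one_mul, dist_pi_le_iff dist_nonneg]
  intro i
  rw [bproj, bproj, Real.dist_eq, ← inner_sub_right, dist_eq_norm]
  refine (abs_real_inner_le_norm _ _).trans ?_
  rw [b.orthonormal.1, one_mul]

theorem bproj_haus {m : ℕ} (b : OrthonormalBasis (Fin (m + 1)) ℝ (Euc (m + 1)))
    (Q : Set (Euc (m + 1))) : volume (bproj b '' Q) ≤ μH[(m : ℝ)] Q := by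
  have h1 := (bproj_lip b).hausdorffMeasure_image_le (Nat.cast_nonneg m) Q
  have h2 : (μH[((Fintype.card (Fin m) : ℕ) : ℝ)] : Measure (Fin m → ℝ)) = volume :=
    hausdorffMeasure_pi_real
  rw [Fintype.card_fin] at h2
  rw [h2] at h1
  simpa using h1

theorem exp_int (δ : ℝ) (hδ : 0 < δ) :
    ∫⁻ u in Iio (0 : ℝ), ENNReal.ofReal (Real.exp (u / δ) / δ) ≤ 1 := by
  have h1 : IntegrableOn (fun u => Real.exp (δ⁻¹ * u)) (Iic 0) :=
    integrableOn_exp_mul_Iic (inv_pos.2 hδ) 0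
  have h2 := integral_exp_mul_Iic (inv_pos.2 hδ) 0
  have h3 : ∫⁻ u in Iic (0 : ℝ), ENNReal.ofReal (Real.exp (u / δ) / δ) = 1 := by
    have e : ∀ u : ℝ, Real.exp (u / δ) / δ = δ⁻¹ * Real.exp (δ⁻¹ * u) := fun u => by
      rw [div_eq_inv_mul, div_eq_inv_mul u]
    simp only [e]
    rw [← ofReal_integral_eq_lintegral_ofReal (h1.const_mul _)
      (Filter.Eventually.of_forall fun u => by positivity), integral_const_mul, h2]
    simp
    rw [inv_mul_cancel₀ hδ.ne']
  rw [← h3]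
  exact lintegral_mono_set Iio_subset_Iic_self

theorem dens_cont {n : ℕ} (f : Euc n → ℝ) (hf : ContDiff ℝ 1 f) (δ : ℝ) :
    Continuous (dens f δ) := by
  have h1 : Continuous (gradient f) := by
    unfold gradient
    exact (LinearIsometryEquiv.continuous _).comp (hf.continuous_fderiv (by norm_num))
  unfold dens
  have := hf.continuous
  fun_prop

theorem inner_grad {n : ℕ} (f : Euc n → ℝ) (x v : Euc n) :
    ⟪v, gradient f x⟫ = fderiv ℝ f x v := by
  rw [real_inner_comm, gradient]
  simp

theorem nu_le {m : ℕ} (f : Euc (m + 1) → ℝ) (hf : ContDiff ℝ 1 f)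
    (b : OrthonormalBasis (Fin (m + 1)) ℝ (Euc (m + 1))) (x0 : Euc (m + 1)) (r τ δ : ℝ)
    (hτ : 0 ≤ τ) (hδ : 0 < δ)
    (hb : ∀ x ∈ ball x0 r, ‖gradient f x‖ ≤ (1 + τ) * fderiv ℝ f x (b 0) ∧ 0 < fderiv ℝ f x (b 0))
    (Q : Set (Euc (m + 1))) (hQ : IsCompact Q) (hQb : Q ⊆ ball x0 r) :
    ∫⁻ x in Q ∩ {x | f x < 0}, ENNReal.ofReal (dens f δ x) ≤
      ENNReal.ofReal (1 + τ) * volume (bproj b '' Q) := by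
  have hEm : MeasurableSet {x | f x < 0} := (isOpen_lt hf.continuous continuous_const).measurableSet
  have hm : MeasurableSet (Q ∩ {x | f x < 0}) := hQ.measurableSet.inter hEm
  rw [← lintegral_indicator hm]
  set F : Euc (m + 1) → ℝ≥0∞ :=
    (Q ∩ {x | f x < 0}).indicator (fun x => ENNReal.ofReal (dens f δ x)) with hF
  have hFm : Measurable F :=
    ((dens_cont f hf δ).measurable.ennreal_ofReal).indicator hm
  rw [← (bmk_mp b).lintegral_comp hFm, Measure.volume_eq_prod]
  rw [lintegral_prod_symm (fun z => F (bmk b z)) (hFm.comp (bmk_mp b).measurable).aemeasurable]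
  have hpm : MeasurableSet (bproj b '' Q) := (hQ.image (bproj_cont b)).measurableSet
  have hin : ∀ y : Fin m → ℝ, ∫⁻ s, F (bmk b (s, y)) ≤
      (bproj b '' Q).indicator (fun _ => ENNReal.ofReal (1 + τ)) y := by
    intro y
    by_cases hy : y ∈ bproj b '' Q
    · rw [indicator_of_mem hy]
      set ℓ : ℝ → Euc (m + 1) := fun s => bmk b (s, y) with hℓ
      have hℓd : ∀ s, HasDerivAt ℓ (b 0) s := by
        intro s
        have e : ℓ = fun s : ℝ => s • b 0 + bmk b (0, y) := by
          funext s; exact bmk_add b s y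
        rw [e]
        have := ((hasDerivAt_id s).smul_const (b 0)).add_const (bmk b (0, y))
        simpa using this
      have hℓc : Continuous ℓ := continuous_iff_continuousAt.2 fun s => (hℓd s).continuousAt
      set G : ℝ → ℝ := fun s => f (ℓ s) with hG
      have hGd : ∀ s, HasDerivAt G (fderiv ℝ f (ℓ s) (b 0)) s := fun s =>
        ((hf.differentiable (by norm_num)) _).hasFDerivAt.comp_hasDerivAt s (hℓd s)
      set J : Set ℝ := ℓ ⁻¹' (ball x0 r) with hJ
      have hJc : Convex ℝ J := by
        intro s hs t ht a c ha hc hac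
        have : ℓ (a • s + c • t) = a • ℓ s + c • ℓ t := by
          simp only [hℓ]
          rw [bmk_add b (a • s + c • t), bmk_add b s, bmk_add b t]
          have : bmk b (0, y) = a • bmk b (0, y) + c • bmk b (0, y) := by
            rw [← add_smul, hac, one_smul]
          nth_rewrite 1 [this]
          simp only [smul_eq_mul]
          module
        change ℓ (a • s + c • t) ∈ ball x0 r
        rw [this]
        exact convex_ball x0 r hs ht ha hc hac
      have hJo : IsOpen J := isOpen_ball.preimage hℓc
      have hmono : StrictMonoOn G J := by
        refine strictMonoOn_of_deriv_pos hJc (fun s _ => (hGd s).continuousAt.continuousWithinAt) ?_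
        intro s hs
        rw [(hGd s).deriv]
        exact (hb _ (show s ∈ J from interior_subset hs)).2
      set I : Set ℝ := ℓ ⁻¹' (Q ∩ {x | f x < 0}) with hI
      have hIm : MeasurableSet I := hm.preimage hℓc.measurable
      have hIJ : I ⊆ J := fun s hs => hQb hs.1
      have hinj : InjOn G I := hmono.injOn.mono hIJ
      have hcv := lintegral_image_eq_lintegral_abs_deriv_mul hIm
        (fun s _ => (hGd s).hasDerivWithinAt) hinj
        (fun u => ENNReal.ofReal (Real.exp (u / δ) / δ))
      have h1 : ∫⁻ s, F (ℓ s) = ∫⁻ s in I, ENNReal.ofReal (dens f δ (ℓ s)) := by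
        rw [← lintegral_indicator hIm]
        rfl
      rw [h1]
      calc ∫⁻ s in I, ENNReal.ofReal (dens f δ (ℓ s))
          ≤ ∫⁻ s in I, ENNReal.ofReal (1 + τ) * (ENNReal.ofReal |fderiv ℝ f (ℓ s) (b 0)| *
              ENNReal.ofReal (Real.exp (G s / δ) / δ)) := by
            refine setLIntegral_mono' hIm fun s hs => ?_
            obtain ⟨h2, h3⟩ := hb _ (hIJ hs)
            rw [← ENNReal.ofReal_mul (abs_nonneg _), ← ENNReal.ofReal_mul (by positivity)]
            apply ENNReal.ofReal_le_ofReal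
            rw [abs_of_pos h3, dens]
            calc Real.exp (f (ℓ s) / δ) * ‖gradient f (ℓ s)‖ / δ
                = ‖gradient f (ℓ s)‖ * (Real.exp (f (ℓ s) / δ) / δ) := by ring
              _ ≤ ((1 + τ) * fderiv ℝ f (ℓ s) (b 0)) * (Real.exp (f (ℓ s) / δ) / δ) := by
                gcongr
              _ = _ := by simp only [hG]; ring
        _ = ENNReal.ofReal (1 + τ) * ∫⁻ u in G '' I, ENNReal.ofReal (Real.exp (u / δ) / δ) := by
            rw [lintegral_const_mul' _ _ ENNReal.ofReal_ne_top, hcv]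
        _ ≤ ENNReal.ofReal (1 + τ) * 1 := by
            gcongr
            refine (lintegral_mono_set ?_).trans (exp_int δ hδ)
            rintro _ ⟨s, hs, rfl⟩
            exact hs.2
        _ = _ := mul_one _
    · rw [indicator_of_notMem hy]
      have : ∀ s, F (bmk b (s, y)) = 0 := by
        intro s
        rw [hF, indicator_of_notMem]
        intro h
        exact hy ⟨_, h.1, bmk_proj b (s, y)⟩
      simp [this]
  calc _ ≤ ∫⁻ y, (bproj b '' Q).indicator (fun _ => ENNReal.ofReal (1 + τ)) y := lintegral_mono hin
    _ = _ := by rw [lintegral_indicator hpm]; simp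


theorem loc_basis {m : ℕ} (f : Euc (m + 1) → ℝ) (hf : ContDiff ℝ 1 f) (x0 : Euc (m + 1))
    (h0 : fderiv ℝ f x0 ≠ 0) (τ : ℝ) (hτ : 0 < τ) (hτ1 : τ ≤ 1) :
    ∃ b : OrthonormalBasis (Fin (m + 1)) ℝ (Euc (m + 1)), ∃ r > 0,
      (∀ x ∈ ball x0 r, ‖gradient f x‖ ≤ (1 + τ) * fderiv ℝ f x (b 0) ∧ 0 < fderiv ℝ f x (b 0)) ∧
      ∀ x ∈ ball x0 r, ∀ y ∈ ball x0 r, f x = f y → |⟪b 0, y - x⟫| ≤ ‖y - x‖ / 2 := by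
  have hng : ∀ x, ‖gradient f x‖ = ‖fderiv ℝ f x‖ := fun x => by
    rw [gradient]; simp
  set G := ‖gradient f x0‖ with hG
  have hGpos : 0 < G := by
    rw [hG, hng]; exact norm_pos_iff.2 h0
  obtain ⟨b, hb⟩ := Orthonormal.exists_orthonormalBasis_extension_of_card_eq (𝕜 := ℝ)
    (E := Euc (m + 1)) (ι := Fin (m + 1)) (by simp)
    (v := fun _ => G⁻¹ • gradient f x0) (s := {0}) (by
      rw [orthonormal_iff_ite]
      rintro ⟨i, hi⟩ ⟨j, hj⟩
      rw [mem_singleton_iff] at hi hj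
      subst hi; subst hj
      simp only [Set.domRestrict, if_true]
      rw [real_inner_self_eq_norm_sq, norm_smul, norm_inv, Real.norm_eq_abs, abs_of_pos hGpos, ← hG,
        inv_mul_cancel₀ hGpos.ne', one_pow])
  have hb0 : gradient f x0 = G • b 0 := by
    rw [hb 0 rfl, smul_smul, mul_inv_cancel₀ hGpos.ne', one_smul]
  have hbn : ‖b 0‖ = 1 := b.orthonormal.1 0
  have hd0 : ∀ v, fderiv ℝ f x0 v = G * ⟪b 0, v⟫ := fun v => by
    rw [← inner_grad, hb0, inner_smul_right, real_inner_comm]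
  have hcont : ContinuousAt (fderiv ℝ f) x0 := (hf.continuous_fderiv (by norm_num)).continuousAt
  obtain ⟨r, hr, hball⟩ := Metric.continuousAt_iff.1 hcont (τ / 4 * G) (by positivity)
  have hclose : ∀ x ∈ ball x0 r, ‖fderiv ℝ f x - fderiv ℝ f x0‖ ≤ τ / 4 * G := fun x hx => by
    rw [← dist_eq_norm]; exact (hball hx).le
  refine ⟨b, r, hr, fun x hx => ?_, fun x hx y hy hxy => ?_⟩
  · have h1 := hclose x hx
    have h2 : ‖gradient f x‖ ≤ G + τ / 4 * G := by
      rw [hng]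
      have := norm_add_le (fderiv ℝ f x0) (fderiv ℝ f x - fderiv ℝ f x0)
      rw [add_sub_cancel, ← hng x0] at this
      linarith
    have h3 : G - τ / 4 * G ≤ fderiv ℝ f x (b 0) := by
      have h4 := (fderiv ℝ f x - fderiv ℝ f x0).le_opNorm (b 0)
      rw [hbn, mul_one, Real.norm_eq_abs] at h4
      have h5 := (abs_le.1 h4).1
      have h6 : fderiv ℝ f x0 (b 0) = G := by
        rw [hd0, real_inner_self_eq_norm_sq, hbn]; ring
      have h7 : (fderiv ℝ f x - fderiv ℝ f x0) (b 0) = fderiv ℝ f x (b 0) - fderiv ℝ f x0 (b 0) := rfl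
      rw [h7, h6] at h5
      linarith
    have hq : 0 < G - τ / 4 * G := by nlinarith
    refine ⟨?_, by linarith⟩
    calc _ ≤ G + τ / 4 * G := h2
      _ ≤ (1 + τ) * (G - τ / 4 * G) := by nlinarith [mul_pos hτ hGpos]
      _ ≤ _ := by gcongr
  · have h1 := Convex.norm_image_sub_le_of_norm_fderiv_le' (𝕜 := ℝ) (f := f) (s := ball x0 r)
      (φ := fderiv ℝ f x0) (fun z _ => (hf.differentiable (by norm_num)) z) hclose
      (convex_ball _ _) hx hy
    rw [hxy, sub_self, zero_sub, norm_neg, hd0, Real.norm_eq_abs, abs_mul, abs_of_pos hGpos] at h1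
    have h2 : G * |⟪b 0, y - x⟫| ≤ G * (τ / 4 * ‖y - x‖) := by linarith
    have h3 := le_of_mul_le_mul_left h2 hGpos
    have := norm_nonneg (y - x)
    nlinarith

theorem haus_loc {m : ℕ} (b : OrthonormalBasis (Fin (m + 1)) ℝ (Euc (m + 1)))
    (s : Set (Euc (m + 1))) (hsb : Bornology.IsBounded s)
    (hs : ∀ x ∈ s, ∀ y ∈ s, |⟪b 0, y - x⟫| ≤ ‖y - x‖ / 2) : μH[(m : ℝ)] s < ∞ := by
  have hd : ∀ x ∈ s, ∀ y ∈ s, dist x y ≤ (2 * (m : ℝ) + 1) * dist (bproj b x) (bproj b y) := by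
    intro x hx y hy
    have h1 := hs y hy x hx
    have h2 := b.sum_sq_norm_inner_right (x - y)
    rw [Fin.sum_univ_succ] at h2
    set D := dist (bproj b x) (bproj b y) with hD
    have hD0 : 0 ≤ D := dist_nonneg
    have h3 : ∀ i : Fin m, ‖⟪b i.succ, x - y⟫‖ ^ 2 ≤ D ^ 2 := by
      intro i
      have := dist_le_pi_dist (bproj b x) (bproj b y) i
      rw [bproj, bproj, dist_eq_norm, ← inner_sub_right] at this
      gcongr
    have h4 : ∑ i : Fin m, ‖⟪b i.succ, x - y⟫‖ ^ 2 ≤ m * D ^ 2 := by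
      refine (Finset.sum_le_sum fun i _ => h3 i).trans ?_
      simp
    rw [Real.norm_eq_abs] at h2
    have h5 : |⟪b 0, x - y⟫| ^ 2 ≤ (‖x - y‖ / 2) ^ 2 := by gcongr
    rw [dist_eq_norm]
    have h6 : 3 / 4 * ‖x - y‖ ^ 2 ≤ m * D ^ 2 := by nlinarith
    have hm0 : (0 : ℝ) ≤ m := Nat.cast_nonneg m
    refine abs_le_of_sq_le_sq' ?_ (by positivity) |>.2
    nlinarith [mul_nonneg hm0 (sq_nonneg D), mul_nonneg (mul_nonneg hm0 hm0) (sq_nonneg D), sq_nonneg D]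
  have hinj : InjOn (bproj b) s := by
    intro x hx y hy hxy
    have := hd x hx y hy
    rw [hxy, dist_self, mul_zero] at this
    exact dist_le_zero.1 this
  set g := Function.invFunOn (bproj b) s with hg
  have hgl : ∀ x ∈ s, g (bproj b x) = x := fun x hx => hinj.leftInvOn_invFunOn hx
  have hlip : LipschitzOnWith (2 * m + 1) g (bproj b '' s) := by
    refine LipschitzOnWith.of_dist_le_mul ?_
    rintro _ ⟨x, hx, rfl⟩ _ ⟨y, hy, rfl⟩
    rw [hgl x hx, hgl y hy]
    exact_mod_cast hd x hx y hy
  have him : g '' (bproj b '' s) = s := by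
    rw [image_image]
    ext x
    constructor
    · rintro ⟨y, hy, rfl⟩
      simp only
      rwa [hgl y hy]
    · intro hx
      exact ⟨x, hx, hgl x hx⟩
  have h1 := hlip.hausdorffMeasure_image_le (Nat.cast_nonneg (α := ℝ) m)
  rw [him] at h1
  have h2 : (μH[((Fintype.card (Fin m) : ℕ) : ℝ)] : Measure (Fin m → ℝ)) = volume :=
    hausdorffMeasure_pi_real
  rw [Fintype.card_fin] at h2
  rw [h2] at h1
  refine h1.trans_lt (ENNReal.mul_lt_top ?_ ?_)
  · exact ENNReal.rpow_lt_top_of_nonneg (Nat.cast_nonneg m) ENNReal.coe_ne_top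
  · have hc : IsCompact (bproj b '' closure s) := hsb.isCompact_closure.image (bproj_cont b)
    exact (measure_mono (image_mono subset_closure)).trans_lt hc.measure_lt_top

theorem haus_fin {m : ℕ} (f : Euc (m + 1) → ℝ) (hf : ContDiff ℝ 1 f) (E : Set (Euc (m + 1)))
    (hEb : Bornology.IsBounded E) (hEf : frontier E = {x | f x = 0})
    (hd : ∀ x ∈ frontier E, fderiv ℝ f x ≠ 0) : μH[(m : ℝ)] (frontier E) < ∞ := by
  have hc : IsCompact (frontier E) :=
    hEb.isCompact_closure.of_isClosed_subset isClosed_frontier frontier_subset_closure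
  refine hc.measure_lt_top_of_nhdsWithin fun x hx => ?_
  obtain ⟨b, r, hr, -, h2⟩ := loc_basis f hf x (hd x hx) 1 one_pos le_rfl
  refine ⟨ball x r ∩ frontier E, Filter.inter_mem (mem_nhdsWithin_of_mem_nhds (ball_mem_nhds x hr))
    self_mem_nhdsWithin, ?_⟩
  · refine haus_loc b _ (isBounded_ball.subset inter_subset_left) fun y hy z hz => ?_
    refine h2 y hy.1 z hz.1 ?_
    have h3 := hy.2
    have h4 := hz.2
    rw [hEf] at h3 h4
    exact h3.trans h4.symm

theorem vol_frontier {m : ℕ} (s : Set (Euc (m + 1))) (hs : μH[(m : ℝ)] s < ∞) : volume s = 0 := by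
  have e1 := (Measure.isAddLeftInvariant_eq_smul (volume : Measure (Euc (m + 1)))
    (μH[(Module.finrank ℝ (Euc (m + 1)) : ℝ)]))
  rw [e1, Measure.smul_apply]
  have := (Measure.hausdorffMeasure_zero_or_top (d₁ := (m : ℝ))
    (d₂ := (Module.finrank ℝ (Euc (m + 1)) : ℝ)) (by simp) s).resolve_right hs.ne
  rw [this, smul_zero]


/-- approximate perimeter measure of a set -/
def nuk {n : ℕ} (f : Euc n → ℝ) (k : ℕ) (Q : Set (Euc n)) : ℝ≥0∞ :=
  ∫⁻ x in Q ∩ {x | f x < 0}, ENNReal.ofReal (dens f (1 / ((k : ℝ) + 1)) x)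

open Filter in
theorem nu_small {n : ℕ} (f : Euc n → ℝ) (hf : ContDiff ℝ 1 f)
    (Q : Set (Euc n)) (hQ : IsCompact Q) (t : ℝ) (ht : 0 < t) (hQt : ∀ x ∈ Q, f x ≤ -t) :
    (∃ C : ℝ≥0∞, C ≠ ∞ ∧ ∀ k, nuk f k Q ≤ C) ∧ Tendsto (fun k => nuk f k Q) atTop (𝓝 0) := by
  have hgc : Continuous (gradient f) := by
    unfold gradient
    exact (LinearIsometryEquiv.continuous _).comp (hf.continuous_fderiv (by norm_num))
  obtain ⟨M, hM⟩ := hQ.exists_bound_of_continuousOn hgc.continuousOn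
  set M' := max M 0 with hM'
  have hEm : MeasurableSet {x | f x < 0} := (isOpen_lt hf.continuous continuous_const).measurableSet
  set B : ℕ → ℝ := fun k => Real.exp (-(t * ((k : ℝ) + 1))) * M' * ((k : ℝ) + 1) with hB
  have hle : ∀ k, nuk f k Q ≤ ENNReal.ofReal (B k) * volume Q := by
    intro k
    calc nuk f k Q ≤ ∫⁻ x in Q ∩ {x | f x < 0}, ENNReal.ofReal (B k) := by
          refine setLIntegral_mono' (hQ.measurableSet.inter hEm) fun x hx => ?_
          apply ENNReal.ofReal_le_ofReal
          rw [dens, div_div_eq_mul_div, div_one, div_div_eq_mul_div, div_one]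
          have h1 := hQt x hx.1
          have h2 : ‖gradient f x‖ ≤ M' := (hM x hx.1).trans (le_max_left _ _)
          have h3 : f x * ((k : ℝ) + 1) ≤ -(t * ((k : ℝ) + 1)) := by
            have : (0 : ℝ) ≤ (k : ℝ) + 1 := by positivity
            nlinarith
          simp only [hB]
          gcongr
      _ ≤ ENNReal.ofReal (B k) * volume Q := by
          rw [setLIntegral_const]
          gcongr
          exact inter_subset_left
  have hBl : Tendsto B atTop (𝓝 0) := by
    have h1 := (Real.tendsto_pow_mul_exp_neg_atTop_nhds_zero 1)
    have h2 : Tendsto (fun k : ℕ => t * ((k : ℝ) + 1)) atTop atTop :=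
      (tendsto_atTop_add_const_right _ _ tendsto_natCast_atTop_atTop).const_mul_atTop ht
    have h3 := (h1.comp h2).const_mul (M' / t)
    rw [mul_zero] at h3
    refine h3.congr fun k => ?_
    simp only [Function.comp, hB, pow_one]
    field_simp
  have hT : Tendsto (fun k => ENNReal.ofReal (B k) * volume Q) atTop (𝓝 0) := by
    have h1 := (ENNReal.tendsto_ofReal hBl)
    rw [ENNReal.ofReal_zero] at h1
    have := ENNReal.Tendsto.mul_const h1 (Or.inr hQ.measure_lt_top.ne) (b := volume Q)
    rwa [zero_mul] at this
  refine ⟨?_, tendsto_of_tendsto_of_tendsto_of_le_of_le tendsto_const_nhds hT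
    (fun _ => bot_le) hle⟩
  obtain ⟨C, hC⟩ := hBl.bddAbove_range
  refine ⟨ENNReal.ofReal C * volume Q, ENNReal.mul_ne_top ENNReal.ofReal_ne_top hQ.measure_lt_top.ne,
    fun k => (hle k).trans ?_⟩
  gcongr
  exact hC ⟨k, rfl⟩

open Filter in
theorem nu_limsup {m : ℕ} (f : Euc (m + 1) → ℝ) (hf : ContDiff ℝ 1 f)
    (b : OrthonormalBasis (Fin (m + 1)) ℝ (Euc (m + 1))) (x0 : Euc (m + 1)) (r τ : ℝ)
    (hτ : 0 ≤ τ)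
    (hb : ∀ x ∈ ball x0 r, ‖gradient f x‖ ≤ (1 + τ) * fderiv ℝ f x (b 0) ∧ 0 < fderiv ℝ f x (b 0))
    (Q : Set (Euc (m + 1))) (hQ : IsCompact Q) (hQb : Q ⊆ ball x0 r) (hQf : ∀ x ∈ Q, f x ≤ 0) :
    limsup (fun k => nuk f k Q) atTop ≤
      ENNReal.ofReal (1 + τ) * μH[(m : ℝ)] (Q ∩ {x | f x = 0}) := by
  set R : ℕ → Set (Euc (m + 1)) := fun j => Q ∩ {x | -(1 / ((j : ℝ) + 1)) ≤ f x} with hR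
  have hRc : ∀ j, IsCompact (R j) := fun j =>
    hQ.inter_right (isClosed_le continuous_const hf.continuous)
  have hRa : Antitone R := by
    intro i j hij
    refine inter_subset_inter_right _ fun x hx => ?_
    rw [mem_setOf_eq] at hx ⊢
    have : 1 / ((j : ℝ) + 1) ≤ 1 / ((i : ℝ) + 1) := by gcongr
    linarith
  have hstep : ∀ j, limsup (fun k => nuk f k Q) atTop ≤
      ENNReal.ofReal (1 + τ) * volume (bproj b '' R j) := by
    intro j
    set Q' := Q ∩ {x | f x ≤ -(1 / ((j : ℝ) + 1))} with hQ'
    have hQ'c : IsCompact Q' := hQ.inter_right (isClosed_le hf.continuous continuous_const)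
    have hs := (nu_small f hf Q' hQ'c (1 / ((j : ℝ) + 1)) (by positivity) fun x hx => hx.2).2
    have hk : ∀ k, nuk f k Q ≤ ENNReal.ofReal (1 + τ) * volume (bproj b '' R j) + nuk f k Q' := by
      intro k
      have h1 : nuk f k Q ≤ nuk f k (R j) + nuk f k Q' := by
        unfold nuk
        refine le_trans (lintegral_mono_set ?_) (lintegral_union_le _ _ _)
        rintro x ⟨hx, hx2⟩
        rcases le_total (f x) (-(1 / ((j : ℝ) + 1))) with h | h
        · exact Or.inr ⟨⟨hx, h⟩, hx2⟩
        · exact Or.inl ⟨⟨hx, h⟩, hx2⟩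
      refine h1.trans ?_
      gcongr
      exact nu_le f hf b x0 r τ _ hτ (by positivity) hb (R j) (hRc j)
        (inter_subset_left.trans hQb)
    have hl := (tendsto_const_nhds (x := ENNReal.ofReal (1 + τ) * volume (bproj b '' R j))).add hs
    rw [add_zero] at hl
    rw [← hl.limsup_eq]
    exact limsup_le_limsup (Eventually.of_forall hk)
  have hInt : ⋂ j, bproj b '' R j ⊆ bproj b '' (Q ∩ {x | f x = 0}) := by
    intro y hy
    rw [mem_iInter] at hy
    have hc : ∀ j, IsClosed (R j ∩ bproj b ⁻¹' {y}) := fun j =>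
      (hRc j).isClosed.inter (isClosed_singleton.preimage (bproj_cont b))
    have hne := IsCompact.nonempty_iInter_of_sequence_nonempty_isCompact_isClosed
      (fun j => R j ∩ bproj b ⁻¹' {y})
      (fun j => inter_subset_inter_left _ (hRa (Nat.le_succ j)))
      (fun j => by
        obtain ⟨x, hx, hxy⟩ := hy j
        exact ⟨x, hx, hxy⟩)
      ((hRc 0).inter_right (isClosed_singleton.preimage (bproj_cont b))) hc
    obtain ⟨x, hx⟩ := hne
    rw [mem_iInter] at hx
    refine ⟨x, ⟨(hx 0).1.1, ?_⟩, (hx 0).2⟩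
    refine le_antisymm (hQf x (hx 0).1.1) ?_
    have l : Tendsto (fun j : ℕ => -(1 / ((j : ℝ) + 1))) atTop (𝓝 (-0)) :=
      tendsto_one_div_add_atTop_nhds_zero_nat.neg
    rw [neg_zero] at l
    exact le_of_tendsto l (Eventually.of_forall fun j => (hx j).1.2)
  have hT := tendsto_measure_iInter_atTop (μ := (volume : Measure (Fin m → ℝ)))
    (s := fun j => bproj b '' R j)
    (fun j => ((hRc j).image (bproj_cont b)).measurableSet.nullMeasurableSet)
    (fun i j hij => image_mono (hRa hij))
    ⟨0, ((hRc 0).image (bproj_cont b)).measure_lt_top.ne⟩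
  have hT2 := ENNReal.Tendsto.const_mul hT (Or.inr ENNReal.ofReal_ne_top)
    (a := ENNReal.ofReal (1 + τ))
  refine (ge_of_tendsto hT2 (Eventually.of_forall hstep)).trans ?_
  gcongr
  exact (measure_mono hInt).trans (bproj_haus b _)

open Filter in
theorem good_nbhd {m : ℕ} (f : Euc (m + 1) → ℝ) (hf : ContDiff ℝ 1 f) (E : Set (Euc (m + 1)))
    (hEe : E = {x | f x < 0}) (hEf : frontier E = {x | f x = 0})
    (hd : ∀ x ∈ frontier E, fderiv ℝ f x ≠ 0) (τ : ℝ) (hτ : 0 < τ) (hτ1 : τ ≤ 1)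
    (x0 : Euc (m + 1)) (hx0 : x0 ∈ closure E) :
    ∃ r > 0, ∃ C : ℝ≥0∞, C ≠ ∞ ∧ ∀ Q, IsCompact Q → Q ⊆ closure E → Q ⊆ ball x0 r →
      (∀ k, nuk f k Q ≤ C) ∧ limsup (fun k => nuk f k Q) atTop ≤
        ENNReal.ofReal (1 + τ) * μH[(m : ℝ)] (Q ∩ frontier E) := by
  have hEo : IsOpen E := by rw [hEe]; exact isOpen_lt hf.continuous continuous_const
  have hcl : ∀ x ∈ closure E, f x ≤ 0 := by
    rw [hEe]
    exact fun x hx => closure_lt_subset_le hf.continuous continuous_const hx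
  by_cases h : x0 ∈ E
  · obtain ⟨r, hr, hrE⟩ := Metric.nhds_basis_closedBall.mem_iff.1 (hEo.mem_nhds h)
    obtain ⟨z, hz, hzmax⟩ := (isCompact_closedBall x0 r).exists_isMaxOn
      (nonempty_closedBall.2 hr.le) hf.continuous.continuousOn
    have hfz : f z < 0 := by
      have := hrE hz
      rw [hEe] at this
      exact this
    have hbd : ∀ x ∈ closedBall x0 r, f x ≤ -(-f z) := fun x hx => by
      rw [neg_neg]; exact hzmax hx
    obtain ⟨⟨C, hC, hCk⟩, -⟩ := nu_small f hf _ (isCompact_closedBall x0 r) (-f z) (by linarith) hbd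
    refine ⟨r, hr, C, hC, fun Q hQ _ hQb => ⟨fun k => ?_, ?_⟩⟩
    · refine le_trans ?_ (hCk k)
      exact lintegral_mono_set (inter_subset_inter_left _ (hQb.trans ball_subset_closedBall))
    · have := (nu_small f hf Q hQ (-f z) (by linarith)
        (fun x hx => hbd x (ball_subset_closedBall (hQb hx)))).2
      rw [this.limsup_eq]
      exact bot_le
  · have hxf : x0 ∈ frontier E := by
      rw [frontier, hEo.interior_eq]; exact ⟨hx0, h⟩
    obtain ⟨b, r, hr, hb, -⟩ := loc_basis f hf x0 (hd x0 hxf) τ hτ hτ1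
    refine ⟨r, hr, ENNReal.ofReal (1 + τ) * volume (bproj b '' closedBall x0 r),
      ENNReal.mul_ne_top ENNReal.ofReal_ne_top
        ((isCompact_closedBall x0 r).image (bproj_cont b)).measure_lt_top.ne,
      fun Q hQ hQE hQb => ⟨fun k => ?_, ?_⟩⟩
    · refine (nu_le f hf b x0 r τ _ hτ.le (by positivity) hb Q hQ hQb).trans ?_
      gcongr
      exact hQb.trans ball_subset_closedBall
    · rw [hEf]
      exact nu_limsup f hf b x0 r τ hτ.le hb Q hQ hQb fun x hx => hcl x (hQE hx)


open Filter in
theorem layer {m : ℕ} (f : Euc (m + 1) → ℝ) (hf : ContDiff ℝ 1 f) (E : Set (Euc (m + 1)))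
    (hEe : E = {x | f x < 0}) (hEb : Bornology.IsBounded E) (τ : ℝ)
    (h : Euc (m + 1) → ℝ) (hc : ContinuousOn h (closure E)) (h0 : ∀ x ∈ closure E, 0 ≤ h x)
    (B : Set (Euc (m + 1))) (hB : ∀ x ∈ closure E, 0 < h x → x ∈ B) (C : ℝ≥0∞) (hC : C ≠ ∞)
    (hQ : ∀ Q, IsCompact Q → Q ⊆ closure E → Q ⊆ B →
      (∀ k, nuk f k Q ≤ C) ∧ limsup (fun k => nuk f k Q) atTop ≤
        ENNReal.ofReal (1 + τ) * μH[(m : ℝ)] (Q ∩ frontier E)) :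
    limsup (fun k : ℕ => ∫⁻ x in E, ENNReal.ofReal (h x) *
      ENNReal.ofReal (dens f (1 / ((k : ℝ) + 1)) x)) atTop ≤
      ENNReal.ofReal (1 + τ) * ∫⁻ x in frontier E, ENNReal.ofReal (h x) ∂(μH[(m : ℝ)]) := by
  classical
  have hEo : IsOpen E := by rw [hEe]; exact isOpen_lt hf.continuous continuous_const
  have hcl : IsCompact (closure E) := hEb.isCompact_closure
  set h' : Euc (m + 1) → ℝ := (closure E).indicator h with hh'
  have hm' : Measurable h' := by
    have := ContinuousOn.measurable_piecewise (f := h) (g := (0 : Euc (m + 1) → ℝ)) (s := closure E) hc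
      continuousOn_const isClosed_closure.measurableSet
    rwa [piecewise_eq_indicator] at this
  have h'0 : ∀ x, 0 ≤ h' x := fun x => indicator_nonneg h0 x
  have heq : ∀ x ∈ closure E, h' x = h x := fun x hx => indicator_of_mem hx h
  have hset : ∀ t : ℝ, 0 < t → {x | t ≤ h' x} = closure E ∩ h ⁻¹' (Ici t) := by
    intro t ht
    ext x
    by_cases hx : x ∈ closure E
    · simp [heq x hx, hx]
    · simp [hx, hh', ht]
  have hQc : ∀ t : ℝ, 0 < t → IsCompact {x | t ≤ h' x} := fun t ht => by
    rw [hset t ht]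
    exact hcl.of_isClosed_subset (hc.preimage_isClosed_of_isClosed isClosed_closure isClosed_Ici)
      inter_subset_left
  have hQE : ∀ t : ℝ, 0 < t → {x | t ≤ h' x} ⊆ closure E := fun t ht => by
    rw [hset t ht]; exact inter_subset_left
  have hQB : ∀ t : ℝ, 0 < t → {x | t ≤ h' x} ⊆ B := fun t ht x hx => by
    rw [hset t ht] at hx
    exact hB x hx.1 (lt_of_lt_of_le ht hx.2)
  have hdm : ∀ k : ℕ, Measurable fun x => ENNReal.ofReal (dens f (1 / ((k : ℝ) + 1)) x) := fun k =>
    (dens_cont f hf _).measurable.ennreal_ofReal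
  set ν : ℕ → Measure (Euc (m + 1)) := fun k => (volume.restrict E).withDensity
    fun x => ENNReal.ofReal (dens f (1 / ((k : ℝ) + 1)) x) with hν
  have hνQ : ∀ k Q, MeasurableSet Q → ν k Q = nuk f k Q := fun k Q hQm => by
    rw [hν, withDensity_apply _ hQm, Measure.restrict_restrict hQm, nuk, ← hEe]
  have hlay : ∀ k : ℕ, ∫⁻ x in E, ENNReal.ofReal (h x) *
      ENNReal.ofReal (dens f (1 / ((k : ℝ) + 1)) x) = ∫⁻ t in Ioi (0 : ℝ), ν k {x | t ≤ h' x} := by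
    intro k
    rw [← lintegral_eq_lintegral_meas_le (ν k) (Eventually.of_forall h'0) hm'.aemeasurable, hν,
      lintegral_withDensity_eq_lintegral_mul _ (hdm k) hm'.ennreal_ofReal]
    refine setLIntegral_congr_fun hEo.measurableSet fun x hx => ?_
    simp only [Pi.mul_apply]
    rw [heq x (subset_closure hx), mul_comm]
  have hlay2 : ∫⁻ x in frontier E, ENNReal.ofReal (h x) ∂(μH[(m : ℝ)]) =
      ∫⁻ t in Ioi (0 : ℝ), μH[(m : ℝ)] ({x | t ≤ h' x} ∩ frontier E) := by
    have e : ∫⁻ x in frontier E, ENNReal.ofReal (h x) ∂(μH[(m : ℝ)]) =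
        ∫⁻ x in frontier E, ENNReal.ofReal (h' x) ∂(μH[(m : ℝ)]) :=
      setLIntegral_congr_fun isClosed_frontier.measurableSet fun x hx => by
        rw [heq x (frontier_subset_closure hx)]
    rw [e, lintegral_eq_lintegral_meas_le _ (Eventually.of_forall h'0) hm'.aemeasurable]
    refine setLIntegral_congr_fun measurableSet_Ioi fun t ht => ?_
    simp only
    rw [Measure.restrict_apply (hQc t ht).measurableSet]
  obtain ⟨M, hM⟩ := hcl.exists_bound_of_continuousOn hc
  have hanti : ∀ k, Antitone fun t : ℝ => ν k {x | t ≤ h' x} := fun k s t hst =>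
    measure_mono fun x hx => le_trans hst hx
  simp only [hlay]
  refine (limsup_lintegral_le ((Iic M).indicator fun _ => C) (fun k => (hanti k).measurable)
    (fun k => ?_) ?_).trans ?_
  · filter_upwards [ae_restrict_mem measurableSet_Ioi] with t ht
    by_cases htM : t ∈ Iic M
    · rw [indicator_of_mem htM, hνQ k _ (hQc t ht).measurableSet]
      exact (hQ _ (hQc t ht) (hQE t ht) (hQB t ht)).1 k
    · have : {x | t ≤ h' x} = ∅ := by
        rw [hset t ht]
        ext x
        simp only [mem_inter_iff, mem_preimage, mem_Ici, mem_empty_iff_false, iff_false, not_and]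
        intro hx htx
        have := (le_abs_self _).trans (hM x hx)
        exact htM (htx.trans this)
      rw [this]; simp
  · rw [lintegral_indicator measurableSet_Iic, lintegral_const, Measure.restrict_restrict
      measurableSet_Iic, Measure.restrict_apply_univ]
    refine ENNReal.mul_ne_top hC ?_
    rw [inter_comm, Ioi_inter_Iic]
    simp
  · rw [hlay2, ← lintegral_const_mul' _ _ ENNReal.ofReal_ne_top]
    refine setLIntegral_mono' measurableSet_Ioi fun t ht => ?_
    simp only [fun k => hνQ k _ (hQc t ht).measurableSet]
    exact (hQ _ (hQc t ht) (hQE t ht) (hQB t ht)).2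

open Filter in
theorem limsup_add_ennreal (u v : ℕ → ℝ≥0∞) :
    limsup (fun k => u k + v k) atTop ≤ limsup u atTop + limsup v atTop := by
  refine ENNReal.le_of_forall_pos_le_add fun ε hε hfin => ?_
  have hu : limsup u atTop < limsup u atTop + (ε / 2 : ℝ≥0) :=
    ENNReal.lt_add_right (ne_top_of_le_ne_top hfin.ne le_self_add)
      (ENNReal.coe_ne_zero.2 (by positivity))
  have hv : limsup v atTop < limsup v atTop + (ε / 2 : ℝ≥0) :=
    ENNReal.lt_add_right (ne_top_of_le_ne_top hfin.ne le_add_self)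
      (ENNReal.coe_ne_zero.2 (by positivity))
  have e1 := eventually_lt_of_limsup_lt hu
  have e2 := eventually_lt_of_limsup_lt hv
  have : limsup u atTop + limsup v atTop + (ε : ℝ≥0∞) =
      (limsup u atTop + (ε / 2 : ℝ≥0)) + (limsup v atTop + (ε / 2 : ℝ≥0)) := by
    have h : (ε : ℝ≥0∞) = (ε / 2 : ℝ≥0) + (ε / 2 : ℝ≥0) := by
      rw [← ENNReal.coe_add, add_halves]
    rw [h]; abel
  rw [this]
  refine limsup_le_of_le (by isBoundedDefault) ?_
  filter_upwards [e1, e2] with k h1 h2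
  exact add_le_add h1.le h2.le

open Filter in
theorem limsup_sum {ι : Type*} (t : Finset ι) (F : ι → ℕ → ℝ≥0∞) :
    limsup (fun k => ∑ i ∈ t, F i k) atTop ≤ ∑ i ∈ t, limsup (F i) atTop := by
  classical
  induction t using Finset.induction_on with
  | empty => simp
  | insert a s ha ih =>
    simp only [Finset.sum_insert ha]
    refine (limsup_add_ennreal (F a) (fun k => ∑ i ∈ s, F i k)).trans ?_
    gcongr

open Filter in
theorem per_lim {m : ℕ} (f : Euc (m + 1) → ℝ) (hf : ContDiff ℝ 1 f) (E : Set (Euc (m + 1)))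
    (hEe : E = {x | f x < 0}) (hEf : frontier E = {x | f x = 0})
    (hd : ∀ x ∈ frontier E, fderiv ℝ f x ≠ 0) (hEb : Bornology.IsBounded E)
    (τ : ℝ) (hτ : 0 < τ) (hτ1 : τ ≤ 1)
    (w : Euc (m + 1) → ℝ) (hc : ContinuousOn w (closure E)) (h0 : ∀ x ∈ closure E, 0 ≤ w x) :
    limsup (fun k : ℕ => ∫⁻ x in E, ENNReal.ofReal (w x) *
      ENNReal.ofReal (dens f (1 / ((k : ℝ) + 1)) x)) atTop ≤
      ENNReal.ofReal (1 + τ) * ∫⁻ x in frontier E, ENNReal.ofReal (w x) ∂(μH[(m : ℝ)]) := by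
  have hEo : IsOpen E := by rw [hEe]; exact isOpen_lt hf.continuous continuous_const
  choose! r hr C hC hQ using good_nbhd f hf E hEe hEf hd τ hτ hτ1
  obtain ⟨T, hT, hcov⟩ := hEb.isCompact_closure.elim_nhds_subcover (fun x => ball x (r x))
    (fun x hx => ball_mem_nhds x (hr x hx))
  set ρ : Euc (m + 1) → Euc (m + 1) → ℝ := fun i x => max 0 (r i - dist x i) with hρ
  have hρc : ∀ i, Continuous (ρ i) := fun i => by
    simp only [hρ]; fun_prop
  have hρ0 : ∀ i x, 0 ≤ ρ i x := fun i x => le_max_left _ _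
  have hsum : ∀ x ∈ closure E, 0 < ∑ i ∈ T, ρ i x := by
    intro x hx
    have := hcov hx
    simp only [mem_iUnion] at this
    obtain ⟨i, hi, hxi⟩ := this
    refine Finset.sum_pos' (fun i _ => hρ0 i x) ⟨i, hi, ?_⟩
    exact lt_max_of_lt_right (sub_pos.2 hxi)
  have hsc : Continuous fun x => ∑ i ∈ T, ρ i x := continuous_finsetSum _ fun i _ => hρc i
  set h : Euc (m + 1) → Euc (m + 1) → ℝ := fun i x => w x * (ρ i x / ∑ j ∈ T, ρ j x) with hh
  have hhc : ∀ i, ContinuousOn (h i) (closure E) := fun i =>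
    hc.mul ((hρc i).continuousOn.div hsc.continuousOn fun x hx => (hsum x hx).ne')
  have hh0 : ∀ i, ∀ x ∈ closure E, 0 ≤ h i x := fun i x hx =>
    mul_nonneg (h0 x hx) (div_nonneg (hρ0 i x) (hsum x hx).le)
  have hdec : ∀ x ∈ closure E, ENNReal.ofReal (w x) = ∑ i ∈ T, ENNReal.ofReal (h i x) := by
    intro x hx
    rw [← ENNReal.ofReal_sum_of_nonneg fun i _ => hh0 i x hx]
    congr 1
    simp only [hh]
    rw [← Finset.mul_sum, ← Finset.sum_div, div_self (hsum x hx).ne', mul_one]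
  have hmeas : ∀ i (s : Set (Euc (m + 1))) (μ : Measure (Euc (m + 1))), MeasurableSet s →
      s ⊆ closure E → AEMeasurable (fun x => ENNReal.ofReal (h i x)) (μ.restrict s) :=
    fun i s μ hs hsE => (((hhc i).mono hsE).aemeasurable hs).ennreal_ofReal
  have e1 : ∀ k : ℕ, ∫⁻ x in E, ENNReal.ofReal (w x) *
      ENNReal.ofReal (dens f (1 / ((k : ℝ) + 1)) x) = ∑ i ∈ T, ∫⁻ x in E, ENNReal.ofReal (h i x) *
      ENNReal.ofReal (dens f (1 / ((k : ℝ) + 1)) x) := by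
    intro k
    rw [← lintegral_finsetSum' (f := fun i x => ENNReal.ofReal (h i x) *
      ENNReal.ofReal (dens f (1 / ((k : ℝ) + 1)) x)) _ fun i _ =>
      (hmeas i E volume hEo.measurableSet subset_closure).mul
      (dens_cont f hf _).measurable.ennreal_ofReal.aemeasurable]
    refine setLIntegral_congr_fun hEo.measurableSet fun x hx => ?_
    rw [hdec x (subset_closure hx), Finset.sum_mul]
  have e2 : ∫⁻ x in frontier E, ENNReal.ofReal (w x) ∂(μH[(m : ℝ)]) =
      ∑ i ∈ T, ∫⁻ x in frontier E, ENNReal.ofReal (h i x) ∂(μH[(m : ℝ)]) := by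
    rw [← lintegral_finsetSum' _ fun i _ =>
      hmeas i (frontier E) _ isClosed_frontier.measurableSet frontier_subset_closure]
    refine setLIntegral_congr_fun isClosed_frontier.measurableSet fun x hx => ?_
    exact hdec x (frontier_subset_closure hx)
  simp only [e1]
  rw [e2, Finset.mul_sum]
  refine (limsup_sum T _).trans (Finset.sum_le_sum fun i hi => ?_)
  refine layer f hf E hEe hEb τ (h i) (hhc i) (hh0 i) (ball i (r i)) ?_ (C i) (hC i (hT i hi))
    (hQ i (hT i hi))
  intro x hx hpos
  by_contra hn
  have : ρ i x = 0 := max_eq_left (by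
    rw [mem_ball, not_lt] at hn; linarith)
  simp only [hh, this, zero_div, mul_zero, lt_self_iff_false] at hpos


def etaf {n : ℕ} (f : Euc n → ℝ) (δ : ℝ) (x : Euc n) : ℝ := 1 - Real.exp (f x / δ)

theorem etaf_cd {n : ℕ} (f : Euc n → ℝ) (hf : ContDiff ℝ 1 f) (δ : ℝ) :
    ContDiff ℝ 1 (etaf f δ) := by
  unfold etaf
  exact contDiff_const.sub (hf.div_const δ).exp

theorem etaf_fderiv {n : ℕ} (f : Euc n → ℝ) (hf : ContDiff ℝ 1 f) (δ : ℝ) (x v : Euc n) :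
    fderiv ℝ (etaf f δ) x v = - (Real.exp (f x / δ) / δ * fderiv ℝ f x v) := by
  have h1 : HasFDerivAt f (fderiv ℝ f x) x := (hf.differentiable one_ne_zero x).hasFDerivAt
  have h2 := ((h1.mul_const (δ⁻¹)).exp).const_sub 1
  have h3 : HasFDerivAt (etaf f δ) _ x := h2
  rw [h3.fderiv]
  simp [div_eq_mul_inv]
  ring

theorem step_main {n : ℕ} {S : Set (Euc n)} {g : Euc n → ℝ} (h : ConeW S g) (α : ℝ) (hα : 0 < α)
    (E : Set (Euc n)) (hES : E ⊆ S) (hEo : IsOpen E) (hEb : Bornology.IsBounded E)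
    (hE0 : volume (frontier E) = 0) (f : Euc n → ℝ) (hf : ContDiff ℝ 1 f)
    (hEe : E = {x | f x < 0}) (hEf : frontier E = {x | f x = 0})
    (hd : ∀ x ∈ frontier E, fderiv ℝ f x ≠ 0) (δ θ c c₁ σ : ℝ) (hδ : 0 < δ) (hθ : 0 < θ)
    (hσ : 0 < σ) (hc₁ : c₁ < c + σ) (G : Euc n → ℝ) (hG1 : ContDiff ℝ 1 G) (hG0 : ∀ x, 0 < G x)
    (hGσ : ∀ x ∈ E, G x ≤ g x + σ)
    (hGd : ∀ x ∈ closure E, ∀ p ∈ closure S, g p ≤ fderiv ℝ G x p)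
    (hpos : 0 < ∫ x in E, (c₁ * (G x ^ α * etaf f δ x) - (1 + θ) * (G x ^ α * dens f δ x)))
    (j : ℕ) : ∃ m : ℕ, j ≤ m ∧ ∃ φ : Euc n → ℝ, IsApprox S E g α c σ ((1 / 2 : ℝ) ^ m) φ := by
  have hηc := etaf_cd f hf δ
  have hWc : ContDiff ℝ 1 (fun x => G x ^ α) := hG1.rpow_const_of_ne fun x => (hG0 x).ne'
  have hWd : ∀ x v, fderiv ℝ (fun x => G x ^ α) x v = α * G x ^ (α - 1) * fderiv ℝ G x v := by
    intro x v
    have h1 : HasFDerivAt G (fderiv ℝ G x) x := (hG1.differentiable one_ne_zero x).hasFDerivAt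
    rw [(h1.rpow_const (p := α) (Or.inl (hG0 x).ne')).fderiv]
    simp
  have hac : ContDiff ℝ 1 (fun x => G x ^ α * etaf f δ x) := hWc.mul hηc
  have had : ∀ x v, fderiv ℝ (fun x => G x ^ α * etaf f δ x) x v =
      etaf f δ x * (α * G x ^ (α - 1) * fderiv ℝ G x v) -
        G x ^ α * (Real.exp (f x / δ) / δ * fderiv ℝ f x v) := by
    intro x v
    have h1 := (hWc.differentiable one_ne_zero x).hasFDerivAt.mul
      (hηc.differentiable one_ne_zero x).hasFDerivAt
    rw [show (fun x => G x ^ α * etaf f δ x) = (fun x => G x ^ α) * etaf f δ from rfl, h1.fderiv]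
    simp only [ContinuousLinearMap.add_apply, ContinuousLinearMap.smul_apply, smul_eq_mul, hWd,
      etaf_fderiv f hf]
    ring
  have hWpos : ∀ x, 0 < G x ^ α := fun x => Real.rpow_pos_of_pos (hG0 x) _
  have hηpos : ∀ x, f x < 0 ↔ 0 < etaf f δ x := by
    intro x
    unfold etaf
    rw [sub_pos, Real.exp_lt_one_iff, div_lt_iff₀ hδ, zero_mul]
  have hgn : ∀ x, ‖gradient f x‖ = ‖fderiv ℝ f x‖ := fun x => by
    unfold gradient; simp
  have hdens0 : ∀ x, 0 ≤ dens f δ x := fun x => by unfold dens; positivity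
  have hev := lattice_main E hEo hEb hE0 (fun x => G x ^ α * etaf f δ x)
    (fun x => (1 + θ) * (G x ^ α * dens f δ x)) hac
    (continuous_const.mul (hWc.continuous.mul (dens_cont f hf δ)))
    (by
      intro x
      rw [hEe, mem_setOf_eq, hηpos x]
      exact (mul_pos_iff_of_pos_left (hWpos x)).symm) c₁ hpos
    (by
      intro x hx
      have hfx : f x = 0 := by rw [hEf] at hx; exact hx
      have hη0 : etaf f δ x = 0 := by simp [etaf, hfx]
      have hne : 0 < ‖fderiv ℝ f x‖ := norm_pos_iff.2 (hd x hx)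
      have hds : dens f δ x = ‖fderiv ℝ f x‖ / δ := by simp [dens, hfx, hgn]
      have hfd : fderiv ℝ (fun x => G x ^ α * etaf f δ x) x =
          (-(G x ^ α / δ)) • fderiv ℝ f x := by
        ext v
        rw [had, hη0, hfx]
        simp
        ring
      have hgr : ‖gradient (fun x => G x ^ α * etaf f δ x) x‖ = G x ^ α / δ * ‖fderiv ℝ f x‖ := by
        unfold gradient
        rw [LinearIsometryEquiv.norm_map, hfd, norm_smul, norm_neg, Real.norm_eq_abs,
          abs_of_pos (div_pos (hWpos x) hδ)]
      rw [hgr, hη0, hds]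
      have : 0 < θ * (G x ^ α / δ * ‖fderiv ℝ f x‖) :=
        mul_pos hθ (mul_pos (div_pos (hWpos x) hδ) hne)
      have e : c₁ * (G x ^ α * 0) - (1 + θ) * (G x ^ α * (‖fderiv ℝ f x‖ / δ)) +
        G x ^ α / δ * ‖fderiv ℝ f x‖ = - (θ * (G x ^ α / δ * ‖fderiv ℝ f x‖)) := by ring
      rw [e]; linarith)
    (closure (ball (0 : Euc n) 1 ∩ S)) (fun p hp => ConeW.K_norm hp) (fun x p => α * g p / G x)
    (fun x _ p hp => div_nonneg (mul_nonneg hα.le (h.nonneg (ConeW.K_cl hp))) (hG0 x).le)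
    (by
      intro x hx p hp
      rw [inner_grad, had]
      have hη : 0 < etaf f δ x := (hηpos x).1 (by rw [hEe] at hx; exact hx)
      have h1 := hGd x (subset_closure hx) p (ConeW.K_cl hp)
      have h2 : G x ^ (α - 1) = G x ^ α / G x := by rw [Real.rpow_sub_one (hG0 x).ne']
      have h3 : fderiv ℝ f x p ≤ ‖gradient f x‖ := by
        rw [← inner_grad]
        refine (real_inner_le_norm _ _).trans ?_
        exact mul_le_of_le_one_left (norm_nonneg _) (ConeW.K_norm hp)
      have h4 : G x ^ α * (Real.exp (f x / δ) / δ * fderiv ℝ f x p) ≤ G x ^ α * dens f δ x := by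
        refine mul_le_mul_of_nonneg_left ?_ (hWpos x).le
        unfold dens
        rw [mul_div_right_comm]
        exact mul_le_mul_of_nonneg_left h3 (by positivity)
      have h5 : 0 ≤ θ * (G x ^ α * dens f δ x) :=
        mul_nonneg hθ.le (mul_nonneg (hWpos x).le (hdens0 x))
      have h6 : etaf f δ x * (α * G x ^ (α - 1) * g p) ≤
          etaf f δ x * (α * G x ^ (α - 1) * fderiv ℝ G x p) := by
        refine mul_le_mul_of_nonneg_left (mul_le_mul_of_nonneg_left h1 ?_) hη.le
        have := Real.rpow_pos_of_pos (hG0 x) (α - 1)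
        positivity
      have h7 : G x ^ α * etaf f δ x * (α * g p / G x) = etaf f δ x * (α * G x ^ (α - 1) * g p) := by
        rw [h2]; ring
      rw [mul_sub, h7]
      linarith)
    (c + σ - c₁) (by linarith)
  obtain ⟨N0, hN0⟩ := Filter.eventually_atTop.1 hev
  obtain ⟨hN, V, u, hV, hVE, hct⟩ := hN0 (2 ^ (max j N0))
    ((le_max_right j N0).trans (Nat.lt_two_pow_self).le)
  refine ⟨max j N0, le_max_left _ _, ?_⟩
  have he : (1 / ((2 ^ (max j N0) : ℕ) : ℝ)) = (1 / 2 : ℝ) ^ (max j N0) := by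
    push_cast; rw [one_div_pow]
  rw [he] at hct
  refine approx_env h α hα E hES G σ hσ (fun x _ => hG0 x) hGσ ((1 / 2 : ℝ) ^ (max j N0)) (c + σ) V u
    hV hVE ?_
  intro x hx p hp hk
  obtain ⟨q1, q2⟩ := hct x hx p hp hk
  refine ⟨q1, q2.trans (le_of_eq ?_)⟩
  ring


theorem intOn_of {n : ℕ} (E : Set (Euc n)) (hEb : Bornology.IsBounded E) (F : Euc n → ℝ)
    (hF : ContinuousOn F (closure E)) : IntegrableOn F E :=
  (hF.integrableOn_compact hEb.isCompact_closure).mono_set subset_closure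

open Filter in
theorem choose_main {m : ℕ} (f : Euc (m + 1) → ℝ) (hf : ContDiff ℝ 1 f) (E : Set (Euc (m + 1)))
    (hEo : IsOpen E)
    (hEe : E = {x | f x < 0}) (hEf : frontier E = {x | f x = 0})
    (hd : ∀ x ∈ frontier E, fderiv ℝ f x ≠ 0) (hEb : Bornology.IsBounded E)
    (w : Euc (m + 1) → ℝ) (hc : ContinuousOn w (closure E)) (h0 : ∀ x ∈ closure E, 0 ≤ w x)
    (hP : ∫⁻ x in frontier E, ENNReal.ofReal (w x) ∂(μH[(m : ℝ)]) ≠ ∞)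
    (hV : 0 < ∫ x in E, w x) (σ c₁ : ℝ)
    (hσ : 0 < σ) (hc1 : c₁ = (∫⁻ x in frontier E, ENNReal.ofReal (w x) ∂(μH[(m : ℝ)])).toReal /
      (∫ x in E, w x) + σ) :
    ∃ δ θ : ℝ, 0 < δ ∧ 0 < θ ∧
      0 < ∫ x in E, (c₁ * (w x * etaf f δ x) - (1 + θ) * (w x * dens f δ x)) := by
  set P := (∫⁻ x in frontier E, ENNReal.ofReal (w x) ∂(μH[(m : ℝ)])).toReal with hPd
  set D := ∫ x in E, w x with hD
  have hP0 : 0 ≤ P := ENNReal.toReal_nonneg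
  have hc1V : c₁ * D = P + σ * D := by rw [hc1]; field_simp
  set s := σ * D / 2 with hs
  have hs0 : 0 < s := by positivity
  have hc1s : c₁ * D = P + 2 * s := by rw [hc1V, hs]; ring
  obtain ⟨τ, hτ, hτ1, hτ2⟩ : ∃ τ : ℝ, 0 < τ ∧ τ ≤ 1 ∧ τ * (P + s) < s := by
    refine ⟨min 1 (s / (2 * (P + s))), by positivity, min_le_left _ _, ?_⟩
    calc min 1 (s / (2 * (P + s))) * (P + s) ≤ s / (2 * (P + s)) * (P + s) := by
          gcongr; exact min_le_right _ _
      _ = s / 2 := by field_simp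
      _ < s := by linarith
  have hlim := per_lim f hf E hEe hEf hd hEb τ hτ hτ1 w hc h0
  have hlt : limsup (fun k : ℕ => ∫⁻ x in E, ENNReal.ofReal (w x) *
      ENNReal.ofReal (dens f (1 / ((k : ℝ) + 1)) x)) atTop < ENNReal.ofReal (P + s) := by
    refine hlim.trans_lt ?_
    rw [← ENNReal.ofReal_toReal hP, ← hPd, ← ENNReal.ofReal_mul (by linarith)]
    refine (ENNReal.ofReal_lt_ofReal_iff (by linarith)).2 ?_
    nlinarith
  have hev := eventually_lt_of_limsup_lt hlt
  have hI : ∀ F : Euc (m + 1) → ℝ, Continuous F → IntegrableOn (fun x => w x * F x) E :=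
    fun F hF => intOn_of E hEb _ (hc.mul hF.continuousOn)
  have hconv : Tendsto (fun k : ℕ => ∫ x in E, w x * etaf f (1 / ((k : ℝ) + 1)) x) atTop (𝓝 D) := by
    refine tendsto_integral_of_dominated_convergence (fun x => w x)
      (fun k => (hI _ (etaf_cd f hf _).continuous).aestronglyMeasurable) (intOn_of E hEb w hc) ?_ ?_
    · intro k
      refine (ae_restrict_iff' hEo.measurableSet).2 (Eventually.of_forall fun x hx => ?_)
      have hfx : f x < 0 := by rw [hEe] at hx; exact hx
      have h1 : Real.exp (f x / (1 / ((k : ℝ) + 1))) ≤ 1 := by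
        rw [Real.exp_le_one_iff]
        exact div_nonpos_of_nonpos_of_nonneg hfx.le (by positivity)
      have h2 := Real.exp_pos (f x / (1 / ((k : ℝ) + 1)))
      have hw := h0 x (subset_closure hx)
      rw [norm_mul, Real.norm_of_nonneg hw]
      refine mul_le_of_le_one_right hw ?_
      rw [Real.norm_eq_abs, abs_le]
      unfold etaf
      constructor <;> linarith
    · refine (ae_restrict_iff' hEo.measurableSet).2 (Eventually.of_forall fun x hx => ?_)
      have hfx : f x < 0 := by rw [hEe] at hx; exact hx
      have h1 : Tendsto (fun k : ℕ => f x / (1 / ((k : ℝ) + 1))) atTop atBot := by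
        have : (fun k : ℕ => f x / (1 / ((k : ℝ) + 1))) = fun k : ℕ => f x * ((k : ℝ) + 1) := by
          ext k; simp
        rw [this]
        exact (tendsto_atTop_add_const_right _ _ tendsto_natCast_atTop_atTop).const_mul_atTop_of_neg hfx
      have h2 := (Real.tendsto_exp_atBot.comp h1).const_sub 1
      have h3 := h2.const_mul (w x)
      simpa [etaf] using h3
  have hev2 : ∀ᶠ k : ℕ in atTop, (1 + τ) * (P + s) <
      c₁ * ∫ x in E, w x * etaf f (1 / ((k : ℝ) + 1)) x := by
    refine (hconv.const_mul c₁).eventually_const_lt ?_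
    rw [hc1s]; nlinarith
  obtain ⟨k, hk1, hk2⟩ := (hev.and hev2).exists
  refine ⟨1 / ((k : ℝ) + 1), τ, by positivity, hτ, ?_⟩
  rw [integral_sub ((hI _ (etaf_cd f hf _).continuous).const_mul _)
    ((hI _ (dens_cont f hf _)).const_mul _), integral_const_mul, integral_const_mul]
  have hA : ∫ x in E, w x * dens f (1 / ((k : ℝ) + 1)) x ≤ P + s := by
    have hd0 : ∀ x, 0 ≤ dens f (1 / ((k : ℝ) + 1)) x := fun x => by unfold dens; positivity
    rw [integral_eq_lintegral_of_nonneg_ae ((ae_restrict_iff' hEo.measurableSet).2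
      (Eventually.of_forall fun x hx => mul_nonneg (h0 x (subset_closure hx)) (hd0 x)))
      (hI _ (dens_cont f hf _)).aestronglyMeasurable]
    refine ENNReal.toReal_le_of_le_ofReal (by linarith) (le_trans (le_of_eq ?_) hk1.le)
    refine setLIntegral_congr_fun hEo.measurableSet fun x hx => ?_
    exact ENNReal.ofReal_mul (h0 x (subset_closure hx))
  have : (1 + τ) * ∫ x in E, w x * dens f (1 / ((k : ℝ) + 1)) x ≤ (1 + τ) * (P + s) := by gcongr
  linarith

theorem stab_main {n : ℕ} (α : ℝ) (hα : 0 < α) (E : Set (Euc n)) (hEo : IsOpen E)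
    (hEb : Bornology.IsBounded E) (w : Euc n → ℝ) (hc : ContinuousOn w (closure E))
    (h0 : ∀ x ∈ closure E, 0 ≤ w x) (Q : Euc n → ℝ) (hQ : Continuous Q)
    (hpos : 0 < ∫ x in E, w x * Q x) :
    ∃ ρ : ℝ, 0 < ρ ∧ ∀ G : Euc n → ℝ, Continuous G → (∀ x, 0 < G x) →
      (∀ x ∈ closure E, |G x - w x ^ (1 / α)| ≤ ρ) → 0 < ∫ x in E, G x ^ α * Q x := by
  have hK := hEb.isCompact_closure
  obtain ⟨M, hM⟩ := hK.exists_bound_of_continuousOn hQ.continuousOn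
  obtain ⟨B, hB⟩ := hK.exists_bound_of_continuousOn
    (hc.rpow_const (p := 1 / α) fun x _ => Or.inr (by positivity))
  have hfin : volume E ≠ ∞ := hEb.measure_lt_top.ne
  set v := (volume E).toReal with hv
  have hv0 : 0 ≤ v := ENNReal.toReal_nonneg
  set I := ∫ x in E, w x * Q x with hI
  set κ := I / (2 * ((|M| + 1) * (v + 1))) with hκ
  have hκ0 : 0 < κ := by positivity
  have huc : UniformContinuousOn (fun t : ℝ => t ^ α) (Icc 0 (|B| + 1)) :=
    isCompact_Icc.uniformContinuousOn_of_continuous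
      (Real.continuous_rpow_const hα.le).continuousOn
  obtain ⟨ρ, hρ, hρ'⟩ := Metric.uniformContinuousOn_iff.1 huc κ hκ0
  refine ⟨min 1 (ρ / 2), by positivity, fun G hG hG0 hGw => ?_⟩
  have hcl : ∀ x ∈ E, |G x ^ α - w x| ≤ κ := by
    intro x hx
    have hx' := subset_closure hx
    have h1 := hGw x hx'
    have h2 := hB x hx'
    have h3 : 0 ≤ w x ^ (1 / α) := Real.rpow_nonneg (h0 x hx') _
    rw [Real.norm_eq_abs] at h2
    have h4 := (abs_le.1 (h1.trans (min_le_left _ _))).2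
    have h5 := (abs_le.1 h2).2
    have h6 := le_abs_self B
    have := hρ' (G x) ⟨(hG0 x).le, by linarith⟩ (w x ^ (1 / α)) ⟨h3, by linarith⟩ (by
      rw [Real.dist_eq]
      exact (h1.trans (min_le_right _ _)).trans_lt (by linarith))
    rw [Real.dist_eq] at this
    rw [← Real.rpow_mul (h0 x hx'), one_div_mul_cancel hα.ne', Real.rpow_one] at this
    exact this.le
  have hi1 : IntegrableOn (fun x => w x * Q x) E := intOn_of E hEb _ (hc.mul hQ.continuousOn)
  have hi2 : IntegrableOn (fun x => G x ^ α * Q x) E := intOn_of E hEb _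
    ((hG.rpow_const fun x => Or.inl (hG0 x).ne').mul hQ).continuousOn
  have hdiff : ‖∫ x in E, (G x ^ α * Q x - w x * Q x)‖ ≤ κ * (|M| + 1) * v := by
    refine norm_setIntegral_le_of_norm_le_const hEb.measure_lt_top fun x hx => ?_
    rw [← sub_mul, norm_mul, Real.norm_eq_abs]
    refine mul_le_mul (hcl x hx) ?_ (norm_nonneg _) hκ0.le
    have := hM x (subset_closure hx)
    have := le_abs_self M
    linarith
  rw [integral_sub hi2 hi1, Real.norm_eq_abs] at hdiff
  have h1 := (abs_le.1 hdiff).1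
  have h2 : κ * (|M| + 1) * v ≤ I / 2 := by
    have : κ * (|M| + 1) * (v + 1) = I / 2 := by rw [hκ]; field_simp
    have h3 : 0 ≤ κ * (|M| + 1) := by positivity
    nlinarith
  linarith


/-- Existence of the weighted coupling (assuming `w ≡ 0` on `∂Σ`). -/
theorem stmt_10 {n k : ℕ} (hn : 1 ≤ n) (hk : k < n) (α : ℝ) (hα : 0 < α)
    (S : Set (Euc n)) (hS : IsOpenConvexCone S)
    (hSL : ∀ x ∈ S, ∀ v ∈ linSpan n k, x + v ∈ S)
    (hNoLine : ∀ p v : Euc n, (∀ t : ℝ, p + t • v ∈ S) → v ∈ linSpan n k)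
    (w : Euc n → ℝ) (hw : IsAdmissibleWeight S α w)
    (hw0 : ∀ x ∈ frontier S, w x = 0)
    (E : Set (Euc n)) (hES : E ⊆ S) (hEo : IsOpen E) (hEb : Bornology.IsBounded E)
    (hEc : IsConnected E) (hEsm : HasSmoothBoundary E) (hEpos : 0 < wVol w E) :
    ∃ φ : Euc n → ℝ, ConvexOn ℝ univ φ ∧
      ContDiff ℝ 1 φ ∧ (∃ L : NNReal, LipschitzWith L (fun x => gradient φ x)) ∧
      (fun x => gradient φ x) '' univ ⊆ closure (ball (0 : Euc n) 1 ∩ S) ∧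
      volume ((ball (0 : Euc n) 1 ∩ S) \ ((fun x => gradient φ x) '' E)) = 0 ∧
      ∀ᵐ x ∂(volume.restrict E),
        DifferentiableAt ℝ (fderiv ℝ φ) x ∧
        lapl φ x + α * (w (gradient φ x) / w x) ^ (1 / α) ≤
          (wPer S w E).toReal / (wVol w E).toReal := by
  obtain ⟨m, rfl⟩ : ∃ m, n = m + 1 := ⟨n - 1, by omega⟩
  obtain ⟨f, hfs, hEe, hEf, hd⟩ := hEsm
  have hf : ContDiff ℝ 1 f := hfs.of_le (by exact_mod_cast le_top)
  have hW := coneW_of α hα S hS w hw hw0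
  have hclS : closure E ⊆ closure S := closure_mono hES
  have hwc : ContinuousOn w (closure E) := hw.1.mono hclS
  have hwn : ∀ x ∈ closure E, 0 ≤ w x := fun x hx => hw.2.1 x (hclS hx)
  have hH := haus_fin f hf E hEb hEf hd
  have hE0 := vol_frontier _ hH
  -- perimeter
  have hPe : wPer S w E = ∫⁻ x in frontier E, ENNReal.ofReal (w x) ∂(μH[(m : ℝ)]) := by
    unfold wPer
    have e : (((m + 1 : ℕ) : ℝ) - 1) = m := by push_cast; ring
    rw [e, ← lintegral_inter_add_diff (μ := μH[(m : ℝ)]) _ (frontier E) hW.op.measurableSet]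
    have : ∫⁻ x in frontier E \ S, ENNReal.ofReal (w x) ∂(μH[(m : ℝ)]) = 0 := by
      rw [setLIntegral_congr_fun (g := fun _ => 0)
        (isClosed_frontier.measurableSet.diff hW.op.measurableSet) fun x hx => ?_]
      · simp
      · have : x ∈ frontier S := by
          rw [hW.op.frontier_eq]
          exact ⟨hclS (frontier_subset_closure hx.1), hx.2⟩
        simp [hw0 x this]
    rw [this, add_zero]
  have hPfin : ∫⁻ x in frontier E, ENNReal.ofReal (w x) ∂(μH[(m : ℝ)]) ≠ ∞ := by
    obtain ⟨B, hB⟩ := hEb.isCompact_closure.exists_bound_of_continuousOn hwc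
    refine ne_of_lt (lt_of_le_of_lt (setLIntegral_mono (g := fun _ => ENNReal.ofReal B)
      measurable_const fun x hx => ENNReal.ofReal_le_ofReal
        ((le_abs_self _).trans (hB x (frontier_subset_closure hx)))) ?_)
    rw [setLIntegral_const]
    exact ENNReal.mul_lt_top ENNReal.ofReal_lt_top hH
  have hVi : IntegrableOn w E := intOn_of E hEb w hwc
  have hVe : (wVol w E).toReal = ∫ x in E, w x := by
    rw [integral_eq_lintegral_of_nonneg_ae ((ae_restrict_iff' hEo.measurableSet).2
      (Filter.Eventually.of_forall fun x hx => hwn x (subset_closure hx)))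
      hVi.aestronglyMeasurable]
    rfl
  have hV0 : 0 < ∫ x in E, w x := by
    rw [← hVe]
    refine ENNReal.toReal_pos hEpos.ne' ?_
    exact hVi.lintegral_lt_top.ne
  set c := (wPer S w E).toReal / (wVol w E).toReal with hcdef
  have hc0 : 0 ≤ c := by positivity
  have hseq : ∀ j : ℕ, ∃ l : ℕ, j ≤ l ∧ ∃ φ : Euc (m + 1) → ℝ,
      IsApprox S E (fun x => w x ^ (1 / α)) α c (1 / ((j : ℝ) + 1)) ((1 / 2 : ℝ) ^ l) φ := by
    intro j
    have hσ : (0 : ℝ) < 1 / ((j : ℝ) + 1) := by positivity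
    set σ : ℝ := 1 / ((j : ℝ) + 1) with hσd
    obtain ⟨δ, θ, hδ, hθ, hpos⟩ := choose_main f hf E hEo hEe hEf hd hEb w hwc hwn hPfin hV0
      (σ / 2) (c + σ / 2) (by positivity) (by rw [hcdef, hPe, hVe])
    have hQ : Continuous (fun x => (c + σ / 2) * etaf f δ x - (1 + θ) * dens f δ x) :=
      (continuous_const.mul (etaf_cd f hf δ).continuous).sub
        (continuous_const.mul (dens_cont f hf δ))
    have eQ : ∀ W : Euc (m + 1) → ℝ, (fun x => (c + σ / 2) * (W x * etaf f δ x) -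
        (1 + θ) * (W x * dens f δ x)) = fun x => W x * ((c + σ / 2) * etaf f δ x -
        (1 + θ) * dens f δ x) := fun W => by ext x; ring
    rw [eQ] at hpos
    obtain ⟨ρ, hρ, hst⟩ := stab_main α hα E hEo hEb w hwc hwn _ hQ hpos
    obtain ⟨G, hG1, hG0, hGa, hGd⟩ := mollify hW E hES hEb (min ρ σ) (by positivity)
    refine step_main hW α hα E hES hEo hEb hE0 f hf hEe hEf hd δ θ c (c + σ / 2) σ hδ hθ hσ
      (by linarith) G hG1 hG0 ?_ hGd ?_ j
    · intro x hx
      have := (abs_le.1 ((hGa x (subset_closure hx)).trans (min_le_right _ _))).2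
      linarith
    · have := hst G hG1.continuous hG0 fun x hx => (hGa x hx).trans (min_le_left _ _)
      rw [eQ (fun x => G x ^ α)]
      exact this
  obtain ⟨φ, h1, h2, h3, h4, h5, h6⟩ := limit_main hn hW hES hEo hEb hE0 α c hα hc0 hseq
  refine ⟨φ, h1, h2, h3, h4, h5, ?_⟩
  filter_upwards [h6, ae_restrict_mem hEo.measurableSet] with x hx hxE
  refine ⟨hx.1, ?_⟩
  have hk1 : gradient φ x ∈ closure S := ConeW.K_cl (h4 ⟨x, mem_univ _, rfl⟩)
  rw [Real.div_rpow (hw.2.1 _ hk1) (hwn x (subset_closure hxE))]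
  exact hx.2
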